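/- Let H > 0, let Ω ⊆ ℝ² be an open connected set, and let (u_n) be a sequence of solutions of (CMC) on Ω. Let P ∈ Ω and let N ∈ ℝ² be a unit vector. Set z₀ = P + N/(2H), let S = {Q : |Q − z₀| = 1/(2H)}, let C be the connected component of S ∩ Ω containing P, and for Q ∈ C set ν(Q) = 2H(z₀ − Q) (so ν(P) = N and 2Hν(Q) is the curvature vector of C at Q). If N_{u_n}(P) → (N, 0) in ℝ³ as n → ∞, then for every Q ∈ C, N_{u_n}(Q) → (ν(Q), 0) as n → ∞. -/

import Mathlib

/-!
Write `X = ∇u / W` and `w = 1 / W`, so that the normal is `(-X, w)`, `|X|² + w² = 1` and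
`div X = 2H`. Identify the plane with `ℂ`. The claim is that if `X_n(P) → -N`, then `X_n` tends to the
outward radial field `2H (Q - z₀)` at every point `Q` of the component of the circle. It suffices to
show that this convergence propagates, in both directions, between points of the circle which are
close to each other in a way controlled by `H` and by the distance to `∂Ω` (`local_prop`,
`propagate`); connectedness of the component does the rest.

*Interior estimates on the graph.* Test functions in the weak form of the equation bound the area
of the graph in balls of `ℝ³` (`Sol.area`). Differentiating the equation in the directions of the
plane gives a bound for the energy of the normal (`Sol.energy`, `Sol.energy_ball`) and a maximum
principle for affine combinations of the partial derivatives of `u` (`Sol.max_principle`). Among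
dyadic annuli one has small energy, and the Courant–Lebesgue argument (`Sol.courant`) yields a level
set of the distance to the point above `P` on whose connected subsets the normal and `log W`
oscillate little. Filling the holes of a component of a ball makes its frontier connected
(`exists_fill`, from the unicoherence of the plane), and the maximum principle carries the estimate
inside. The results are a modulus of continuity of the normal along the graph (`normal_modulus`) and
a Harnack inequality for `w` (`harnack`), with constants depending only on `H` and on the radius of a
disc contained in `Ω`. In particular, if `w` is small at `A`, it is small along the level curve
`g' = i X(g)` of `u` through `A`, for a definite length.

*The level curve is nearly an arc of circle.* Let `X₀` be the unit field of divergence `2H` which is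
normal to the translates of the arc of radius `1/(2H)` spanned by the chord of the level curve. The
field `X - X₀` is divergence free, so it has a potential. The potential does not increase along the
comparison arc, because `|X| ≤ 1`, whereas along the level curve its derivative is
`|X - X₀|²/2 - w²/2` (`Sol.compare`). As both curves have the same end points, `∫ |X - X₀|²` is at
most `∫ w²`, and the modulus of continuity upgrades this to a uniform bound (`flux_point`). Hence the
centre `z - X/(2H)` is almost constant along the level curve (`centre_bound`), which stays close to
the circle through `A` (`rot_bound`).

*From the level curve to the circle.* Points of the circle are close in the plane to points of the
level curve, but need not be close on the graph. If two nearby points have `w` small but directions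
`X` that differ, the level curves through them give two long increments of a potential of
`X - H (z - c)`, while the segments joining their end points are too short to balance them
(`transfer`). So `X` is controlled on the circle as well.
-/

open Real MeasureTheory Filter Set

noncomputable section

/-- Euclidean norm on `ℝ × ℝ`. -/
def enorm2 (p : ℝ × ℝ) : ℝ := Real.sqrt (p.1 ^ 2 + p.2 ^ 2)

/-- Partial derivative in the `x` direction. -/
def pdx (u : ℝ × ℝ → ℝ) (p : ℝ × ℝ) : ℝ := fderiv ℝ u p (1, 0)

/-- Partial derivative in the `y` direction. -/
def pdy (u : ℝ × ℝ → ℝ) (p : ℝ × ℝ) : ℝ := fderiv ℝ u p (0, 1)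

/-- The area element `W_u = √(1 + |∇u|²)`. -/
def Wgraph (u : ℝ × ℝ → ℝ) (p : ℝ × ℝ) : ℝ :=
  Real.sqrt (1 + (pdx u p) ^ 2 + (pdy u p) ^ 2)

/-- Upward unit normal of the graph of `u`. -/
def normalVec (u : ℝ × ℝ → ℝ) (p : ℝ × ℝ) : ℝ × ℝ × ℝ :=
  (-pdx u p / Wgraph u p, -pdy u p / Wgraph u p, 1 / Wgraph u p)

/-- `u` is a (C²) solution of the constant mean curvature `H` equation on `Ω`. -/
def IsCMCSolution (H : ℝ) (Ω : Set (ℝ × ℝ)) (u : ℝ × ℝ → ℝ) : Prop :=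
  ContDiffOn ℝ 2 u Ω ∧ ∀ p ∈ Ω,
    (1 + (pdy u p) ^ 2) * pdx (fun q => pdx u q) p
      - 2 * (pdx u p) * (pdy u p) * pdy (fun q => pdx u q) p
      + (1 + (pdx u p) ^ 2) * pdy (fun q => pdy u q) p
    = 2 * H * (1 + (pdx u p) ^ 2 + (pdy u p) ^ 2) ^ ((3 : ℝ) / 2)

/-- `C` is a divergence line of the sequence `u` on `Ω`. -/
def IsDivergenceLine (H : ℝ) (Ω : Set (ℝ × ℝ)) (u : ℕ → ℝ × ℝ → ℝ)
    (C : Set (ℝ × ℝ)) : Prop :=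
  ∃ z₁ : ℝ × ℝ, C ⊆ Ω ∧ (∀ q ∈ C, enorm2 (q - z₁) = 1 / (2 * H)) ∧
    IsConnected C ∧ C.Nontrivial ∧
    ∃ φ : ℕ → ℕ, StrictMono φ ∧ ∀ Q ∈ C,
      Tendsto (fun n => normalVec (u (φ n)) Q) atTop
        (nhds (2 * H * (z₁.1 - Q.1), 2 * H * (z₁.2 - Q.2), 0))

/-! ### Gradients on the plane -/

/-- `HG f a b x`: the function `f` is differentiable at `x` with gradient `(a, b)`. -/
def HG (f : ℝ × ℝ → ℝ) (a b : ℝ) (x : ℝ × ℝ) : Prop :=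
  HasFDerivAt f (a • ContinuousLinearMap.fst ℝ ℝ ℝ + b • ContinuousLinearMap.snd ℝ ℝ ℝ) x

namespace HG

variable {f g : ℝ × ℝ → ℝ} {a b c d : ℝ} {x : ℝ × ℝ}

theorem pdx_eq (h : HG f a b x) : pdx f x = a := by
  unfold pdx; rw [HasFDerivAt.fderiv h]; simp

theorem pdy_eq (h : HG f a b x) : pdy f x = b := by
  unfold pdy; rw [HasFDerivAt.fderiv h]; simp

theorem of_diff (h : DifferentiableAt ℝ f x) : HG f (pdx f x) (pdy f x) x := by
  unfold HG
  exact h.hasFDerivAt.congr_fderiv (by ext <;> simp [pdx, pdy])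

theorem congr' (h : HG f a b x) (ha : a = c) (hb : b = d) : HG f c d x := by
  subst ha hb; exact h

theorem const (k : ℝ) : HG (fun _ => k) 0 0 x := by
  unfold HG; simpa using hasFDerivAt_const k x

theorem fst : HG (fun y => y.1) 1 0 x := by
  unfold HG; simpa using hasFDerivAt_fst

theorem snd : HG (fun y => y.2) 0 1 x := by
  unfold HG; simpa using hasFDerivAt_snd

theorem add (hf : HG f a b x) (hg : HG g c d x) :
    HG (fun y => f y + g y) (a + c) (b + d) x := by
  unfold HG at *
  exact (HasFDerivAt.add hf hg).congr_fderiv (by ext <;> simp)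

theorem sub (hf : HG f a b x) (hg : HG g c d x) :
    HG (fun y => f y - g y) (a - c) (b - d) x := by
  unfold HG at *
  exact (HasFDerivAt.sub hf hg).congr_fderiv (by ext <;> simp)

theorem neg (hf : HG f a b x) : HG (fun y => -f y) (-a) (-b) x := by
  unfold HG at *
  exact (HasFDerivAt.neg hf).congr_fderiv (by ext <;> simp)

theorem mul (hf : HG f a b x) (hg : HG g c d x) :
    HG (fun y => f y * g y) (a * g x + f x * c) (b * g x + f x * d) x := by
  unfold HG at *
  exact (HasFDerivAt.mul hf hg).congr_fderiv (by ext <;> simp <;> ring)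

theorem const_mul (k : ℝ) (hf : HG f a b x) : HG (fun y => k * f y) (k * a) (k * b) x := by
  refine ((HG.const k).mul hf).congr' ?_ ?_ <;> ring

theorem sq (hf : HG f a b x) : HG (fun y => f y ^ 2) (2 * f x * a) (2 * f x * b) x := by
  have := hf.mul hf
  simp only [← pow_two] at this
  refine this.congr' ?_ ?_ <;> ring

theorem comp {φ : ℝ → ℝ} {φ' : ℝ} (hφ : HasDerivAt φ φ' (f x)) (hf : HG f a b x) :
    HG (fun y => φ (f y)) (φ' * a) (φ' * b) x := by
  unfold HG at *
  exact (HasDerivAt.comp_hasFDerivAt x hφ hf).congr_fderiv (by ext <;> simp)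

theorem differentiableAt (hf : HG f a b x) : DifferentiableAt ℝ f x :=
  HasFDerivAt.differentiableAt hf

theorem congr_of_eventuallyEq (hf : HG f a b x) (h : g =ᶠ[nhds x] f) : HG g a b x :=
  HasFDerivAt.congr_of_eventuallyEq hf h

/-- Chain rule along a plane curve. -/
theorem comp_curve {γ : ℝ → ℝ × ℝ} {v : ℝ × ℝ} {s : ℝ} (hf : HG f a b (γ s))
    (hγ : HasDerivAt γ v s) : HasDerivAt (fun τ => f (γ τ)) (a * v.1 + b * v.2) s := by
  unfold HG at hf
  have := hf.comp_hasDerivAt s hγ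
  exact this.congr_deriv (by simp)

end HG

/-- A test function: continuously differentiable, with compact support inside `Ω`. -/
def TF (Ω : Set (ℝ × ℝ)) (φ : ℝ × ℝ → ℝ) : Prop :=
  ContDiff ℝ 1 φ ∧ HasCompactSupport φ ∧ tsupport φ ⊆ Ω

theorem tsupport_subset_of_zero {K : Set (ℝ × ℝ)} (hK : IsClosed K) {f : ℝ × ℝ → ℝ}
    (h0 : ∀ x, x ∉ K → f x = 0) : tsupport f ⊆ K := by
  apply closure_minimal _ hK
  intro x hx
  by_contra h
  exact hx (h0 x h)

theorem cs_glue {K : Set (ℝ × ℝ)} (hK : IsCompact K) {f : ℝ × ℝ → ℝ}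
    (h0 : ∀ x, x ∉ K → f x = 0) : HasCompactSupport f :=
  HasCompactSupport.of_support_subset_isCompact hK
    (fun x hx => by by_contra h; exact hx (h0 x h))

theorem cont_glue {Ω K : Set (ℝ × ℝ)} (hΩ : IsOpen Ω) (hK : IsClosed K) (hKΩ : K ⊆ Ω)
    {f : ℝ × ℝ → ℝ} (hf : ContinuousOn f Ω) (h0 : ∀ x, x ∉ K → f x = 0) : Continuous f := by
  rw [continuous_iff_continuousAt]
  intro x
  by_cases hx : x ∈ K
  · exact hf.continuousAt (hΩ.mem_nhds (hKΩ hx))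
  · have : f =ᶠ[nhds x] fun _ => 0 := by
      filter_upwards [hK.isOpen_compl.mem_nhds hx] with y hy using h0 y hy
    exact this.continuousAt

theorem int_glue {Ω K : Set (ℝ × ℝ)} (hΩ : IsOpen Ω) (hK : IsCompact K) (hKΩ : K ⊆ Ω)
    {f : ℝ × ℝ → ℝ} (hf : ContinuousOn f Ω) (h0 : ∀ x, x ∉ K → f x = 0) :
    Integrable f :=
  (cont_glue hΩ hK.isClosed hKΩ hf h0).integrable_of_hasCompactSupport (cs_glue hK h0)

theorem tf_glue {Ω K : Set (ℝ × ℝ)} (hΩ : IsOpen Ω) (hK : IsCompact K) (hKΩ : K ⊆ Ω)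
    {f : ℝ × ℝ → ℝ} (hf : ContDiffOn ℝ 1 f Ω) (h0 : ∀ x, x ∉ K → f x = 0) : TF Ω f := by
  refine ⟨?_, cs_glue hK h0, (tsupport_subset_of_zero hK.isClosed h0).trans hKΩ⟩
  rw [contDiff_iff_contDiffAt]
  intro x
  by_cases hx : x ∈ K
  · exact hf.contDiffAt (hΩ.mem_nhds (hKΩ hx))
  · have : f =ᶠ[nhds x] fun _ => 0 := by
      filter_upwards [hK.isClosed.isOpen_compl.mem_nhds hx] with y hy using h0 y hy
    exact contDiffAt_const.congr_of_eventuallyEq this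

namespace TF

variable {Ω : Set (ℝ × ℝ)} {φ : ℝ × ℝ → ℝ}

theorem hg (h : TF Ω φ) (x : ℝ × ℝ) : HG φ (pdx φ x) (pdy φ x) x :=
  HG.of_diff (h.1.differentiable (by norm_num) x)

theorem cont (h : TF Ω φ) : Continuous φ := h.1.continuous

theorem cont_pd (h : TF Ω φ) (v : ℝ × ℝ) : Continuous (fun x => fderiv ℝ φ x v) :=
  (h.1.continuous_fderiv (by norm_num)).clm_apply continuous_const

theorem fd_zero (v : ℝ × ℝ) {x : ℝ × ℝ} (hx : x ∉ tsupport φ) :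
    fderiv ℝ φ x v = 0 := by
  have : fderiv ℝ φ x = 0 := by
    by_contra h0
    exact hx (support_fderiv_subset ℝ (f := φ) h0)
  rw [this]; rfl

theorem cont_pdx (h : TF Ω φ) : Continuous (pdx φ) := h.cont_pd (1, 0)
theorem cont_pdy (h : TF Ω φ) : Continuous (pdy φ) := h.cont_pd (0, 1)

theorem zero {x : ℝ × ℝ} (hx : x ∉ tsupport φ) : φ x = 0 := by
  by_contra h0; exact hx (subset_tsupport _ h0)

/-- A continuous function on `Ω` that vanishes where the test function does is integrable. -/
theorem integrable (h : TF Ω φ) (hΩ : IsOpen Ω) {f : ℝ × ℝ → ℝ} (hf : ContinuousOn f Ω)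
    (h0 : ∀ x, x ∉ tsupport φ → f x = 0) : Integrable f :=
  int_glue hΩ h.2.1 h.2.2 hf h0

theorem integral_fderiv (h : TF Ω φ) (v : ℝ × ℝ) : ∫ x, fderiv ℝ φ x v = 0 := by
  have h1 : Integrable (fun x => fderiv ℝ φ x v) :=
    (h.cont_pd v).integrable_of_hasCompactSupport
      (cs_glue h.2.1 (fun x hx => fd_zero v hx))
  have h2 : Integrable φ := h.cont.integrable_of_hasCompactSupport h.2.1
  have := integral_mul_fderiv_eq_neg_fderiv_mul_of_integrable (μ := volume)
    (f := fun _ : ℝ × ℝ => (1 : ℝ)) (g := φ) (v := v) (by simp) (by simpa using h1)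
    (by simpa using h2) (by intros; simp) (fun x _ => h.1.differentiable (by norm_num) x)
  simpa using this

theorem translate (h : TF Ω φ) (a : ℝ × ℝ) (ha : ∀ x ∈ tsupport φ, x + a ∈ Ω) :
    TF Ω (fun x => φ (x - a)) := by
  have hK : IsCompact ((fun x => x + a) '' tsupport φ) :=
    h.2.1.isCompact.image (by fun_prop)
  have h0 : ∀ x, x ∉ ((fun x => x + a) '' tsupport φ) → φ (x - a) = 0 := by
    intro x hx
    apply zero
    intro h1
    exact hx ⟨x - a, h1, by simp⟩
  refine ⟨h.1.comp (contDiff_id.sub contDiff_const), cs_glue hK h0,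
    (tsupport_subset_of_zero hK.isClosed h0).trans ?_⟩
  rintro _ ⟨x, hx, rfl⟩
  exact ha x hx

theorem translate_fderiv (a v x : ℝ × ℝ) :
    fderiv ℝ (fun y => φ (y - a)) x v = fderiv ℝ φ (x - a) v := by
  rw [fderiv_comp_sub]

end TF

/-- Differentiation of `h ↦ ∫ f (x + h v) ψ x` at `h = 0`. -/
theorem hasDerivAt_translate {Ω K : Set (ℝ × ℝ)} (hΩ : IsOpen Ω) (hK : IsCompact K)
    (hKΩ : K ⊆ Ω) {f ψ : ℝ × ℝ → ℝ} (hf : ContDiffOn ℝ 1 f Ω) (hψ : Continuous ψ)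
    (h0 : ∀ x, x ∉ K → ψ x = 0) (v : ℝ × ℝ) :
    (∀ᶠ h in nhds (0 : ℝ), Integrable (fun x => f (x + h • v) * ψ x)) ∧
    HasDerivAt (fun h : ℝ => ∫ x, f (x + h • v) * ψ x) (∫ x, fderiv ℝ f x v * ψ x) 0 := by
  obtain ⟨K', hK', hKK', hK'Ω⟩ := exists_compact_between hK hΩ hKΩ
  -- translations by small multiples of `v` keep `K` inside `K'`
  have hev : ∃ ε > 0, ∀ h : ℝ, |h| < ε → ∀ x ∈ K, x + h • v ∈ interior K' := by
    have : ∀ᶠ h in nhds (0 : ℝ), ∀ x ∈ K, x + h • v ∈ interior K' := by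
      apply hK.eventually_forall_of_forall_eventually
      intro x hx
      have hc : Continuous (fun z : ℝ × (ℝ × ℝ) => z.2 + z.1 • v) := by fun_prop
      exact hc.continuousAt.eventually_mem (isOpen_interior.mem_nhds (by simpa using hKK' hx))
    obtain ⟨ε, hε, h⟩ := Metric.eventually_nhds_iff.1 this
    exact ⟨ε, hε, fun k hk => h (by simpa using hk)⟩
  obtain ⟨ε, hε, hev⟩ := hev
  have hfd : ContinuousOn (fun x => fderiv ℝ f x v) Ω :=
    (hf.continuousOn_fderiv_of_isOpen hΩ (by norm_num)).clm_apply continuousOn_const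
  obtain ⟨C, hC⟩ := hK'.exists_bound_of_continuousOn (hfd.mono hK'Ω)
  have hintg : ∀ h : ℝ, |h| < ε → Integrable (fun x => f (x + h • v) * ψ x) := by
    intro h hh
    have ho : IsOpen ((fun x : ℝ × ℝ => x + h • v) ⁻¹' Ω) := hΩ.preimage (by fun_prop)
    refine int_glue ho hK (fun x hx => hK'Ω (interior_subset (hev h hh x hx))) ?_ ?_
    · refine ContinuousOn.mul (hf.continuousOn.comp (by fun_prop) (fun x hx => hx))
        hψ.continuousOn
    · intro x hx; simp [h0 x hx]
  have hnb : ∀ᶠ h in nhds (0 : ℝ), |h| < ε := by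
    filter_upwards [Metric.ball_mem_nhds (0 : ℝ) hε] with h hh using by simpa using hh
  refine ⟨hnb.mono hintg, ?_⟩
  have hF' : Integrable (fun x => fderiv ℝ f x v * ψ x) :=
    int_glue hΩ hK hKΩ (hfd.mul hψ.continuousOn) (fun x hx => by simp [h0 x hx])
  have key := hasDerivAt_integral_of_dominated_loc_of_deriv_le (μ := volume)
    (F := fun (h : ℝ) x => f (x + h • v) * ψ x) (x₀ := 0) (s := Metric.ball 0 ε)
    (F' := fun h x => fderiv ℝ f (x + h • v) v * ψ x) (bound := fun x => C * |ψ x|)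
    (Metric.ball_mem_nhds _ hε) (hnb.mono fun h hh => (hintg h hh).aestronglyMeasurable)
    (hintg 0 (by simpa using hε)) (by simpa using hF'.aestronglyMeasurable) ?_ ?_ ?_
  · simpa using key.2
  · refine Filter.Eventually.of_forall fun x h hh => ?_
    by_cases hx : x ∈ K
    · rw [norm_mul]
      exact mul_le_mul_of_nonneg_right
        (hC _ (interior_subset (hev h (by simpa using hh) x hx))) (norm_nonneg _)
    · simp [h0 x hx]
  · exact ((hψ.integrable_of_hasCompactSupport (cs_glue hK h0)).abs.const_mul C)
  · refine Filter.Eventually.of_forall fun x h hh => ?_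
    by_cases hx : x ∈ K
    · have hm : x + h • v ∈ Ω := hK'Ω (interior_subset (hev h (by simpa using hh) x hx))
      have hd : HasFDerivAt f (fderiv ℝ f (x + h • v)) (x + h • v) :=
        ((hf.contDiffAt (hΩ.mem_nhds hm)).differentiableAt (by norm_num)).hasFDerivAt
      have hl : HasDerivAt (fun h : ℝ => x + h • v) v h := by
        simpa using ((hasDerivAt_id h).smul_const v).const_add x
      exact (hd.comp_hasDerivAt h hl).mul_const (ψ x)
    · simp [h0 x hx, hasDerivAt_const]

/-! ### First and second order quantities of a solution -/

/-- First component of `∇u / W`. -/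
def X1 (u : ℝ × ℝ → ℝ) (x : ℝ × ℝ) : ℝ := pdx u x / Wgraph u x

/-- Second component of `∇u / W`. -/
def X2 (u : ℝ × ℝ → ℝ) (x : ℝ × ℝ) : ℝ := pdy u x / Wgraph u x

/-- The vertical component `1 / W` of the unit normal. -/
def wv (u : ℝ × ℝ → ℝ) (x : ℝ × ℝ) : ℝ := 1 / Wgraph u x

/-- The second derivative `∂ₓₓ u`. -/
def rr (u : ℝ × ℝ → ℝ) (x : ℝ × ℝ) : ℝ := pdx (pdx u) x

/-- The second derivative `∂ₓᵧ u`. -/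
def ss (u : ℝ × ℝ → ℝ) (x : ℝ × ℝ) : ℝ := pdy (pdx u) x

/-- The second derivative `∂ᵧᵧ u`. -/
def tt (u : ℝ × ℝ → ℝ) (x : ℝ × ℝ) : ℝ := pdy (pdy u) x

/-- The inner product of `(a₁, a₂)` and `(b₁, b₂)` in the inverse of the induced metric of the
graph of `u`: the metric on gradients of functions on the graph. -/
def ip (u : ℝ × ℝ → ℝ) (x : ℝ × ℝ) (a₁ a₂ b₁ b₂ : ℝ) : ℝ :=
  a₁ * b₁ + a₂ * b₂ - (X1 u x * a₁ + X2 u x * a₂) * (X1 u x * b₁ + X2 u x * b₂)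

/-- The quadratic form of `ip`: the squared intrinsic norm of a gradient. -/
def Qf (u : ℝ × ℝ → ℝ) (x : ℝ × ℝ) (a₁ a₂ : ℝ) : ℝ := ip u x a₁ a₂ a₁ a₂

/-- The energy density of the gradient map, `w (|∇p|² + |∇q|²)` in the graph metric. -/
def E1 (u : ℝ × ℝ → ℝ) (x : ℝ × ℝ) : ℝ :=
  wv u x * (Qf u x (rr u x) (ss u x) + Qf u x (ss u x) (tt u x))

/-- `u` solves the constant mean curvature equation with `H > 0` on the open set `Ω`. -/
structure Sol (H : ℝ) (Ω : Set (ℝ × ℝ)) (u : ℝ × ℝ → ℝ) : Prop where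
  hΩ : IsOpen Ω
  hH : 0 < H
  sol : IsCMCSolution H Ω u

theorem W_pos (u : ℝ × ℝ → ℝ) (x : ℝ × ℝ) : 0 < Wgraph u x := by
  unfold Wgraph; positivity

theorem W_sq (u : ℝ × ℝ → ℝ) (x : ℝ × ℝ) :
    Wgraph u x ^ 2 = 1 + pdx u x ^ 2 + pdy u x ^ 2 := by
  unfold Wgraph; rw [Real.sq_sqrt]; positivity

theorem one_le_W (u : ℝ × ℝ → ℝ) (x : ℝ × ℝ) : 1 ≤ Wgraph u x := by
  unfold Wgraph
  rw [Real.one_le_sqrt]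
  nlinarith [sq_nonneg (pdx u x), sq_nonneg (pdy u x)]

theorem wv_pos (u : ℝ × ℝ → ℝ) (x : ℝ × ℝ) : 0 < wv u x := by
  unfold wv; have := W_pos u x; positivity

theorem wv_le_one (u : ℝ × ℝ → ℝ) (x : ℝ × ℝ) : wv u x ≤ 1 := by
  unfold wv; rw [div_le_one (W_pos u x)]; exact one_le_W u x

theorem W_mul_wv (u : ℝ × ℝ → ℝ) (x : ℝ × ℝ) : Wgraph u x * wv u x = 1 := by
  unfold wv; have := W_pos u x; field_simp

theorem X1_eq (u : ℝ × ℝ → ℝ) (x : ℝ × ℝ) : X1 u x = wv u x * pdx u x := by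
  unfold X1 wv; ring

theorem X2_eq (u : ℝ × ℝ → ℝ) (x : ℝ × ℝ) : X2 u x = wv u x * pdy u x := by
  unfold X2 wv; ring

theorem p_eq (u : ℝ × ℝ → ℝ) (x : ℝ × ℝ) : pdx u x = Wgraph u x * X1 u x := by
  unfold X1; have := W_pos u x; field_simp

theorem q_eq (u : ℝ × ℝ → ℝ) (x : ℝ × ℝ) : pdy u x = Wgraph u x * X2 u x := by
  unfold X2; have := W_pos u x; field_simp

theorem X_sq (u : ℝ × ℝ → ℝ) (x : ℝ × ℝ) : X1 u x ^ 2 + X2 u x ^ 2 = 1 - wv u x ^ 2 := by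
  have h := W_pos u x
  have h2 := W_sq u x
  unfold X1 X2 wv
  field_simp
  linarith

theorem Qf_nonneg (u : ℝ × ℝ → ℝ) (x : ℝ × ℝ) (a b : ℝ) : 0 ≤ Qf u x a b := by
  have h := X_sq u x
  unfold Qf ip
  have h1 : (X1 u x * a + X2 u x * b) ^ 2 ≤ (X1 u x ^ 2 + X2 u x ^ 2) * (a ^ 2 + b ^ 2) := by
    nlinarith [sq_nonneg (X1 u x * b - X2 u x * a)]
  have h2 : (X1 u x ^ 2 + X2 u x ^ 2) * (a ^ 2 + b ^ 2) ≤ 1 * (a ^ 2 + b ^ 2) := by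
    apply mul_le_mul_of_nonneg_right _ (by positivity)
    nlinarith [sq_nonneg (wv u x)]
  nlinarith

theorem Qf_le (u : ℝ × ℝ → ℝ) (x : ℝ × ℝ) (a b : ℝ) : Qf u x a b ≤ a ^ 2 + b ^ 2 := by
  unfold Qf ip
  nlinarith [sq_nonneg (X1 u x * a + X2 u x * b)]

theorem Qf_ge (u : ℝ × ℝ → ℝ) (x : ℝ × ℝ) (a b : ℝ) :
    wv u x ^ 2 * (a ^ 2 + b ^ 2) ≤ Qf u x a b := by
  have h := X_sq u x
  unfold Qf ip
  have h1 : (X1 u x * a + X2 u x * b) ^ 2 ≤ (X1 u x ^ 2 + X2 u x ^ 2) * (a ^ 2 + b ^ 2) := by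
    nlinarith [sq_nonneg (X1 u x * b - X2 u x * a)]
  rw [h] at h1
  nlinarith

theorem E1_nonneg (u : ℝ × ℝ → ℝ) (x : ℝ × ℝ) : 0 ≤ E1 u x := by
  unfold E1
  have := wv_pos u x
  have := Qf_nonneg u x (rr u x) (ss u x)
  have := Qf_nonneg u x (ss u x) (tt u x)
  positivity

namespace Sol

variable {H : ℝ} {Ω : Set (ℝ × ℝ)} {u : ℝ × ℝ → ℝ} (S : Sol H Ω u)
include S

theorem cd_fd (v : ℝ × ℝ) : ContDiffOn ℝ 1 (fun x => fderiv ℝ u x v) Ω :=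
  (S.sol.1.fderiv_of_isOpen S.hΩ (m := 1) (by norm_num)).clm_apply contDiffOn_const

theorem cd_p : ContDiffOn ℝ 1 (pdx u) Ω := S.cd_fd (1, 0)
theorem cd_q : ContDiffOn ℝ 1 (pdy u) Ω := S.cd_fd (0, 1)
theorem cd_u : ContDiffOn ℝ 1 u Ω := S.sol.1.of_le (by norm_num)

theorem cd_W : ContDiffOn ℝ 1 (Wgraph u) Ω := by
  unfold Wgraph
  apply ContDiffOn.sqrt
  · exact (contDiffOn_const.add (S.cd_p.pow 2)).add (S.cd_q.pow 2)
  · intro x _; positivity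

theorem cd_w : ContDiffOn ℝ 1 (wv u) Ω := by
  unfold wv
  exact contDiffOn_const.div S.cd_W (fun x _ => (W_pos u x).ne')

theorem cd_X1 : ContDiffOn ℝ 1 (X1 u) Ω := S.cd_p.div S.cd_W (fun x _ => (W_pos u x).ne')
theorem cd_X2 : ContDiffOn ℝ 1 (X2 u) Ω := S.cd_q.div S.cd_W (fun x _ => (W_pos u x).ne')

theorem hg_of {f : ℝ × ℝ → ℝ} (hf : ContDiffOn ℝ 1 f Ω) {x : ℝ × ℝ} (hx : x ∈ Ω) :
    HG f (pdx f x) (pdy f x) x :=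
  HG.of_diff ((hf.contDiffAt (S.hΩ.mem_nhds hx)).differentiableAt (by norm_num))

theorem co_fd {f : ℝ × ℝ → ℝ} (hf : ContDiffOn ℝ 1 f Ω) (v : ℝ × ℝ) :
    ContinuousOn (fun x => fderiv ℝ f x v) Ω :=
  (hf.continuousOn_fderiv_of_isOpen S.hΩ (by norm_num)).clm_apply continuousOn_const

theorem co_rr : ContinuousOn (rr u) Ω := S.co_fd S.cd_p (1, 0)
theorem co_ss : ContinuousOn (ss u) Ω := S.co_fd S.cd_p (0, 1)
theorem co_tt : ContinuousOn (tt u) Ω := S.co_fd S.cd_q (0, 1)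

theorem co_Qf {f g : ℝ × ℝ → ℝ} (hf : ContinuousOn f Ω) (hg : ContinuousOn g Ω) :
    ContinuousOn (fun x => Qf u x (f x) (g x)) Ω := by
  have h1 := S.cd_X1.continuousOn
  have h2 := S.cd_X2.continuousOn
  unfold Qf ip
  fun_prop

theorem co_E1 : ContinuousOn (E1 u) Ω := by
  unfold E1
  exact S.cd_w.continuousOn.mul
    ((S.co_Qf S.co_rr S.co_ss).add (S.co_Qf S.co_ss S.co_tt))

variable {x : ℝ × ℝ} (hx : x ∈ Ω)
include hx

theorem symm : pdx (pdy u) x = ss u x := by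
  have h2 : ContDiffAt ℝ 2 u x := S.sol.1.contDiffAt (S.hΩ.mem_nhds hx)
  have hd : DifferentiableAt ℝ (fderiv ℝ u) x :=
    (h2.fderiv_right (m := 1) (by norm_num)).differentiableAt (by norm_num)
  have hs := h2.isSymmSndFDerivAt (by simp)
  have e : ∀ v w : ℝ × ℝ, fderiv ℝ (fun y => fderiv ℝ u y v) x w
      = fderiv ℝ (fderiv ℝ u) x w v := by
    intro v w
    rw [fderiv_clm_apply hd (differentiableAt_const v)]
    simp
  unfold ss pdx pdy
  rw [e, e]
  exact hs.eq _ _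

theorem hgu : HG u (pdx u x) (pdy u x) x := S.hg_of S.cd_u hx

theorem hgp : HG (pdx u) (rr u x) (ss u x) x := S.hg_of S.cd_p hx

theorem hgq : HG (pdy u) (ss u x) (tt u x) x :=
  (S.hg_of S.cd_q hx).congr' (S.symm hx) rfl

theorem hgW : HG (Wgraph u) (X1 u x * rr u x + X2 u x * ss u x)
    (X1 u x * ss u x + X2 u x * tt u x) x := by
  have h := ((HG.const 1).add (S.hgp hx).sq).add (S.hgq hx).sq
  have hp : (1 + pdx u x ^ 2 + pdy u x ^ 2) ≠ 0 := by positivity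
  have := HG.comp (φ := Real.sqrt) (Real.hasDerivAt_sqrt hp) h
  refine HG.congr' this ?_ ?_ <;>
  · unfold X1 X2
    rw [show √(1 + pdx u x ^ 2 + pdy u x ^ 2) = Wgraph u x from rfl]
    have := W_pos u x
    field_simp
    ring

theorem hgw : HG (wv u) (-wv u x ^ 2 * (X1 u x * rr u x + X2 u x * ss u x))
    (-wv u x ^ 2 * (X1 u x * ss u x + X2 u x * tt u x)) x := by
  have := HG.comp (φ := fun y => y⁻¹) (hasDerivAt_inv (W_pos u x).ne') (S.hgW hx)
  have e : wv u = fun y => (Wgraph u y)⁻¹ := by funext y; simp [wv]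
  rw [e]
  refine HG.congr' this ?_ ?_ <;>
  · have := W_pos u x
    field_simp

theorem hgX1 : HG (X1 u) (wv u x * (rr u x - X1 u x * (X1 u x * rr u x + X2 u x * ss u x)))
    (wv u x * (ss u x - X1 u x * (X1 u x * ss u x + X2 u x * tt u x))) x := by
  have e : X1 u = fun y => wv u y * pdx u y := by funext y; exact X1_eq u y
  have := (S.hgw hx).mul (S.hgp hx)
  rw [← e] at this
  refine this.congr' ?_ ?_ <;> (rw [X1_eq u x]; ring)

theorem hgX2 : HG (X2 u) (wv u x * (ss u x - X2 u x * (X1 u x * rr u x + X2 u x * ss u x)))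
    (wv u x * (tt u x - X2 u x * (X1 u x * ss u x + X2 u x * tt u x))) x := by
  have e : X2 u = fun y => wv u y * pdy u y := by funext y; exact X2_eq u y
  have := (S.hgw hx).mul (S.hgq hx)
  rw [← e] at this
  refine this.congr' ?_ ?_ <;> (rw [X2_eq u x]; ring)

/-- The divergence form of the equation. -/
theorem div : pdx (X1 u) x + pdy (X2 u) x = 2 * H := by
  rw [(S.hgX1 hx).pdx_eq, (S.hgX2 hx).pdy_eq]
  have h := S.sol.2 x hx
  have hW := W_pos u x
  have h2 := W_sq u x
  have e3 : (1 + pdx u x ^ 2 + pdy u x ^ 2) ^ ((3 : ℝ) / 2) = Wgraph u x ^ 3 := by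
    rw [← h2, ← Real.rpow_natCast, ← Real.rpow_natCast, ← Real.rpow_mul hW.le]; norm_num
  rw [e3] at h
  change (1 + pdy u x ^ 2) * rr u x - 2 * pdx u x * pdy u x * ss u x
    + (1 + pdx u x ^ 2) * tt u x = _ at h
  unfold X1 X2 wv
  field_simp
  linear_combination h + (rr u x + tt u x) * h2

end Sol

namespace TF

variable {Ω : Set (ℝ × ℝ)} {φ : ℝ × ℝ → ℝ}

theorem mul (h : TF Ω φ) (hΩ : IsOpen Ω) {f : ℝ × ℝ → ℝ} (hf : ContDiffOn ℝ 1 f Ω) :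
    TF Ω (fun x => f x * φ x) :=
  tf_glue hΩ h.2.1 h.2.2 (hf.mul h.1.contDiffOn) (fun x hx => by simp [TF.zero hx])

end TF

namespace Sol

variable {H : ℝ} {Ω : Set (ℝ × ℝ)} {u φ : ℝ × ℝ → ℝ} (S : Sol H Ω u)
include S

/-- Weak form of the equation. -/
theorem weak (hφ : TF Ω φ) :
    ∫ x, (X1 u x * pdx φ x + X2 u x * pdy φ x) = -(2 * H) * ∫ x, φ x := by
  have t1 := (hφ.mul S.hΩ S.cd_X1)
  have t2 := (hφ.mul S.hΩ S.cd_X2)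
  have i1 := t1.integral_fderiv (1, 0)
  have i2 := t2.integral_fderiv (0, 1)
  have hi1 : Integrable (fun x => fderiv ℝ (fun x => X1 u x * φ x) x (1, 0)) :=
    t1.integrable S.hΩ (t1.cont_pd _).continuousOn (fun x hx => TF.fd_zero _ hx)
  have hi2 : Integrable (fun x => fderiv ℝ (fun x => X2 u x * φ x) x (0, 1)) :=
    t2.integrable S.hΩ (t2.cont_pd _).continuousOn (fun x hx => TF.fd_zero _ hx)
  have hi3 : Integrable φ := hφ.integrable S.hΩ hφ.cont.continuousOn (fun x hx => TF.zero hx)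
  have e : (fun x => X1 u x * pdx φ x + X2 u x * pdy φ x) = fun x =>
      fderiv ℝ (fun x => X1 u x * φ x) x (1, 0) + fderiv ℝ (fun x => X2 u x * φ x) x (0, 1)
        - 2 * H * φ x := by
    funext x
    by_cases hx : x ∈ tsupport φ
    · have hxΩ := hφ.2.2 hx
      have a1 := ((S.hg_of S.cd_X1 hxΩ).mul (hφ.hg x)).pdx_eq
      have a2 := ((S.hg_of S.cd_X2 hxΩ).mul (hφ.hg x)).pdy_eq
      unfold pdx at a1; unfold pdy at a2
      rw [a1, a2]
      have := S.div hxΩ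
      unfold pdx pdy at this ⊢
      linear_combination -(φ x) * this
    · have z : φ x = 0 := TF.zero hx
      have b1 : x ∉ tsupport (fun x => X1 u x * φ x) := fun h => hx
        (tsupport_subset_of_zero (isClosed_tsupport φ) (fun y hy => by simp [TF.zero hy]) h)
      have b2 : x ∉ tsupport (fun x => X2 u x * φ x) := fun h => hx
        (tsupport_subset_of_zero (isClosed_tsupport φ) (fun y hy => by simp [TF.zero hy]) h)
      rw [TF.fd_zero _ b1, TF.fd_zero _ b2, z]
      unfold pdx pdy
      rw [TF.fd_zero _ hx, TF.fd_zero _ hx]; simp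
  have hi12 : Integrable (fun x => fderiv ℝ (fun x => X1 u x * φ x) x (1, 0)
      + fderiv ℝ (fun x => X2 u x * φ x) x (0, 1)) := hi1.add hi2
  rw [e, integral_sub hi12 (hi3.const_mul _), integral_add hi1 hi2, i1, i2,
    integral_const_mul]
  ring

/-- The derivative of the weak form in a direction `v`, which needs no third derivatives. -/
theorem weak_deriv (hφ : TF Ω φ) (v : ℝ × ℝ) :
    ∫ x, (fderiv ℝ (X1 u) x v * pdx φ x + fderiv ℝ (X2 u) x v * pdy φ x) = 0 := by
  have z1 : ∀ x, x ∉ tsupport φ → pdx φ x = 0 := fun x hx => TF.fd_zero _ hx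
  have z2 : ∀ x, x ∉ tsupport φ → pdy φ x = 0 := fun x hx => TF.fd_zero _ hx
  obtain ⟨I1, D1⟩ := hasDerivAt_translate S.hΩ hφ.2.1 hφ.2.2 S.cd_X1 hφ.cont_pdx z1 v
  obtain ⟨I2, D2⟩ := hasDerivAt_translate S.hΩ hφ.2.1 hφ.2.2 S.cd_X2 hφ.cont_pdy z2 v
  have D := D1.add D2
  have hin : ∀ᶠ h in nhds (0 : ℝ), ∀ x ∈ tsupport φ, x + h • v ∈ Ω := by
    apply hφ.2.1.isCompact.eventually_forall_of_forall_eventually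
    intro x hx
    have hc : Continuous (fun z : ℝ × (ℝ × ℝ) => z.2 + z.1 • v) := by fun_prop
    exact hc.continuousAt.eventually_mem (S.hΩ.mem_nhds (by simpa using hφ.2.2 hx))
  have hconst : (fun h : ℝ => (∫ x, X1 u (x + h • v) * pdx φ x)
      + ∫ x, X2 u (x + h • v) * pdy φ x) =ᶠ[nhds 0] fun _ => -(2 * H) * ∫ x, φ x := by
    filter_upwards [I1, I2, hin] with h h1 h2 h3
    have t := hφ.translate (h • v) h3
    have w := S.weak t
    rw [integral_sub_right_eq_self φ (h • v)] at w
    rw [← w, ← integral_add h1 h2,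
      ← integral_sub_right_eq_self (fun x => X1 u (x + h • v) * pdx φ x
        + X2 u (x + h • v) * pdy φ x) (h • v)]
    congr 1
    funext x
    unfold pdx pdy
    rw [TF.translate_fderiv, TF.translate_fderiv]
    simp
  have D' := (hasDerivAt_const (0 : ℝ) (-(2 * H) * ∫ x, φ x)).congr_of_eventuallyEq hconst
  have := D.unique D'
  rw [integral_add, this]
  · exact hφ.integrable S.hΩ ((S.co_fd S.cd_X1 v).mul hφ.cont_pdx.continuousOn)
      (fun x hx => by simp [z1 x hx])
  · exact hφ.integrable S.hΩ ((S.co_fd S.cd_X2 v).mul hφ.cont_pdy.continuousOn)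
      (fun x hx => by simp [z2 x hx])

theorem weak_p (hφ : TF Ω φ) :
    ∫ x, wv u x * ip u x (rr u x) (ss u x) (pdx φ x) (pdy φ x) = 0 := by
  rw [← S.weak_deriv hφ (1, 0)]
  congr 1
  funext x
  by_cases hx : x ∈ tsupport φ
  · have a1 := (S.hgX1 (hφ.2.2 hx)).pdx_eq
    have a2 := (S.hgX2 (hφ.2.2 hx)).pdx_eq
    unfold pdx at a1 a2
    rw [a1, a2]
    unfold ip; ring
  · have z1 : pdx φ x = 0 := TF.fd_zero _ hx
    have z2 : pdy φ x = 0 := TF.fd_zero _ hx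
    simp [z1, z2, ip]

theorem weak_q (hφ : TF Ω φ) :
    ∫ x, wv u x * ip u x (ss u x) (tt u x) (pdx φ x) (pdy φ x) = 0 := by
  rw [← S.weak_deriv hφ (0, 1)]
  congr 1
  funext x
  by_cases hx : x ∈ tsupport φ
  · have a1 := (S.hgX1 (hφ.2.2 hx)).pdy_eq
    have a2 := (S.hgX2 (hφ.2.2 hx)).pdy_eq
    unfold pdy at a1 a2
    rw [a1, a2]
    unfold ip; ring
  · have z1 : pdx φ x = 0 := TF.fd_zero _ hx
    have z2 : pdy φ x = 0 := TF.fd_zero _ hx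
    simp [z1, z2, ip]

end Sol

/-! ### Pointwise inequalities for the graph metric -/

theorem Qf_comb_le (u : ℝ × ℝ → ℝ) (x : ℝ × ℝ) (α β a₁ a₂ b₁ b₂ : ℝ) :
    Qf u x (α * a₁ + β * b₁) (α * a₂ + β * b₂)
      ≤ (α ^ 2 + β ^ 2) * (Qf u x a₁ a₂ + Qf u x b₁ b₂) := by
  have := Qf_nonneg u x (β * a₁ - α * b₁) (β * a₂ - α * b₂)
  unfold Qf ip at *
  nlinarith

theorem Qf_smul (u : ℝ × ℝ → ℝ) (x : ℝ × ℝ) (c a b : ℝ) :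
    Qf u x (c * a) (c * b) = c ^ 2 * Qf u x a b := by
  unfold Qf ip; ring

theorem jac_identity (u : ℝ × ℝ → ℝ) (x : ℝ × ℝ) (a₁ a₂ b₁ b₂ : ℝ) :
    wv u x ^ 2 * (a₁ * b₂ - a₂ * b₁) ^ 2
      = Qf u x a₁ a₂ * Qf u x b₁ b₂ - ip u x a₁ a₂ b₁ b₂ ^ 2 := by
  have h : wv u x ^ 2 = 1 - X1 u x ^ 2 - X2 u x ^ 2 := by linarith [X_sq u x]
  rw [h]; unfold Qf ip; ring

/-- The Jacobian of two functions is bounded by `W` times the intrinsic gradient norms. -/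
theorem jac_le (u : ℝ × ℝ → ℝ) (x : ℝ × ℝ) (a₁ a₂ b₁ b₂ : ℝ) :
    |a₁ * b₂ - a₂ * b₁| ≤ Wgraph u x * (√(Qf u x a₁ a₂) * √(Qf u x b₁ b₂)) := by
  have hi := jac_identity u x a₁ a₂ b₁ b₂
  have hw := W_mul_wv u x
  have hW := W_pos u x
  rw [← Real.sqrt_mul (Qf_nonneg ..), ← abs_of_pos hW, ← Real.sqrt_sq_eq_abs (Wgraph u x),
    ← Real.sqrt_mul (sq_nonneg _)]
  apply Real.abs_le_sqrt
  have : (a₁ * b₂ - a₂ * b₁) ^ 2 = Wgraph u x ^ 2 * (wv u x ^ 2 * (a₁ * b₂ - a₂ * b₁) ^ 2) := by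
    rw [← mul_assoc, ← mul_pow, hw]; ring
  rw [this]
  apply mul_le_mul_of_nonneg_left _ (sq_nonneg _)
  nlinarith [sq_nonneg (ip u x a₁ a₂ b₁ b₂)]

/-- The gradient of `W` is controlled by the energy density. -/
theorem Q_gradW_le (u : ℝ × ℝ → ℝ) (x : ℝ × ℝ) :
    wv u x * Qf u x (X1 u x * rr u x + X2 u x * ss u x) (X1 u x * ss u x + X2 u x * tt u x)
      ≤ E1 u x := by
  unfold E1
  apply mul_le_mul_of_nonneg_left _ (wv_pos u x).le
  refine (Qf_comb_le u x _ _ _ _ _ _).trans ?_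
  have h := X_sq u x
  have h1 := Qf_nonneg u x (rr u x) (ss u x)
  have h2 := Qf_nonneg u x (ss u x) (tt u x)
  rw [h]
  nlinarith [sq_nonneg (wv u x)]

/-- A function whose gradient is `α ∇p + β ∇q`, with `p, q` the partial derivatives of `u` and
`|(α, β)| ≤ w`, has intrinsic energy at most that of the normal. -/
theorem W_Q_comb_le (u : ℝ × ℝ → ℝ) (x : ℝ × ℝ) (α β : ℝ) (h : α ^ 2 + β ^ 2 ≤ wv u x ^ 2) :
    Wgraph u x * Qf u x (α * rr u x + β * ss u x) (α * ss u x + β * tt u x) ≤ E1 u x := by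
  have h1 := Qf_nonneg u x (rr u x) (ss u x)
  have h2 := Qf_nonneg u x (ss u x) (tt u x)
  have hc := Qf_comb_le u x α β (rr u x) (ss u x) (ss u x) (tt u x)
  have hW := W_pos u x
  have hw := W_mul_wv u x
  have e : E1 u x = Wgraph u x * (wv u x ^ 2 *
      (Qf u x (rr u x) (ss u x) + Qf u x (ss u x) (tt u x))) := by
    unfold E1
    rw [← mul_assoc, pow_two, ← mul_assoc, hw]; ring
  rw [e]
  apply mul_le_mul_of_nonneg_left _ hW.le
  exact hc.trans (mul_le_mul_of_nonneg_right h (by positivity))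

/-- Squared distance on the graph (as a subset of `ℝ³`) to the point above `P`. -/
def rho2 (u : ℝ × ℝ → ℝ) (P x : ℝ × ℝ) : ℝ :=
  (x.1 - P.1) ^ 2 + (x.2 - P.2) ^ 2 + (u x - u P) ^ 2

/-- Closed Euclidean disc. -/
def eB (P : ℝ × ℝ) (a : ℝ) : Set (ℝ × ℝ) := {x | (x.1 - P.1) ^ 2 + (x.2 - P.2) ^ 2 ≤ a ^ 2}

/-- The part of the graph in the closed ball of `ℝ³` of radius `a` around the point above `P`. -/
def cB (u : ℝ × ℝ → ℝ) (P : ℝ × ℝ) (a : ℝ) : Set (ℝ × ℝ) := {x | rho2 u P x ≤ a ^ 2}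

theorem cB_sub (u : ℝ × ℝ → ℝ) (P : ℝ × ℝ) (a : ℝ) : cB u P a ⊆ eB P a := by
  intro x hx
  have hx' : rho2 u P x ≤ a ^ 2 := hx
  unfold rho2 at hx'
  change (x.1 - P.1) ^ 2 + (x.2 - P.2) ^ 2 ≤ a ^ 2
  nlinarith [sq_nonneg (u x - u P)]

theorem eB_sub_closedBall (P : ℝ × ℝ) {a : ℝ} (ha : 0 ≤ a) :
    eB P a ⊆ Metric.closedBall P a := by
  intro x hx
  have hx' : (x.1 - P.1) ^ 2 + (x.2 - P.2) ^ 2 ≤ a ^ 2 := hx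
  rw [Metric.mem_closedBall, Prod.dist_eq, Real.dist_eq, Real.dist_eq]
  apply max_le
  · exact abs_le_of_sq_le_sq (by nlinarith [sq_nonneg (x.2 - P.2)]) ha
  · exact abs_le_of_sq_le_sq (by nlinarith [sq_nonneg (x.1 - P.1)]) ha

theorem eB_compact (P : ℝ × ℝ) {a : ℝ} (ha : 0 ≤ a) : IsCompact (eB P a) := by
  refine (isCompact_closedBall P a).of_isClosed_subset ?_ (eB_sub_closedBall P ha)
  exact isClosed_le (by fun_prop) continuous_const

theorem eB_mono (P : ℝ × ℝ) {a b : ℝ} (ha : 0 ≤ a) (hab : a ≤ b) : eB P a ⊆ eB P b := by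
  intro x hx
  have hx' : (x.1 - P.1) ^ 2 + (x.2 - P.2) ^ 2 ≤ a ^ 2 := hx
  change (x.1 - P.1) ^ 2 + (x.2 - P.2) ^ 2 ≤ b ^ 2
  nlinarith

theorem cB_mono (u : ℝ × ℝ → ℝ) (P : ℝ × ℝ) {a b : ℝ} (ha : 0 ≤ a) (hab : a ≤ b) :
    cB u P a ⊆ cB u P b := by
  intro x hx
  have hx' : rho2 u P x ≤ a ^ 2 := hx
  change rho2 u P x ≤ _
  nlinarith

theorem closedBall_vol (P : ℝ × ℝ) {a : ℝ} (ha : 0 ≤ a) :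
    (volume (Metric.closedBall P a)).toReal = 4 * a ^ 2 := by
  rw [← closedBall_prod_same, Measure.volume_eq_prod, Measure.prod_prod,
    Real.volume_closedBall, Real.volume_closedBall, ENNReal.toReal_mul,
    ENNReal.toReal_ofReal (by positivity)]
  ring

/-- The truncated square `(max t 0)²` is continuously differentiable. -/
theorem possq_deriv (t : ℝ) : HasDerivAt (fun t : ℝ => (max t 0) ^ 2) (2 * max t 0) t := by
  rcases lt_trichotomy t 0 with h | h | h
  · have : (fun t : ℝ => (max t 0) ^ 2) =ᶠ[nhds t] fun _ => 0 := by
      filter_upwards [Iio_mem_nhds h] with y hy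
      rw [max_eq_right (le_of_lt hy)]; norm_num
    rw [max_eq_right h.le]
    simpa using (hasDerivAt_const t (0 : ℝ)).congr_of_eventuallyEq this
  · subst h
    rw [hasDerivAt_iff_isLittleO_nhds_zero]
    simp only [max_self, zero_add, mul_zero, smul_zero, sub_zero]
    refine Asymptotics.IsBigO.trans_isLittleO (g := fun h : ℝ => h ^ 2) ?_ ?_
    · apply Asymptotics.IsBigO.of_bound 1
      refine Filter.Eventually.of_forall fun h => ?_
      have h1 : 0 ≤ max h 0 := le_max_right _ _
      have h2 : max h 0 ≤ |h| := max_le (le_abs_self _) (abs_nonneg _)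
      have h3 : max h 0 ^ 2 ≤ h ^ 2 := by rw [← sq_abs h]; gcongr
      simp only [Real.norm_eq_abs]
      rw [show max h 0 ^ 2 - 0 ^ 2 = max h 0 ^ 2 by ring, abs_of_nonneg (sq_nonneg (max h 0)), abs_of_nonneg (sq_nonneg h), one_mul]
      exact h3
    · have := Asymptotics.isLittleO_pow_pow (𝕜 := ℝ) (m := 1) (n := 2) (by norm_num)
      simpa using this
  · have : (fun t : ℝ => (max t 0) ^ 2) =ᶠ[nhds t] fun t => t ^ 2 := by
      filter_upwards [Ioi_mem_nhds h] with y hy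
      rw [max_eq_left (le_of_lt hy)]
    rw [max_eq_left h.le]
    simpa using (hasDerivAt_pow 2 t).congr_of_eventuallyEq this

theorem possq_contDiff : ContDiff ℝ 1 (fun t : ℝ => (max t 0) ^ 2) := by
  rw [contDiff_one_iff_deriv]
  refine ⟨fun t => (possq_deriv t).differentiableAt, ?_⟩
  have : deriv (fun t : ℝ => (max t 0) ^ 2) = fun t => 2 * max t 0 := by
    funext t; exact (possq_deriv t).deriv
  rw [this]; fun_prop

/-- The pointwise inequality behind the area bound, as a statement about real numbers. -/
theorem area_alg {a V w y z T H d₁ d₂ m ζ I : ℝ} (ha : 0 < a) (hV : 1 ≤ V) (hVw : V * w = 1)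
    (hX : y ^ 2 + z ^ 2 = 1 - w ^ 2) (hw1 : w ≤ 1) (hT : |T| ≤ 2) (hm0 : 0 ≤ m)
    (hm1 : m ≤ 4 * a ^ 2) (hd : d₁ ^ 2 + d₂ ^ 2 ≤ (2 * a) ^ 2) (hH : 0 < H) (hHa : H * a ≤ 1)
    (hI : I ≤ 0 ∨ (I = V ∧ 3 * a ^ 2 ≤ m ∧ ζ ^ 2 ≤ 1)) :
    I ≤ 59 / 2 + 2 / 9 / a ^ 4 * (y * (1 / (1 + ζ ^ 2) * (V * y) * m ^ 2
            + a * T * (2 * m * -(2 * d₁)))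
          + z * (1 / (1 + ζ ^ 2) * (V * z) * m ^ 2
            + a * T * (2 * m * -(2 * d₂))) + 2 * H * (a * T * m ^ 2)) := by
  have hXd : |y * d₁ + z * d₂| ≤ 2 * a := by
    apply abs_le_of_sq_le_sq _ (by positivity)
    have h1 : (y * d₁ + z * d₂) ^ 2 ≤ (y ^ 2 + z ^ 2) * (d₁ ^ 2 + d₂ ^ 2) := by
      nlinarith [sq_nonneg (y * d₂ - z * d₁)]
    have h2 : (y ^ 2 + z ^ 2) * (d₁ ^ 2 + d₂ ^ 2) ≤ 1 * (d₁ ^ 2 + d₂ ^ 2) := by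
      apply mul_le_mul_of_nonneg_right _ (by positivity)
      nlinarith [sq_nonneg w]
    linarith
  have hE : y * (1 / (1 + ζ ^ 2) * (V * y) * m ^ 2 + a * T * (2 * m * -(2 * d₁)))
          + z * (1 / (1 + ζ ^ 2) * (V * z) * m ^ 2
            + a * T * (2 * m * -(2 * d₂))) + 2 * H * (a * T * m ^ 2)
          = (V - w) * (m ^ 2 / (1 + ζ ^ 2)) - 4 * a * m * (T * (y * d₁ + z * d₂))
            + 2 * (H * a) * m ^ 2 * T := by
    have : V - w = V * (y ^ 2 + z ^ 2) := by
      rw [hX]; linear_combination w * hVw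
    rw [this]
    ring
  rw [hE]
  have b1 : T * (y * d₁ + z * d₂) ≤ 4 * a := by
    refine (le_abs_self _).trans ?_
    rw [abs_mul]
    calc _ ≤ 2 * (2 * a) := by gcongr
      _ = _ := by ring
  have b1' : 4 * a * m * (T * (y * d₁ + z * d₂)) ≤ 64 * a ^ 4 := by
    calc _ ≤ 4 * a * m * (4 * a) := by gcongr
      _ ≤ 4 * a * (4 * a ^ 2) * (4 * a) := by gcongr
      _ = 64 * a ^ 4 := by ring
  have hm2 : m ^ 2 ≤ 16 * a ^ 4 := by
    calc m ^ 2 ≤ (4 * a ^ 2) ^ 2 := by gcongr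
      _ = _ := by ring
  have b2 : -(64 * a ^ 4) ≤ 2 * (H * a) * m ^ 2 * T := by
    have : |2 * (H * a) * m ^ 2 * T| ≤ 64 * a ^ 4 := by
      rw [abs_mul, abs_of_nonneg (by positivity)]
      calc 2 * (H * a) * m ^ 2 * |T| ≤ 2 * 1 * (16 * a ^ 4) * 2 := by gcongr
        _ = _ := by ring
    exact (abs_le.1 this).1
  have h4 : 0 < a ^ 4 := by positivity
  have hWw : 0 ≤ V - w := by linarith
  have b3 : I ≤ 1 + 2 / 9 / a ^ 4 * ((V - w) * (m ^ 2 / (1 + ζ ^ 2))) := by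
    rcases hI with hI | ⟨rfl, hmm, hζ⟩
    · have : 0 ≤ 2 / 9 / a ^ 4 * ((V - w) * (m ^ 2 / (1 + ζ ^ 2))) := by positivity
      linarith
    · have h9 : 9 / 2 * a ^ 4 ≤ m ^ 2 / (1 + ζ ^ 2) := by
        rw [le_div_iff₀ (by positivity)]
        have : (3 * a ^ 2) ^ 2 ≤ m ^ 2 := by gcongr
        nlinarith
      have h10 : (1 : ℝ) ≤ 2 / 9 / a ^ 4 * (m ^ 2 / (1 + ζ ^ 2)) := by
        calc (1 : ℝ) = 2 / 9 / a ^ 4 * (9 / 2 * a ^ 4) := by field_simp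
          _ ≤ _ := by gcongr
      have h11 := mul_le_mul_of_nonneg_left h10 hWw
      have e : (I - w) * (2 / 9 / a ^ 4 * (m ^ 2 / (1 + ζ ^ 2)))
        = 2 / 9 / a ^ 4 * ((I - w) * (m ^ 2 / (1 + ζ ^ 2))) := by ring
      rw [e] at h11
      linarith
  have b4 : 2 / 9 / a ^ 4 * (128 * a ^ 4) = 256 / 9 := by field_simp; norm_num
  have b5 : 2 / 9 / a ^ 4 * (-(128 * a ^ 4)) ≤ 2 / 9 / a ^ 4 * (
        - (4 * a * m * (T * (y * d₁ + z * d₂))) + 2 * (H * a) * m ^ 2 * T) := by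
    apply mul_le_mul_of_nonneg_left _ (by positivity)
    linarith
  have e5 : 2 / 9 / a ^ 4 * ((V - w) * (m ^ 2 / (1 + ζ ^ 2))
        - 4 * a * m * (T * (y * d₁ + z * d₂)) + 2 * (H * a) * m ^ 2 * T) =
      2 / 9 / a ^ 4 * ((V - w) * (m ^ 2 / (1 + ζ ^ 2))) +
      2 / 9 / a ^ 4 * (- (4 * a * m * (T * (y * d₁ + z * d₂)))
        + 2 * (H * a) * m ^ 2 * T) := by ring
  rw [e5]
  linarith

namespace Sol

variable {H : ℝ} {Ω : Set (ℝ × ℝ)} {u : ℝ × ℝ → ℝ} (S : Sol H Ω u)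
include S

theorem cd_rho2 (P : ℝ × ℝ) : ContDiffOn ℝ 1 (rho2 u P) Ω := by
  have h := S.cd_u
  have h1 : ContDiffOn ℝ 1 (fun x : ℝ × ℝ => x.1) Ω := contDiffOn_fst
  have h2 : ContDiffOn ℝ 1 (fun x : ℝ × ℝ => x.2) Ω := contDiffOn_snd
  unfold rho2
  exact (((h1.sub contDiffOn_const).pow 2).add ((h2.sub contDiffOn_const).pow 2)).add
    ((h.sub contDiffOn_const).pow 2)

theorem cB_compact {P : ℝ × ℝ} {a : ℝ} (ha : 0 ≤ a) (hP : eB P a ⊆ Ω) :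
    IsCompact (cB u P a) := by
  have hc := eB_compact P ha
  refine hc.of_isClosed_subset ?_ (cB_sub u P a)
  have := ((S.cd_rho2 P).continuousOn.mono hP).preimage_isClosed_of_isClosed hc.isClosed
    (isClosed_Iic (a := a ^ 2))
  have e : cB u P a = eB P a ∩ rho2 u P ⁻¹' Iic (a ^ 2) :=
    Set.ext fun x => ⟨fun h => ⟨cB_sub u P a h, h⟩, fun h => h.2⟩
  rw [e]; exact this

theorem hg_rho2 (P : ℝ × ℝ) {x : ℝ × ℝ} (hx : x ∈ Ω) :
    HG (rho2 u P) (2 * ((x.1 - P.1) + (u x - u P) * pdx u x))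
      (2 * ((x.2 - P.2) + (u x - u P) * pdy u x)) x := by
  have := (((HG.fst (x := x)).sub (HG.const P.1)).sq.add
    ((HG.snd (x := x)).sub (HG.const P.2)).sq).add ((S.hgu hx).sub (HG.const (u P))).sq
  exact this.congr' (by ring) (by ring)

omit S in
theorem Q_rho2_le (u : ℝ × ℝ → ℝ) (P x : ℝ × ℝ) :
    Qf u x (2 * ((x.1 - P.1) + (u x - u P) * pdx u x))
      (2 * ((x.2 - P.2) + (u x - u P) * pdy u x)) ≤ 4 * rho2 u P x := by
  rw [Qf_smul]
  set d₁ := x.1 - P.1 with hd₁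
  set d₂ := x.2 - P.2 with hd₂
  set ζ := u x - u P with hζ
  have hw := W_mul_wv u x
  have hX := X_sq u x
  have key : Qf u x (d₁ + ζ * pdx u x) (d₂ + ζ * pdy u x)
      = d₁ ^ 2 + d₂ ^ 2 + ζ ^ 2 - (X1 u x * d₁ + X2 u x * d₂ - ζ * wv u x) ^ 2 := by
    rw [p_eq, q_eq]
    unfold Qf ip
    generalize X1 u x = y at *
    generalize X2 u x = z at *
    generalize wv u x = w at *
    generalize Wgraph u x = V at *
    have e2 : V ^ 2 * w ^ 2 = 1 := by rw [← mul_pow, hw]; norm_num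
    -- the form evaluated on `∇u = W X` and on mixed terms, using `|X|² = 1 - w²` and `W w = 1`
    have A : y * (d₁ + ζ * (V * y)) + z * (d₂ + ζ * (V * z))
        = y * d₁ + z * d₂ + ζ * V * (1 - w ^ 2) := by
      linear_combination ζ * V * hX
    rw [A]
    linear_combination (ζ ^ 2 * V ^ 2) * hX
      + (2 * ζ * (y * d₁ + z * d₂) * w) * hw
      + (ζ ^ 2 * (1 - w ^ 2)) * e2
  rw [key]
  unfold rho2
  nlinarith [sq_nonneg (X1 u x * d₁ + X2 u x * d₂ - ζ * wv u x)]

/-- Local area bound: the area of the graph inside a ball of radius `a` is at most `512 a²`. -/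
theorem area {P : ℝ × ℝ} {a : ℝ} (ha : 0 < a) (hP : eB P (2 * a) ⊆ Ω) (hHa : H * a ≤ 1) :
    ∫ x in cB u P a, Wgraph u x ≤ 512 * a ^ 2 := by
  set m : ℝ × ℝ → ℝ := fun x => 4 * a ^ 2 - ((x.1 - P.1) ^ 2 + (x.2 - P.2) ^ 2) with hm
  set φ : ℝ × ℝ → ℝ := fun x => (a * arctan ((1 / a) * (u x - u P))) * (max (m x) 0) ^ 2 with hφd
  have hmcd : ContDiff ℝ 1 m := by rw [hm]; fun_prop
  have hmz : ∀ x, x ∉ eB P (2 * a) → m x ≤ 0 := by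
    intro x hx
    have : ¬ ((x.1 - P.1) ^ 2 + (x.2 - P.2) ^ 2 ≤ (2 * a) ^ 2) := hx
    simp only [hm]
    nlinarith
  have hφ : TF Ω φ := by
    refine tf_glue S.hΩ (eB_compact P (by positivity)) hP ?_ ?_
    · refine ContDiffOn.mul ?_ (possq_contDiff.comp hmcd).contDiffOn
      exact contDiffOn_const.mul (contDiff_arctan.comp_contDiffOn
        (contDiffOn_const.mul (S.cd_u.sub contDiffOn_const)))
    · intro x hx
      simp [hφd, max_eq_right (hmz x hx)]
  have hweak := S.weak hφ
  have hKc := S.cB_compact (P := P) ha.le ((eB_mono P ha.le (by linarith)).trans hP)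
  have hKΩ : cB u P a ⊆ Ω := (cB_sub u P a).trans ((eB_mono P ha.le (by linarith)).trans hP)
  have hI1 : Integrable (fun x => X1 u x * pdx φ x + X2 u x * pdy φ x) :=
    hφ.integrable S.hΩ ((S.cd_X1.continuousOn.mul hφ.cont_pdx.continuousOn).add
      (S.cd_X2.continuousOn.mul hφ.cont_pdy.continuousOn)) (fun x hx => by
        have z1 : pdx φ x = 0 := TF.fd_zero _ hx
        have z2 : pdy φ x = 0 := TF.fd_zero _ hx
        simp [z1, z2])
  have hI2 : Integrable φ := hφ.integrable S.hΩ hφ.cont.continuousOn (fun x hx => TF.zero hx)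
  have hI3 : Integrable ((Metric.closedBall P (2 * a)).indicator (fun _ => (59 / 2 : ℝ))) :=
    (integrableOn_const (isCompact_closedBall P _).measure_lt_top.ne).integrable_indicator
      measurableSet_closedBall
  have hIW : IntegrableOn (Wgraph u) (cB u P a) :=
    (S.cd_W.continuousOn.mono hKΩ).integrableOn_compact hKc
  -- pointwise comparison with the integrand of the weak form
  have hpt : ∀ x, (cB u P a).indicator (Wgraph u) x ≤
      (Metric.closedBall P (2 * a)).indicator (fun _ => (59 / 2 : ℝ)) x
      + (2 / 9 / a ^ 4) * ((X1 u x * pdx φ x + X2 u x * pdy φ x) + 2 * H * φ x) := by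
    intro x
    by_cases hx : x ∈ eB P (2 * a)
    · have hxΩ := hP hx
      have hx' : (x.1 - P.1) ^ 2 + (x.2 - P.2) ^ 2 ≤ (2 * a) ^ 2 := hx
      rw [indicator_of_mem (eB_sub_closedBall P (by positivity) hx)]
      have hz : HG (fun y => a * arctan ((1 / a) * (u y - u P)))
          (1 / (1 + ((1 / a) * (u x - u P)) ^ 2) * pdx u x)
          (1 / (1 + ((1 / a) * (u x - u P)) ^ 2) * pdy u x) x := by
        have h1 := (((S.hgu hxΩ).sub (HG.const (u P))).const_mul (1 / a))
        have h2 := (HG.comp (Real.hasDerivAt_arctan ((1 / a) * (u x - u P))) h1).const_mul a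
        refine h2.congr' ?_ ?_ <;> (field_simp; ring)
      have hmg : HG m (-(2 * (x.1 - P.1))) (-(2 * (x.2 - P.2))) x := by
        have := (HG.const (x := x) (4 * a ^ 2)).sub (((HG.fst (x := x)).sub (HG.const P.1)).sq.add
          ((HG.snd (x := x)).sub (HG.const P.2)).sq)
        exact this.congr' (by ring) (by ring)
      have hφg := hz.mul (HG.comp (possq_deriv (m x)) hmg)
      have hm0 : 0 ≤ m x := by simp only [hm]; nlinarith
      have hm1 : m x ≤ 4 * a ^ 2 := by
        simp only [hm]; nlinarith [sq_nonneg (x.1 - P.1), sq_nonneg (x.2 - P.2)]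
      rw [hφg.pdx_eq, hφg.pdy_eq]
      simp only [hφd]
      rw [max_eq_left hm0]
      set ζ := (1 / a) * (u x - u P) with hζ
      set T := arctan ζ
      have hT : |T| ≤ 2 := by
        rw [abs_le]
        constructor <;> nlinarith [Real.arctan_lt_pi_div_two ζ, Real.neg_pi_div_two_lt_arctan ζ,
          Real.pi_lt_d2]
      have hI : (cB u P a).indicator (Wgraph u) x ≤ 0 ∨
          ((cB u P a).indicator (Wgraph u) x = Wgraph u x ∧ 3 * a ^ 2 ≤ m x ∧ ζ ^ 2 ≤ 1) := by
        by_cases hxc : x ∈ cB u P a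
        · right
          have hr : rho2 u P x ≤ a ^ 2 := hxc
          unfold rho2 at hr
          refine ⟨indicator_of_mem hxc _, ?_, ?_⟩
          · simp only [hm]; nlinarith [sq_nonneg (u x - u P)]
          · rw [hζ, mul_pow, div_pow, one_pow, one_div_mul_eq_div, div_le_one (by positivity)]
            nlinarith [sq_nonneg (x.1 - P.1), sq_nonneg (x.2 - P.2)]
        · left; rw [indicator_of_notMem hxc]
      rw [p_eq u x, q_eq u x]
      exact area_alg ha (one_le_W u x) (W_mul_wv u x) (X_sq u x) (wv_le_one u x) hT hm0 hm1
        hx' S.hH hHa hI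
    · have hxc : x ∉ cB u P a := fun h =>
        hx (eB_mono P ha.le (by linarith) (cB_sub u P a h))
      have hts : x ∉ tsupport φ := fun h => hx (tsupport_subset_of_zero
        (eB_compact P (by positivity)).isClosed (fun y hy => by
          simp [hφd, max_eq_right (hmz y hy)]) h)
      have z1 : pdx φ x = 0 := TF.fd_zero _ hts
      have z2 : pdy φ x = 0 := TF.fd_zero _ hts
      have z3 : φ x = 0 := TF.zero hts
      rw [indicator_of_notMem hxc, z1, z2, z3]
      simp only [mul_zero, add_zero]
      exact indicator_nonneg (fun _ _ => by norm_num) x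
  have hIc := hIW.integrable_indicator hKc.measurableSet
  have hI12 : Integrable (fun x => (X1 u x * pdx φ x + X2 u x * pdy φ x) + 2 * H * φ x) :=
    hI1.add (hI2.const_mul _)
  have := integral_mono hIc (hI3.add (hI12.const_mul (2 / 9 / a ^ 4))) hpt
  rw [integral_indicator hKc.measurableSet] at this
  refine this.trans ?_
  have e := integral_add hI3 (hI12.const_mul (2 / 9 / a ^ 4))
  simp only [Pi.add_apply] at e ⊢
  rw [e, integral_indicator measurableSet_closedBall, setIntegral_const, integral_const_mul,
    integral_add hI1 (hI2.const_mul _), hweak, integral_const_mul, smul_eq_mul,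
    Measure.real, closedBall_vol P (by positivity)]
  nlinarith [sq_nonneg a]

end Sol

/-! ### Energy bound and the maximum principle for linear combinations of `p` and `q` -/

namespace Sol

variable {H : ℝ} {Ω : Set (ℝ × ℝ)} {u : ℝ × ℝ → ℝ} (S : Sol H Ω u)
include S

omit S in
theorem _root_.energy_alg (u : ℝ × ℝ → ℝ) (x : ℝ × ℝ) (ψ a b : ℝ) :
    1 / 2 * (E1 u x * ψ ^ 2) - 2 * (Wgraph u x * Qf u x a b) ≤
      wv u x * ip u x (rr u x) (ss u x) (rr u x * ψ ^ 2 + pdx u x * (2 * ψ * a))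
        (ss u x * ψ ^ 2 + pdx u x * (2 * ψ * b))
      + wv u x * ip u x (ss u x) (tt u x) (ss u x * ψ ^ 2 + pdy u x * (2 * ψ * a))
        (tt u x * ψ ^ 2 + pdy u x * (2 * ψ * b)) := by
  set g₁ := X1 u x * rr u x + X2 u x * ss u x with hg₁
  set g₂ := X1 u x * ss u x + X2 u x * tt u x with hg₂
  have hG := Q_gradW_le u x
  rw [← hg₁, ← hg₂] at hG
  have hw := wv_pos u x
  have hVw := W_mul_wv u x
  have hN := mul_nonneg hw.le
    (Qf_nonneg u x (ψ * g₁ + 2 * Wgraph u x * a) (ψ * g₂ + 2 * Wgraph u x * b))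
  have e1 : wv u x * Qf u x (ψ * g₁ + 2 * Wgraph u x * a) (ψ * g₂ + 2 * Wgraph u x * b)
      = ψ ^ 2 * (wv u x * Qf u x g₁ g₂) + 4 * ψ * ip u x g₁ g₂ a b
        + 4 * (Wgraph u x * Qf u x a b) := by
    unfold Qf ip
    generalize X1 u x = y at *
    generalize X2 u x = z at *
    generalize wv u x = w at *
    generalize Wgraph u x = V at *
    linear_combination (4 * ψ * (g₁ * a + g₂ * b - (y * g₁ + z * g₂) * (y * a + z * b))
      + 4 * V * (a * a + b * b - (y * a + z * b) * (y * a + z * b))) * hVw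
  have e2 : wv u x * ip u x (rr u x) (ss u x) (rr u x * ψ ^ 2 + pdx u x * (2 * ψ * a))
        (ss u x * ψ ^ 2 + pdx u x * (2 * ψ * b))
      + wv u x * ip u x (ss u x) (tt u x) (ss u x * ψ ^ 2 + pdy u x * (2 * ψ * a))
        (tt u x * ψ ^ 2 + pdy u x * (2 * ψ * b))
      = E1 u x * ψ ^ 2 + 2 * ψ * ip u x g₁ g₂ a b := by
    rw [hg₁, hg₂]
    unfold E1 Qf ip
    rw [X1_eq, X2_eq]
    ring
  rw [e2]
  have h3 : ψ ^ 2 * (wv u x * Qf u x g₁ g₂) ≤ ψ ^ 2 * E1 u x :=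
    mul_le_mul_of_nonneg_left hG (sq_nonneg _)
  linarith

/-- Energy (Caccioppoli) inequality. -/
theorem energy {ψ : ℝ × ℝ → ℝ} (hψ : TF Ω ψ) :
    ∫ x, E1 u x * ψ x ^ 2 ≤ 4 * ∫ x, Wgraph u x * Qf u x (pdx ψ x) (pdy ψ x) := by
  have hψ2 : TF Ω (fun x => ψ x ^ 2) := by
    have := hψ.mul S.hΩ hψ.1.contDiffOn
    simpa only [← pow_two] using this
  have t1 := hψ2.mul S.hΩ S.cd_p
  have t2 := hψ2.mul S.hΩ S.cd_q
  have w1 := S.weak_p t1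
  have w2 := S.weak_q t2
  have coip : ∀ {f₁ f₂ g₁ g₂ : ℝ × ℝ → ℝ}, ContinuousOn f₁ Ω → ContinuousOn f₂ Ω →
      ContinuousOn g₁ Ω → ContinuousOn g₂ Ω →
      ContinuousOn (fun x => wv u x * ip u x (f₁ x) (f₂ x) (g₁ x) (g₂ x)) Ω := by
    intro f₁ f₂ g₁ g₂ h1 h2 h3 h4
    have h5 := S.cd_X1.continuousOn
    have h6 := S.cd_X2.continuousOn
    have h7 := S.cd_w.continuousOn
    unfold ip
    fun_prop
  have i1 := t1.integrable S.hΩ (coip S.co_rr S.co_ss t1.cont_pdx.continuousOn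
    t1.cont_pdy.continuousOn) (fun x hx => by
      have z1 : pdx (fun x => pdx u x * ψ x ^ 2) x = 0 := TF.fd_zero _ hx
      have z2 : pdy (fun x => pdx u x * ψ x ^ 2) x = 0 := TF.fd_zero _ hx
      rw [z1, z2]; simp [ip])
  have i2 := t2.integrable S.hΩ (coip S.co_ss S.co_tt t2.cont_pdx.continuousOn
    t2.cont_pdy.continuousOn) (fun x hx => by
      have z1 : pdx (fun x => pdy u x * ψ x ^ 2) x = 0 := TF.fd_zero _ hx
      have z2 : pdy (fun x => pdy u x * ψ x ^ 2) x = 0 := TF.fd_zero _ hx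
      rw [z1, z2]; simp [ip])
  have i3 : Integrable (fun x => E1 u x * ψ x ^ 2) :=
    hψ.integrable S.hΩ (S.co_E1.mul (hψ.cont.pow 2).continuousOn)
      (fun x hx => by simp [TF.zero hx])
  have i4 : Integrable (fun x => Wgraph u x * Qf u x (pdx ψ x) (pdy ψ x)) :=
    hψ.integrable S.hΩ (S.cd_W.continuousOn.mul
      (S.co_Qf hψ.cont_pdx.continuousOn hψ.cont_pdy.continuousOn)) (fun x hx => by
        have z1 : pdx ψ x = 0 := TF.fd_zero _ hx
        have z2 : pdy ψ x = 0 := TF.fd_zero _ hx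
        simp [z1, z2, Qf, ip])
  have hm := integral_mono ((i3.const_mul (1 / 2)).sub (i4.const_mul 2)) (i1.add i2) (fun x => by
    by_cases hx : x ∈ tsupport ψ
    · have hxΩ := hψ.2.2 hx
      have a1 := (S.hgp hxΩ).mul (hψ.hg x).sq
      have a2 := (S.hgq hxΩ).mul (hψ.hg x).sq
      simp only [Pi.add_apply, Pi.sub_apply]
      rw [a1.pdx_eq, a1.pdy_eq, a2.pdx_eq, a2.pdy_eq]
      exact energy_alg u x (ψ x) (pdx ψ x) (pdy ψ x)
    · have z0 : ψ x = 0 := TF.zero hx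
      have z1 : pdx ψ x = 0 := TF.fd_zero _ hx
      have z2 : pdy ψ x = 0 := TF.fd_zero _ hx
      have b1 : x ∉ tsupport (fun x => pdx u x * ψ x ^ 2) := fun h => hx
        (tsupport_subset_of_zero (isClosed_tsupport ψ) (fun y hy => by simp [TF.zero hy]) h)
      have b2 : x ∉ tsupport (fun x => pdy u x * ψ x ^ 2) := fun h => hx
        (tsupport_subset_of_zero (isClosed_tsupport ψ) (fun y hy => by simp [TF.zero hy]) h)
      have c1 : pdx (fun x => pdx u x * ψ x ^ 2) x = 0 := TF.fd_zero _ b1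
      have c2 : pdy (fun x => pdx u x * ψ x ^ 2) x = 0 := TF.fd_zero _ b1
      have c3 : pdx (fun x => pdy u x * ψ x ^ 2) x = 0 := TF.fd_zero _ b2
      have c4 : pdy (fun x => pdy u x * ψ x ^ 2) x = 0 := TF.fd_zero _ b2
      simp only [Pi.add_apply, Pi.sub_apply]
      rw [c1, c2, c3, c4, z0, z1, z2]
      simp [Qf, ip])
  rw [integral_sub' (i3.const_mul _) (i4.const_mul _), integral_add' i1 i2, w1, w2,
    integral_const_mul, integral_const_mul] at hm
  linarith

/-- Scale invariant bound of the energy in a ball of half the radius. -/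
theorem energy_ball {P : ℝ × ℝ} {a : ℝ} (ha : 0 < a) (hP : eB P (2 * a) ⊆ Ω) (hHa : H * a ≤ 1) :
    ∫ x in cB u P (a / 2), E1 u x ≤ 131072 := by
  have hPa : eB P a ⊆ Ω := (eB_mono P ha.le (by linarith)).trans hP
  have hKc := S.cB_compact (P := P) ha.le hPa
  have hKΩ : cB u P a ⊆ Ω := (cB_sub u P a).trans hPa
  have hKc2 := S.cB_compact (P := P) (a := a / 2) (by positivity)
    ((eB_mono P (by positivity) (by linarith)).trans hPa)
  set m : ℝ × ℝ → ℝ := fun x => a ^ 2 - rho2 u P x with hm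
  set ψ : ℝ × ℝ → ℝ := fun x => (1 / a ^ 4) * (max (m x) 0) ^ 2 with hψd
  have hmz : ∀ x, x ∉ cB u P a → m x ≤ 0 := by
    intro x hx
    have : ¬ (rho2 u P x ≤ a ^ 2) := hx
    simp only [hm]; linarith
  have hψz : ∀ x, x ∉ cB u P a → ψ x = 0 := by
    intro x hx
    simp [hψd, max_eq_right (hmz x hx)]
  have hψ : TF Ω ψ := by
    refine tf_glue S.hΩ hKc hKΩ ?_ hψz
    exact contDiffOn_const.mul (possq_contDiff.comp_contDiffOn
      (contDiffOn_const.sub (S.cd_rho2 P)))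
  have hE := S.energy hψ
  have hts : tsupport ψ ⊆ cB u P a := tsupport_subset_of_zero hKc.isClosed hψz
  -- the gradient term is at most `16 / a²` times the area
  have hIW : IntegrableOn (Wgraph u) (cB u P a) :=
    (S.cd_W.continuousOn.mono hKΩ).integrableOn_compact hKc
  have hR : ∫ x, Wgraph u x * Qf u x (pdx ψ x) (pdy ψ x) ≤ 16 / a ^ 2 * (512 * a ^ 2) := by
    have i4 : Integrable (fun x => Wgraph u x * Qf u x (pdx ψ x) (pdy ψ x)) :=
      hψ.integrable S.hΩ (S.cd_W.continuousOn.mul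
        (S.co_Qf hψ.cont_pdx.continuousOn hψ.cont_pdy.continuousOn)) (fun x hx => by
          have z1 : pdx ψ x = 0 := TF.fd_zero _ hx
          have z2 : pdy ψ x = 0 := TF.fd_zero _ hx
          simp [z1, z2, Qf, ip])
    have := integral_mono i4 ((hIW.integrable_indicator hKc.measurableSet).const_mul (16 / a ^ 2))
      (fun x => by
        simp only
        by_cases hx : x ∈ cB u P a
        · rw [indicator_of_mem hx]
          have hxΩ := hKΩ hx
          have hr : rho2 u P x ≤ a ^ 2 := hx
          have hr0 : 0 ≤ rho2 u P x := by unfold rho2; positivity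
          have hm0 : 0 ≤ m x := by simp only [hm]; linarith
          have hm1 : m x ≤ a ^ 2 := by simp only [hm]; linarith
          have hmg := (HG.const (x := x) (a ^ 2)).sub (S.hg_rho2 P hxΩ)
          have hψg := (HG.comp (possq_deriv (m x)) hmg).const_mul (1 / a ^ 4)
          have e1 := hψg.pdx_eq
          have e2 := hψg.pdy_eq
          rw [max_eq_left hm0] at e1 e2
          have hQ := Q_rho2_le u P x
          set A := 2 * ((x.1 - P.1) + (u x - u P) * pdx u x)
          set B := 2 * ((x.2 - P.2) + (u x - u P) * pdy u x)
          have e1' : pdx ψ x = (-(2 * m x / a ^ 4)) * A := by rw [hψd, e1]; ring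
          have e2' : pdy ψ x = (-(2 * m x / a ^ 4)) * B := by rw [hψd, e2]; ring
          rw [e1', e2', Qf_smul]
          have hV := W_pos u x
          have : (-(2 * m x / a ^ 4)) ^ 2 * Qf u x A B ≤ 16 / a ^ 2 := by
            have h1 : Qf u x A B ≤ 4 * a ^ 2 := by linarith
            have h2 : (-(2 * m x / a ^ 4)) ^ 2 ≤ 4 / a ^ 4 := by
              rw [neg_sq, div_pow, div_le_div_iff₀ (by positivity) (by positivity)]
              have : m x ^ 2 ≤ (a ^ 2) ^ 2 := by gcongr
              have h8 : 0 < a ^ 4 := by positivity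
              calc (2 * m x) ^ 2 * a ^ 4 = 4 * a ^ 4 * m x ^ 2 := by ring
                _ ≤ 4 * a ^ 4 * (a ^ 2) ^ 2 := by gcongr
                _ = _ := by ring
            calc _ ≤ 4 / a ^ 4 * (4 * a ^ 2) := by
                  apply mul_le_mul h2 h1 (Qf_nonneg ..) (by positivity)
              _ = _ := by field_simp; norm_num
          calc _ ≤ Wgraph u x * (16 / a ^ 2) := by gcongr
            _ = _ := by ring
        · rw [indicator_of_notMem hx]
          have hx' : x ∉ tsupport ψ := fun h => hx (hts h)
          have z1 : pdx ψ x = 0 := TF.fd_zero _ hx'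
          have z2 : pdy ψ x = 0 := TF.fd_zero _ hx'
          simp [z1, z2, Qf, ip])
    rw [integral_const_mul, integral_indicator hKc.measurableSet] at this
    refine this.trans ?_
    gcongr
    exact S.area ha hP hHa
  have hL : 81 / 256 * ∫ x in cB u P (a / 2), E1 u x ≤ ∫ x, E1 u x * ψ x ^ 2 := by
    have hIE : IntegrableOn (E1 u) (cB u P (a / 2)) :=
      (S.co_E1.mono ((cB_mono u P (by positivity) (by linarith)).trans hKΩ)).integrableOn_compact
        hKc2
    have i3 : Integrable (fun x => E1 u x * ψ x ^ 2) :=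
      hψ.integrable S.hΩ (S.co_E1.mul (hψ.cont.pow 2).continuousOn)
        (fun x hx => by simp [TF.zero hx])
    have := integral_mono ((hIE.integrable_indicator hKc2.measurableSet).const_mul (81 / 256)) i3
      (fun x => by
        simp only
        have hE0 := E1_nonneg u x
        by_cases hx : x ∈ cB u P (a / 2)
        · rw [indicator_of_mem hx]
          have hr : rho2 u P x ≤ (a / 2) ^ 2 := hx
          have hm1 : 3 / 4 * a ^ 2 ≤ m x := by simp only [hm]; nlinarith
          have h9 : 9 / 16 ≤ ψ x := by
            simp only [hψd]
            rw [max_eq_left (le_trans (by positivity) hm1)]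
            calc (9 : ℝ) / 16 = 1 / a ^ 4 * (3 / 4 * a ^ 2) ^ 2 := by field_simp; norm_num
              _ ≤ _ := by gcongr
          have : (9 / 16 : ℝ) ^ 2 ≤ ψ x ^ 2 := by gcongr
          calc 81 / 256 * E1 u x = E1 u x * (9 / 16 : ℝ) ^ 2 := by ring
            _ ≤ _ := by gcongr
        · rw [indicator_of_notMem hx]; simp only [mul_zero]; positivity)
    rwa [integral_const_mul, integral_indicator hKc2.measurableSet] at this
  have e : 16 / a ^ 2 * (512 * a ^ 2) = 8192 := by field_simp; norm_num
  rw [e] at hR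
  linarith

/-- Weak maximum principle: an affine combination of the partial derivatives that exceeds `s`
on the frontier of a bounded domain is at least `s` inside. -/
theorem max_principle {D : Set (ℝ × ℝ)} (hDo : IsOpen D) (hDc : IsCompact (closure D))
    (hDΩ : closure D ⊆ Ω) (c₁ c₂ c₃ s : ℝ)
    (hfr : ∀ x ∈ frontier D, s < c₁ * pdx u x + c₂ * pdy u x + c₃) :
    ∀ x ∈ D, s ≤ c₁ * pdx u x + c₂ * pdy u x + c₃ := by
  classical
  set g : ℝ × ℝ → ℝ := fun x => c₁ * pdx u x + c₂ * pdy u x + c₃ with hg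
  have hgc : ContDiffOn ℝ 1 g Ω :=
    ((contDiffOn_const.mul S.cd_p).add (contDiffOn_const.mul S.cd_q)).add contDiffOn_const
  set φ : ℝ × ℝ → ℝ := D.indicator (fun x => (max (s - g x) 0) ^ 2) with hφd
  set K := closure D ∩ {x | g x ≤ s} with hKd
  have hKcl : IsClosed K :=
    ((hgc.continuousOn.mono hDΩ).preimage_isClosed_of_isClosed hDc.isClosed
      (isClosed_Iic (a := s)))
  have hKc : IsCompact K := hDc.of_isClosed_subset hKcl inter_subset_left
  have hKD : K ⊆ D := by
    intro x hx
    by_contra hxD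
    have : x ∈ frontier D := ⟨hx.1, by rwa [hDo.interior_eq]⟩
    exact absurd (hfr x this) (not_lt.2 hx.2)
  have hφz : ∀ x, x ∉ K → φ x = 0 := by
    intro x hx
    by_cases hxD : x ∈ D
    · rw [hφd, indicator_of_mem hxD]
      have : s < g x := by
        by_contra h
        exact hx ⟨subset_closure hxD, not_lt.1 h⟩
      rw [max_eq_right (by linarith)]; norm_num
    · rw [hφd, indicator_of_notMem hxD]
  have hφD : TF D φ := by
    refine tf_glue hDo hKc hKD ?_ hφz
    refine ContDiffOn.congr (f := fun x => (max (s - g x) 0) ^ 2) ?_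
      (fun x hx => indicator_of_mem hx _)
    exact possq_contDiff.comp_contDiffOn
      (contDiffOn_const.sub (hgc.mono (subset_closure.trans hDΩ)))
  have hφ : TF Ω φ := ⟨hφD.1, hφD.2.1, hφD.2.2.trans (subset_closure.trans hDΩ)⟩
  have hts : tsupport φ ⊆ K := tsupport_subset_of_zero hKcl hφz
  have w1 := S.weak_p hφ
  have w2 := S.weak_q hφ
  have coip : ∀ {f₁ f₂ g₁ g₂ : ℝ × ℝ → ℝ}, ContinuousOn f₁ Ω → ContinuousOn f₂ Ω →
      ContinuousOn g₁ Ω → ContinuousOn g₂ Ω →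
      ContinuousOn (fun x => wv u x * ip u x (f₁ x) (f₂ x) (g₁ x) (g₂ x)) Ω := by
    intro f₁ f₂ g₁ g₂ h1 h2 h3 h4
    have h5 := S.cd_X1.continuousOn
    have h6 := S.cd_X2.continuousOn
    have h7 := S.cd_w.continuousOn
    unfold ip
    fun_prop
  have z1 : ∀ x, x ∉ tsupport φ → pdx φ x = 0 := fun x hx => TF.fd_zero _ hx
  have z2 : ∀ x, x ∉ tsupport φ → pdy φ x = 0 := fun x hx => TF.fd_zero _ hx
  have i1 := hφ.integrable S.hΩ (coip S.co_rr S.co_ss hφ.cont_pdx.continuousOn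
    hφ.cont_pdy.continuousOn) (fun x hx => by rw [z1 x hx, z2 x hx]; simp [ip])
  have i2 := hφ.integrable S.hΩ (coip S.co_ss S.co_tt hφ.cont_pdx.continuousOn
    hφ.cont_pdy.continuousOn) (fun x hx => by rw [z1 x hx, z2 x hx]; simp [ip])
  set F : ℝ × ℝ → ℝ := fun x => -(c₁ * (wv u x * ip u x (rr u x) (ss u x) (pdx φ x) (pdy φ x))
      + c₂ * (wv u x * ip u x (ss u x) (tt u x) (pdx φ x) (pdy φ x))) with hF
  have hFint : ∫ x, F x = 0 := by
    rw [hF, integral_neg, integral_add (i1.const_mul _) (i2.const_mul _), integral_const_mul,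
      integral_const_mul, w1, w2]; simp
  -- on `D` the gradient of `φ` is `-2 (s - g)₊ ∇g`, so `F = 2 w (s - g)₊ Q(∇g)`
  have hgr : ∀ x ∈ D, pdx φ x = -(2 * max (s - g x) 0) * (c₁ * rr u x + c₂ * ss u x) ∧
      pdy φ x = -(2 * max (s - g x) 0) * (c₁ * ss u x + c₂ * tt u x) := by
    intro x hx
    have hxΩ := hDΩ (subset_closure hx)
    have hgg : HG g (c₁ * rr u x + c₂ * ss u x) (c₁ * ss u x + c₂ * tt u x) x :=
      ((((S.hgp hxΩ).const_mul c₁).add ((S.hgq hxΩ).const_mul c₂)).add (HG.const c₃)).congr'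
        (by ring) (by ring)
    have h1 := HG.comp (possq_deriv (s - g x)) ((HG.const s).sub hgg)
    have h2 : φ =ᶠ[nhds x] fun y => (max (s - g y) 0) ^ 2 := by
      filter_upwards [hDo.mem_nhds hx] with y hy using indicator_of_mem hy _
    have h3 := h1.congr_of_eventuallyEq h2
    rw [h3.pdx_eq, h3.pdy_eq]
    constructor <;> ring
  have hFD : ∀ x ∈ D, F x = wv u x * (2 * max (s - g x) 0) *
      Qf u x (c₁ * rr u x + c₂ * ss u x) (c₁ * ss u x + c₂ * tt u x) := by
    intro x hx
    simp only [hF]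
    rw [(hgr x hx).1, (hgr x hx).2]
    unfold Qf ip
    ring
  have hFn : ∀ x, 0 ≤ F x := by
    intro x
    by_cases hx : x ∈ D
    · rw [hFD x hx]
      have := Qf_nonneg u x (c₁ * rr u x + c₂ * ss u x) (c₁ * ss u x + c₂ * tt u x)
      have := wv_pos u x
      have : 0 ≤ max (s - g x) 0 := le_max_right _ _
      positivity
    · have hx' : x ∉ tsupport φ := fun h => hx (hKD (hts h))
      simp only [hF]
      rw [z1 x hx', z2 x hx']; simp [ip]
  have hFc : Continuous F := by
    refine cont_glue S.hΩ (isClosed_tsupport φ) hφ.2.2 ?_ ?_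
    · simp only [hF]
      exact ((continuousOn_const.mul (coip S.co_rr S.co_ss hφ.cont_pdx.continuousOn
        hφ.cont_pdy.continuousOn)).add (continuousOn_const.mul (coip S.co_ss S.co_tt
        hφ.cont_pdx.continuousOn hφ.cont_pdy.continuousOn))).neg
    · intro x hx; simp only [hF]; rw [z1 x hx, z2 x hx]; simp [ip]
  have hFi : Integrable F := ((i1.const_mul c₁).add (i2.const_mul c₂)).neg
  have hF0 : F = 0 := by
    have := (integral_eq_zero_iff_of_nonneg hFn hFi).1 hFint
    exact (Continuous.ae_eq_iff_eq volume hFc continuous_const).1 this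
  have hd0 : ∀ x, fderiv ℝ φ x = 0 := by
    intro x
    have hc : pdx φ x = 0 ∧ pdy φ x = 0 := by
      by_cases hx : x ∈ D
      · have h0 : F x = 0 := by rw [hF0]; rfl
        rw [hFD x hx] at h0
        have hw := wv_pos u x
        rw [(hgr x hx).1, (hgr x hx).2]
        rcases mul_eq_zero.1 h0 with h | h
        · have : max (s - g x) 0 = 0 := by
            rcases mul_eq_zero.1 h with h | h
            · exact absurd h hw.ne'
            · linarith
          rw [this]; simp
        · have hQ := Qf_ge u x (c₁ * rr u x + c₂ * ss u x) (c₁ * ss u x + c₂ * tt u x)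
          rw [h] at hQ
          have hs : (c₁ * rr u x + c₂ * ss u x) ^ 2 + (c₁ * ss u x + c₂ * tt u x) ^ 2 ≤ 0 := by
            by_contra hcon
            push Not at hcon
            have := mul_pos (pow_pos hw 2) hcon
            linarith
          have ha : c₁ * rr u x + c₂ * ss u x = 0 := by nlinarith [sq_nonneg (c₁ * rr u x + c₂ * ss u x), sq_nonneg (c₁ * ss u x + c₂ * tt u x)]
          have hb : c₁ * ss u x + c₂ * tt u x = 0 := by nlinarith [sq_nonneg (c₁ * rr u x + c₂ * ss u x), sq_nonneg (c₁ * ss u x + c₂ * tt u x)]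
          rw [ha, hb]; simp
      · have hx' : x ∉ tsupport φ := fun h => hx (hKD (hts h))
        exact ⟨z1 x hx', z2 x hx'⟩
    have := HasFDerivAt.fderiv (hφ.hg x)
    rw [this, hc.1, hc.2]; simp
  have hconst : ∀ x y, φ x = φ y := fun x y =>
    is_const_of_fderiv_eq_zero (hφ.1.differentiable (by norm_num)) hd0 x y
  obtain ⟨y, hy⟩ : ∃ y, y ∉ K := by
    by_contra h
    push Not at h
    exact noncompact_univ (ℝ × ℝ) ((eq_univ_of_forall h) ▸ hKc)
  intro x hx
  have h0 : φ x = 0 := (hconst x y).trans (hφz y hy)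
  rw [hφd, indicator_of_mem hx] at h0
  by_contra hlt
  push Not at hlt
  have : 0 < s - g x := by simp only [hg]; linarith
  rw [max_eq_left this.le] at h0
  exact absurd h0 (by positivity)

end Sol

/-! ### Planar topology: filling in a connected open set -/

/-- A continuous function with values in the multiples of a positive number is constant on
preconnected sets. -/
theorem const_of_int_mul {s : Set (ℝ × ℝ)} (hs : IsPreconnected s) {f : ℝ × ℝ → ℝ} {c : ℝ}
    (hc : 0 < c) (hf : ContinuousOn f s) (hi : ∀ x ∈ s, ∃ m : ℤ, f x = m * c) {x y : ℝ × ℝ}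
    (hx : x ∈ s) (hy : y ∈ s) : f x = f y := by
  have key : ∀ x ∈ s, ∀ y ∈ s, ¬ f x < f y := by
    intro x hx y hy hlt
    obtain ⟨m, hm⟩ := hi x hx
    obtain ⟨n, hn⟩ := hi y hy
    have h1 : (m : ℝ) < n := by
      by_contra h
      push Not at h
      nlinarith
    have h1' : m + 1 ≤ n := by exact_mod_cast h1
    have h2 : ((m : ℝ) + 1) ≤ n := by exact_mod_cast h1'
    have hmem : ((m : ℝ) + 1 / 2) * c ∈ f '' s := by
      apply (hs.image f hf).ordConnected.out ⟨x, hx, rfl⟩ ⟨y, hy, rfl⟩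
      rw [hm, hn]
      constructor <;> nlinarith
    obtain ⟨z, hz, hzz⟩ := hmem
    obtain ⟨k, hk⟩ := hi z hz
    have h3 : (k : ℝ) = m + 1 / 2 := by
      have : (k : ℝ) * c = (m + 1 / 2) * c := by rw [← hk, hzz]
      exact mul_right_cancel₀ hc.ne' this
    have h4 : (2 * k : ℤ) = 2 * m + 1 := by
      have : (2 * k : ℝ) = 2 * m + 1 := by linarith
      exact_mod_cast this
    omega
  exact le_antisymm (not_lt.1 (key y hy x hx)) (not_lt.1 (key x hx y hy))

/-- Unicoherence of the plane: if an open set and its complement are both connected, so is their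
common frontier. If the frontier splits as `A ⊔ B`, a function `φ` which is `0` on `A` and `1` on
`B` gives a circle-valued map `e^{±iπφ}`, whose lift to the line has incompatible increments. -/
theorem frontier_preconnected {U : Set (ℝ × ℝ)} (hU : IsOpen U) (hc : IsPreconnected U)
    (hc' : IsPreconnected Uᶜ) : IsPreconnected (frontier U) := by
  classical
  rw [isPreconnected_iff_subset_of_fully_disjoint_closed isClosed_frontier]
  intro A B hA hB hAB hd
  by_contra hcon
  push Not at hcon
  obtain ⟨h1, h2⟩ := hcon
  obtain ⟨b, hb, hbA⟩ := not_subset.1 h1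
  obtain ⟨a, ha, haB⟩ := not_subset.1 h2
  have haA : a ∈ A := (hAB ha).resolve_right haB
  have hbB : b ∈ B := (hAB hb).resolve_left hbA
  obtain ⟨φ, hφ0, hφ1, -⟩ := exists_continuous_zero_one_of_isClosed hA hB hd
  let h : ℝ × ℝ → Circle := fun x => if x ∈ U then Circle.exp (π * φ x) else Circle.exp (-(π * φ x))
  have hpi : Circle.exp π = Circle.exp (-π) := by
    rw [Circle.exp_eq_exp]
    exact ⟨1, by push_cast; ring⟩
  have hh : Continuous h := by
    apply Continuous.if
    · intro x hx
      rcases hAB hx with hx | hx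
      · have : φ x = 0 := hφ0 hx
        simp [this]
      · have : φ x = 1 := hφ1 hx
        rw [this, mul_one]; exact hpi
    · exact Circle.exp.continuous.comp (by fun_prop)
    · exact Circle.exp.continuous.comp (by fun_prop)
  obtain ⟨e₀, he₀⟩ : ∃ e₀ : ℝ, Circle.exp e₀ = h a := by
    by_cases hx : a ∈ U
    · exact ⟨π * φ a, by simp [h, hx]⟩
    · exact ⟨-(π * φ a), by simp [h, hx]⟩
  obtain ⟨θ, ⟨-, hθ⟩, -⟩ := Circle.isCoveringMap_exp.existsUnique_continuousMap_lifts
    (⟨h, hh⟩ : C(ℝ × ℝ, Circle)) a e₀ he₀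
  have hθ' : ∀ x, Circle.exp (θ x) = h x := fun x => congrFun hθ x
  have hacl : a ∈ closure U := frontier_subset_closure ha
  have hbcl : b ∈ closure U := frontier_subset_closure hb
  have haU : a ∉ U := fun h => by
    rw [hU.frontier_eq] at ha; exact ha.2 h
  have hbU : b ∉ U := fun h => by
    rw [hU.frontier_eq] at hb; exact hb.2 h
  have e1 : θ a - π * φ a = θ b - π * φ b := by
    refine const_of_int_mul (f := fun x => θ x - π * φ x) (c := 2 * π) hc.closure (by positivity)
      (by fun_prop) ?_ hacl hbcl
    intro x hx
    have : Circle.exp (θ x) = Circle.exp (π * φ x) := by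
      rw [hθ']
      by_cases hxU : x ∈ U
      · simp [h, hxU]
      · have hxf : x ∈ frontier U := by rw [hU.frontier_eq]; exact ⟨hx, hxU⟩
        simp only [h, hxU, if_false]
        rcases hAB hxf with hx | hx
        · have : φ x = 0 := hφ0 hx
          simp [this]
        · have : φ x = 1 := hφ1 hx
          rw [this, mul_one]; exact hpi.symm
    rw [Circle.exp_eq_exp] at this
    obtain ⟨m, hm⟩ := this
    exact ⟨m, by rw [hm]; ring⟩
  have e2 : θ a + π * φ a = θ b + π * φ b := by
    refine const_of_int_mul (f := fun x => θ x + π * φ x) (c := 2 * π) hc' (by positivity)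
      (by fun_prop) ?_ haU hbU
    intro x hx
    have : Circle.exp (θ x) = Circle.exp (-(π * φ x)) := by
      rw [hθ']
      have hxU : x ∉ U := hx
      simp [h, hxU]
    rw [Circle.exp_eq_exp] at this
    obtain ⟨m, hm⟩ := this
    exact ⟨m, by rw [hm]; ring⟩
  have e3 : φ a = 0 := hφ0 haA
  have e4 : φ b = 1 := hφ1 hbB
  rw [e3, e4] at e1 e2
  linarith [Real.pi_pos]

/-- Filling the bounded holes of a connected open set `D`: the result has a connected frontier,
contained in that of `D`. -/
theorem exists_fill {D K : Set (ℝ × ℝ)} (hD : IsOpen D) (hDc : IsConnected D)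
    (hDK : D ⊆ K) (hKc : IsConnected Kᶜ) :
    ∃ U, IsOpen U ∧ D ⊆ U ∧ U ⊆ K ∧ IsPreconnected (frontier U) ∧ frontier U ⊆ frontier D ∧
      (frontier U).Nonempty := by
  obtain ⟨y0, hy0⟩ := hKc.nonempty
  have hKD : Kᶜ ⊆ Dᶜ := compl_subset_compl.2 hDK
  set V := connectedComponentIn Dᶜ y0 with hV
  have hVD : V ⊆ Dᶜ := connectedComponentIn_subset _ _
  have hVc : IsPreconnected V := isPreconnected_connectedComponentIn
  have hy0V : y0 ∈ V := mem_connectedComponentIn (hKD hy0)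
  have hKV : Kᶜ ⊆ V := hKc.isPreconnected.subset_connectedComponentIn hy0 hKD
  have hmax : ∀ T : Set (ℝ × ℝ), IsPreconnected T → T ⊆ Dᶜ → (T ∩ V).Nonempty → T ⊆ V := by
    intro T hT hTD ⟨z, hzT, hzV⟩
    have : V = connectedComponentIn Dᶜ z := connectedComponentIn_eq hzV
    rw [this]
    exact hT.subset_connectedComponentIn hzT hTD
  have hVcl : IsClosed V := by
    apply isClosed_of_closure_subset
    apply hmax _ hVc.closure
    · exact closure_minimal hVD hD.isClosed_compl
    · exact ⟨y0, subset_closure hy0V, hy0V⟩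
  have hUo : IsOpen Vᶜ := hVcl.isOpen_compl
  have hDU : D ⊆ Vᶜ := fun x hx hxV => hVD hxV hx
  obtain ⟨P, hP⟩ := hDc.nonempty
  have hUc : IsPreconnected Vᶜ := by
    have hall : Vᶜ ⊆ connectedComponentIn Vᶜ P := by
      intro x hx
      set T := connectedComponentIn Vᶜ x with hT
      have hTo : IsOpen T := hUo.connectedComponentIn
      have hxT : x ∈ T := mem_connectedComponentIn hx
      have hTV : T ⊆ Vᶜ := connectedComponentIn_subset _ _
      have hTc : IsPreconnected T := isPreconnected_connectedComponentIn
      have hne : (T ∩ D).Nonempty := by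
        by_contra hemp
        have hTD : T ⊆ Dᶜ := fun z hz hzD => hemp ⟨z, hz, hzD⟩
        have hfr : (frontier T).Nonempty := by
          rw [nonempty_frontier_iff]
          exact ⟨⟨x, hxT⟩, fun h => hTV (h ▸ mem_univ y0) hy0V⟩
        obtain ⟨y, hy⟩ := hfr
        have hyT : y ∉ T := by rw [hTo.frontier_eq] at hy; exact hy.2
        have hycl : y ∈ closure T := frontier_subset_closure hy
        have hins : IsPreconnected (insert y T) :=
          hTc.subset_closure (subset_insert _ _) (insert_subset hycl subset_closure)
        have hyV : y ∈ V := by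
          by_contra hyV
          exact hyT (hins.subset_connectedComponentIn (mem_insert_of_mem _ hxT)
            (insert_subset hyV hTV) (mem_insert _ _))
        have := hmax (insert y T) hins (insert_subset (hVD hyV) hTD) ⟨y, mem_insert _ _, hyV⟩
        exact hx (this (mem_insert_of_mem _ hxT))
      obtain ⟨z, hzT, hzD⟩ := hne
      have hu : IsPreconnected (T ∪ D) := IsPreconnected.union z hzT hzD hTc hDc.isPreconnected
      exact hu.subset_connectedComponentIn (Or.inr hP) (union_subset hTV hDU) (Or.inl hxT)
    have : Vᶜ = connectedComponentIn Vᶜ P := hall.antisymm (connectedComponentIn_subset _ _)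
    rw [this]
    exact isPreconnected_connectedComponentIn
  refine ⟨Vᶜ, hUo, hDU, compl_subset_comm.1 hKV, ?_, ?_, ?_⟩
  · exact frontier_preconnected hUo hUc (by rwa [compl_compl])
  · rw [frontier_compl]
    intro x hx
    have hxV : x ∈ V := hVcl.frontier_subset hx
    have hxD : x ∉ D := hVD hxV
    rw [hD.frontier_eq]
    refine ⟨?_, hxD⟩
    by_contra hxcl
    obtain ⟨ε, hε, hb⟩ := Metric.isOpen_iff.1 isClosed_closure.isOpen_compl x hxcl
    have hbD : Metric.ball x ε ⊆ Dᶜ := fun z hz hzD => hb hz (subset_closure hzD)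
    have hbV : Metric.ball x ε ⊆ V := hmax _ (convex_ball x ε).isPreconnected hbD
      ⟨x, Metric.mem_ball_self hε, hxV⟩
    have : x ∈ interior V := mem_interior.2 ⟨_, hbV, Metric.isOpen_ball, Metric.mem_ball_self hε⟩
    exact hx.2 this
  · rw [nonempty_frontier_iff]
    exact ⟨⟨P, hDU hP⟩, fun h => (h ▸ mem_univ y0 : y0 ∈ Vᶜ) hy0V⟩

theorem eB_compl_connected (P : ℝ × ℝ) {a : ℝ} (ha : 0 ≤ a) : IsConnected (eB P a)ᶜ := by
  have : (eB P a)ᶜ = (fun z : ℝ × ℝ => (P.1 + z.1 * cos z.2, P.2 + z.1 * sin z.2)) ''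
      (Ioi a ×ˢ univ) := by
    ext x
    constructor
    · intro hx
      have hx' : a ^ 2 < (x.1 - P.1) ^ 2 + (x.2 - P.2) ^ 2 := not_le.1 hx
      let z : ℂ := ⟨x.1 - P.1, x.2 - P.2⟩
      have hz : ‖z‖ ^ 2 = (x.1 - P.1) ^ 2 + (x.2 - P.2) ^ 2 := by
        rw [Complex.sq_norm, Complex.normSq_apply]; simp [z]; ring
      refine ⟨(‖z‖, z.arg), ⟨?_, mem_univ _⟩, ?_⟩
      · exact lt_of_pow_lt_pow_left₀ 2 (norm_nonneg _) (by rw [hz]; exact hx')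
      · have h1 := Complex.norm_mul_cos_arg z
        have h2 := Complex.norm_mul_sin_arg z
        ext
        · simp only [h1]; simp [z]
        · simp only [h2]; simp [z]
    · rintro ⟨⟨r, t⟩, ⟨hr, -⟩, rfl⟩
      have hr' : a < r := hr
      change ¬ ((P.1 + r * cos t - P.1) ^ 2 + (P.2 + r * sin t - P.2) ^ 2 ≤ a ^ 2)
      have : (P.1 + r * cos t - P.1) ^ 2 + (P.2 + r * sin t - P.2) ^ 2 = r ^ 2 := by
        have := sin_sq_add_cos_sq t
        linear_combination r ^ 2 * this
      rw [this]
      nlinarith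
  rw [this]
  apply IsConnected.image
  · exact isConnected_Ioi.prod isConnected_univ
  · fun_prop

/-- The sublevel set `{ρ < t}`, the points whose lift to the graph has distance less than `t` from
the point of the graph above `P`. -/
def oB (u : ℝ × ℝ → ℝ) (P : ℝ × ℝ) (t : ℝ) : Set (ℝ × ℝ) := {x | rho2 u P x < t ^ 2}

/-- The component of `P` in `oB u P t`. -/
def comp (u : ℝ × ℝ → ℝ) (P : ℝ × ℝ) (t : ℝ) : Set (ℝ × ℝ) := connectedComponentIn (oB u P t) P

theorem oB_sub (u : ℝ × ℝ → ℝ) (P : ℝ × ℝ) (t : ℝ) : oB u P t ⊆ eB P t := by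
  intro x hx
  have hx' : rho2 u P x < t ^ 2 := hx
  change (x.1 - P.1) ^ 2 + (x.2 - P.2) ^ 2 ≤ t ^ 2
  unfold rho2 at hx'
  nlinarith [sq_nonneg (u x - u P)]

theorem rho2_self (u : ℝ × ℝ → ℝ) (P : ℝ × ℝ) : rho2 u P P = 0 := by
  unfold rho2; ring

theorem mem_oB_self (u : ℝ × ℝ → ℝ) (P : ℝ × ℝ) {t : ℝ} (ht : 0 < t) : P ∈ oB u P t := by
  change rho2 u P P < t ^ 2
  rw [rho2_self]; positivity

theorem mem_comp_self (u : ℝ × ℝ → ℝ) (P : ℝ × ℝ) {t : ℝ} (ht : 0 < t) : P ∈ comp u P t :=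
  mem_connectedComponentIn (mem_oB_self u P ht)

theorem comp_sub (u : ℝ × ℝ → ℝ) (P : ℝ × ℝ) (t : ℝ) : comp u P t ⊆ oB u P t :=
  connectedComponentIn_subset _ _

theorem comp_mono (u : ℝ × ℝ → ℝ) (P : ℝ × ℝ) {s t : ℝ} (hs : 0 ≤ s) (hst : s ≤ t) :
    comp u P s ⊆ comp u P t := by
  apply connectedComponentIn_mono
  intro x hx
  have hx' : rho2 u P x < s ^ 2 := hx
  change rho2 u P x < t ^ 2
  nlinarith

theorem Sol.exists_dom {H : ℝ} {Ω : Set (ℝ × ℝ)} {u : ℝ × ℝ → ℝ} (h : Sol H Ω u) {P : ℝ × ℝ}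
    {t : ℝ} (ht : 0 < t) (hP : eB P t ⊆ Ω) :
    ∃ U, IsOpen U ∧ comp u P t ⊆ U ∧ IsPreconnected (frontier U) ∧
      (frontier U).Nonempty ∧ (∀ x ∈ frontier U, rho2 u P x = t ^ 2) ∧ IsCompact (closure U) ∧
      closure U ⊆ Ω ∧ frontier U ⊆ closure (comp u P t) := by
  have hcont : ContinuousOn (rho2 u P) Ω := (h.cd_rho2 P).continuousOn
  have hSo : IsOpen (oB u P t) := by
    have : oB u P t = Ω ∩ rho2 u P ⁻¹' Iio (t ^ 2) := by
      ext x; constructor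
      · intro hx; exact ⟨hP (oB_sub u P t hx), hx⟩
      · intro hx; exact hx.2
    rw [this]
    exact hcont.isOpen_inter_preimage h.hΩ isOpen_Iio
  have hDo : IsOpen (comp u P t) := hSo.connectedComponentIn
  have hDc : IsConnected (comp u P t) :=
    isConnected_connectedComponentIn_iff.2 (mem_oB_self u P ht)
  have hK : IsCompact (eB P t) := eB_compact P ht.le
  obtain ⟨U, hUo, hDU, hUK, hfc, hfD, hne⟩ := exists_fill hDo hDc
    ((comp_sub u P t).trans (oB_sub u P t)) (eB_compl_connected P ht.le)
  have hcl : closure U ⊆ eB P t := closure_minimal hUK hK.isClosed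
  refine ⟨U, hUo, hDU, hfc, hne, ?_, hK.of_isClosed_subset isClosed_closure hcl, hcl.trans hP,
    hfD.trans frontier_subset_closure⟩
  intro x hx
  have hxΩ : x ∈ Ω := hP (hcl (frontier_subset_closure hx))
  have hxD := hfD hx
  have hxcl : x ∈ closure (comp u P t) := frontier_subset_closure hxD
  have hxn : x ∉ comp u P t := by rw [hDo.frontier_eq] at hxD; exact hxD.2
  have hca : ContinuousAt (rho2 u P) x := hcont.continuousAt (h.hΩ.mem_nhds hxΩ)
  apply le_antisymm
  · by_contra hlt
    push Not at hlt
    have : ∀ᶠ z in nhds x, t ^ 2 < rho2 u P z := hca.eventually (lt_mem_nhds hlt)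
    obtain ⟨z, hz, hzD⟩ := mem_closure_iff_nhds.1 hxcl _ this
    have h1 : rho2 u P z < t ^ 2 := comp_sub u P t hzD
    have h2 : t ^ 2 < rho2 u P z := hz
    linarith
  · by_contra hlt
    push Not at hlt
    have hins : IsPreconnected (insert x (comp u P t)) :=
      hDc.isPreconnected.subset_closure (subset_insert _ _) (insert_subset hxcl subset_closure)
    exact hxn (hins.subset_connectedComponentIn (mem_insert_of_mem _ (mem_comp_self u P ht))
      (insert_subset hlt (comp_sub u P t)) (mem_insert _ _))

/-! ### The Courant–Lebesgue lemma on the graph -/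

/-- The annulus `{r < ρ < 2r}` of the graph around the point above `P`. -/
def Ann (u : ℝ × ℝ → ℝ) (P : ℝ × ℝ) (r : ℝ) : Set (ℝ × ℝ) :=
  {x | r ^ 2 < rho2 u P x ∧ rho2 u P x < (2 * r) ^ 2}

theorem clm_det (A : ℝ × ℝ →L[ℝ] ℝ × ℝ) :
    A.det = (A (1, 0)).1 * (A (0, 1)).2 - (A (0, 1)).1 * (A (1, 0)).2 := by
  change LinearMap.det (A : ℝ × ℝ →ₗ[ℝ] ℝ × ℝ) = _
  rw [← LinearMap.det_toMatrix (Module.Basis.finTwoProd ℝ), Matrix.det_fin_two]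
  simp [LinearMap.toMatrix_apply]

theorem cl_alg {J V A B E r lam : ℝ} (hV : 0 ≤ V) (hr : 0 < r) (hl : 0 < lam)
    (hB : 0 ≤ B) (hA : A ≤ 4 * (2 * r) ^ 2) (hE : V * B ≤ E)
    (hJ : |J| ≤ V * (√A * √B)) : |J| ≤ 2 * r * (lam * V + lam⁻¹ * E) := by
  have h1 : √A ≤ 4 * r := by
    rw [Real.sqrt_le_left (by positivity)]; nlinarith
  have h2 : V * (√A * √B) ≤ 4 * r * (V * √B) := by
    have : 0 ≤ V * √B := by positivity
    nlinarith
  have h3 : 2 * (V * √B) ≤ lam * V + lam⁻¹ * E := by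
    have e : lam * V + lam⁻¹ * (V * B) - 2 * (V * √B) = V * lam⁻¹ * (lam - √B) ^ 2 := by
      have : √B ^ 2 = B := Real.sq_sqrt hB
      field_simp
      linear_combination -V * this
    have e2 : 0 ≤ V * lam⁻¹ * (lam - √B) ^ 2 := by positivity
    have e3 : lam⁻¹ * (V * B) ≤ lam⁻¹ * E := mul_le_mul_of_nonneg_left hE (by positivity)
    linarith
  nlinarith

namespace Sol

variable {H : ℝ} {Ω : Set (ℝ × ℝ)} {u : ℝ × ℝ → ℝ} (S : Sol H Ω u)
include S

omit S in
theorem _root_.Ann_sub {P : ℝ × ℝ} {r : ℝ} : Ann u P r ⊆ cB u P (2 * r) := fun _ hx => hx.2.le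

theorem Ann_meas {P : ℝ × ℝ} {r : ℝ} (hP : eB P (2 * r) ⊆ Ω) :
    MeasurableSet (Ann u P r) := by
  have : Ann u P r = Ω ∩ rho2 u P ⁻¹' Ioo (r ^ 2) ((2 * r) ^ 2) := by
    ext x
    constructor
    · intro hx
      exact ⟨hP (cB_sub u P _ (Ann_sub hx)), hx⟩
    · intro hx; exact hx.2
  rw [this]
  exact ((S.cd_rho2 P).continuousOn.isOpen_inter_preimage S.hΩ isOpen_Ioo).measurableSet

/-- Area of the image of the annulus under `(ρ², f)`, by the area formula. -/
theorem image_vol {P : ℝ × ℝ} {r κ : ℝ} (hr : 0 < r) (hκ : 0 < κ) (hP : eB P (4 * r) ⊆ Ω)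
    (hHr : H * (2 * r) ≤ 1) (hE : ∫ x in Ann u P r, E1 u x ≤ κ ^ 2) {f : ℝ × ℝ → ℝ}
    (hf : ContDiffOn ℝ 1 f Ω)
    (hQ : ∀ x ∈ Ω, Wgraph u x * Qf u x (pdx f x) (pdy f x) ≤ E1 u x) :
    volume ((fun x => (rho2 u P x, f x)) '' Ann u P r) ≤ ENNReal.ofReal (4098 * κ * r ^ 2) := by
  have hP2 : eB P (2 * r) ⊆ Ω := (eB_mono P (by positivity) (by linarith)).trans hP
  have hAm := S.Ann_meas hP2
  have hcc := S.cB_compact (P := P) (by positivity : 0 ≤ 2 * r) hP2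
  have hcΩ : cB u P (2 * r) ⊆ Ω := (cB_sub u P _).trans hP2
  have hAΩ : Ann u P r ⊆ Ω := Ann_sub.trans hcΩ
  have hiWc : IntegrableOn (Wgraph u) (cB u P (2 * r)) :=
    (S.cd_W.continuousOn.mono hcΩ).integrableOn_compact hcc
  have hiW : IntegrableOn (Wgraph u) (Ann u P r) := hiWc.mono_set Ann_sub
  have hiE : IntegrableOn (E1 u) (Ann u P r) :=
    ((S.co_E1.mono hcΩ).integrableOn_compact hcc).mono_set Ann_sub
  have hWle : ∫ x in Ann u P r, Wgraph u x ≤ 2048 * r ^ 2 := by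
    have h1 := S.area (P := P) (a := 2 * r) (by positivity) (by convert hP using 2; ring) hHr
    have h2 : ∫ x in Ann u P r, Wgraph u x ≤ ∫ x in cB u P (2 * r), Wgraph u x := by
      apply setIntegral_mono_set hiWc
      · exact Eventually.of_forall fun x => (W_pos u x).le
      · exact Ann_sub.eventuallyLE
    nlinarith
  refine (addHaar_image_le_lintegral_abs_det_fderiv volume hAm
    (f' := fun x => (fderiv ℝ (rho2 u P) x).prod (fderiv ℝ f x)) ?_).trans ?_
  · intro x hx
    have d1 := (S.hg_rho2 P (hAΩ hx)).differentiableAt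
    have d2 := (S.hg_of hf (hAΩ hx)).differentiableAt
    exact (d1.hasFDerivAt.prodMk d2.hasFDerivAt).hasFDerivWithinAt
  have hpt : ∀ x ∈ Ann u P r,
      ENNReal.ofReal |((fderiv ℝ (rho2 u P) x).prod (fderiv ℝ f x)).det|
        ≤ ENNReal.ofReal (2 * r * ((κ / r) * Wgraph u x + (κ / r)⁻¹ * E1 u x)) := by
    intro x hx
    apply ENNReal.ofReal_le_ofReal
    have hxΩ := hAΩ hx
    have hg := S.hg_rho2 P hxΩ
    have hj := jac_le u x (pdx (rho2 u P) x) (pdy (rho2 u P) x) (pdx f x) (pdy f x)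
    rw [clm_det]
    refine cl_alg (W_pos u x).le hr (div_pos hκ hr) (Qf_nonneg u x (pdx f x) (pdy f x))
      (A := Qf u x (pdx (rho2 u P) x) (pdy (rho2 u P) x)) ?_ (hQ x hxΩ) ?_
    · rw [hg.pdx_eq, hg.pdy_eq]
      have := Sol.Q_rho2_le u P x
      have := hx.2
      linarith
    · exact hj
  refine (setLIntegral_mono' hAm hpt).trans ?_
  have hintg : IntegrableOn (fun x => 2 * r * ((κ / r) * Wgraph u x + (κ / r)⁻¹ * E1 u x))
      (Ann u P r) := ((hiW.const_mul _).add (hiE.const_mul _)).const_mul _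
  rw [← ofReal_integral_eq_lintegral_ofReal hintg]
  · apply ENNReal.ofReal_le_ofReal
    rw [integral_const_mul, integral_add (hiW.const_mul _) (hiE.const_mul _), integral_const_mul,
      integral_const_mul]
    have h1 : κ / r * ∫ x in Ann u P r, Wgraph u x ≤ κ / r * (2048 * r ^ 2) :=
      mul_le_mul_of_nonneg_left hWle (by positivity)
    have h2 : (κ / r)⁻¹ * ∫ x in Ann u P r, E1 u x ≤ (κ / r)⁻¹ * κ ^ 2 :=
      mul_le_mul_of_nonneg_left hE (by positivity)
    have e1 : κ / r * (2048 * r ^ 2) = 2048 * κ * r := by field_simp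
    have e2 : (κ / r)⁻¹ * κ ^ 2 = κ * r := by field_simp
    rw [e1] at h1; rw [e2] at h2
    calc _ ≤ 2 * r * (2048 * κ * r + κ * r) := by
          apply mul_le_mul_of_nonneg_left (by linarith) (by positivity)
      _ = _ := by ring
  · refine Eventually.of_forall fun x => ?_
    have := W_pos u x
    have := E1_nonneg u x
    change 0 ≤ 2 * r * ((κ / r) * Wgraph u x + (κ / r)⁻¹ * E1 u x)
    positivity

/-- Courant–Lebesgue: functions of small energy on the annulus have small oscillation along the
connected subsets of some level set of `ρ`. -/
theorem courant {P : ℝ × ℝ} {r κ : ℝ} (hr : 0 < r) (hκ : 0 < κ) (hP : eB P (4 * r) ⊆ Ω)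
    (hHr : H * (2 * r) ≤ 1) (hE : ∫ x in Ann u P r, E1 u x ≤ κ ^ 2) {f : Fin 3 → ℝ × ℝ → ℝ}
    (hf : ∀ i, ContDiffOn ℝ 1 (f i) Ω)
    (hQ : ∀ i, ∀ x ∈ Ω, Wgraph u x * Qf u x (pdx (f i) x) (pdy (f i) x) ≤ E1 u x) :
    ∃ t, r < t ∧ t < 2 * r ∧ ∀ F : Set (ℝ × ℝ), IsPreconnected F →
      (∀ x ∈ F, rho2 u P x = t ^ 2) → ∀ i, ∀ x ∈ F, ∀ y ∈ F, |f i x - f i y| ≤ 5000 * κ := by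
  set T : Fin 3 → Set (ℝ × ℝ) := fun i =>
    toMeasurable volume ((fun x => (rho2 u P x, f i x)) '' Ann u P r) with hT
  have hTm : ∀ i, MeasurableSet (T i) := fun i => measurableSet_toMeasurable _ _
  have hTv : ∀ i, volume (T i) ≤ ENNReal.ofReal (4098 * κ * r ^ 2) := fun i => by
    simp only [hT]
    rw [measure_toMeasurable]
    exact S.image_vol hr hκ hP hHr hE (hf i) (hQ i)
  have hex : ∃ τ ∈ Ioo (r ^ 2) ((2 * r) ^ 2),
      ∑ i, volume (Prod.mk τ ⁻¹' T i) < ENNReal.ofReal (5000 * κ) := by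
    by_contra hcon
    push Not at hcon
    have h1 : ENNReal.ofReal (5000 * κ) * volume (Ioo (r ^ 2) ((2 * r) ^ 2))
        ≤ ∫⁻ τ in Ioo (r ^ 2) ((2 * r) ^ 2), ∑ i, volume (Prod.mk τ ⁻¹' T i) := by
      rw [← setLIntegral_const]
      exact setLIntegral_mono' measurableSet_Ioo hcon
    have h2 : ∫⁻ τ in Ioo (r ^ 2) ((2 * r) ^ 2), ∑ i, volume (Prod.mk τ ⁻¹' T i)
        ≤ ∑ i, volume (T i) := by
      refine (setLIntegral_le_lintegral _ _).trans ?_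
      rw [lintegral_finsetSum _ (fun i _ => measurable_measure_prodMk_left (hTm i))]
      apply Finset.sum_le_sum
      intro i _
      rw [Measure.volume_eq_prod, Measure.prod_apply (hTm i)]
    have h3 : ∑ i, volume (T i) ≤ ENNReal.ofReal (3 * (4098 * κ * r ^ 2)) := by
      refine (Finset.sum_le_sum fun i _ => hTv i).trans ?_
      rw [Finset.sum_const, Finset.card_univ, Fintype.card_fin, nsmul_eq_mul,
        ENNReal.ofReal_mul (p := 3) (by norm_num), ENNReal.ofReal_ofNat, Nat.cast_ofNat]
    have h4 := (h1.trans h2).trans h3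
    rw [Real.volume_Ioo, ← ENNReal.ofReal_mul (by positivity),
      ENNReal.ofReal_le_ofReal_iff (by positivity)] at h4
    have : 0 < κ * r ^ 2 := by positivity
    nlinarith
  obtain ⟨τ, ⟨hτ1, hτ2⟩, hτ⟩ := hex
  have hτ0 : 0 < τ := lt_trans (by positivity) hτ1
  have hsq : √τ ^ 2 = τ := Real.sq_sqrt hτ0.le
  refine ⟨√τ, ?_, ?_, ?_⟩
  · exact Real.lt_sqrt_of_sq_lt hτ1
  · rw [Real.sqrt_lt' (by positivity)]; exact hτ2
  intro F hF hFρ i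
  have hFΩ : F ⊆ Ann u P r := fun x hx => by
    have := hFρ x hx
    rw [hsq] at this
    change r ^ 2 < rho2 u P x ∧ rho2 u P x < (2 * r) ^ 2
    rw [this]; exact ⟨hτ1, hτ2⟩
  have hP2 : eB P (2 * r) ⊆ Ω := (eB_mono P (by positivity) (by linarith)).trans hP
  have hFO : F ⊆ Ω := hFΩ.trans (Ann_sub.trans ((cB_sub u P _).trans hP2))
  have hord := (hF.image (f i) ((hf i).continuousOn.mono hFO)).ordConnected
  have hsl : volume (Prod.mk τ ⁻¹' T i) < ENNReal.ofReal (5000 * κ) :=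
    lt_of_le_of_lt (Finset.single_le_sum (f := fun i => volume (Prod.mk τ ⁻¹' T i))
      (fun _ _ => zero_le) (Finset.mem_univ i)) hτ
  have key : ∀ x ∈ F, ∀ y ∈ F, f i y - f i x ≤ 5000 * κ := by
    intro x hx y hy
    by_contra hlt
    push Not at hlt
    have hsub : Icc (f i x) (f i y) ⊆ Prod.mk τ ⁻¹' T i := by
      intro v hv
      obtain ⟨z, hz, rfl⟩ := hord.out ⟨x, hx, rfl⟩ ⟨y, hy, rfl⟩ hv
      apply subset_toMeasurable
      refine ⟨z, hFΩ hz, ?_⟩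
      have := hFρ z hz
      rw [hsq] at this
      simp [this]
    have := (measure_mono hsub).trans hsl.le
    rw [Real.volume_Icc, ENNReal.ofReal_le_ofReal_iff (by positivity)] at this
    linarith
  intro x hx y hy
  rw [abs_le]
  constructor
  · linarith [key x hx y hy]
  · exact key y hy x hx

end Sol

/-! ### Modulus of continuity of the normal and Harnack inequality -/

/-- Scalar product of the unit normals at two points. -/
def nn (u : ℝ × ℝ → ℝ) (x y : ℝ × ℝ) : ℝ := X1 u x * X1 u y + X2 u x * X2 u y + wv u x * wv u y

namespace Sol

variable {H : ℝ} {Ω : Set (ℝ × ℝ)} {u : ℝ × ℝ → ℝ} (S : Sol H Ω u)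
include S

theorem E_X1 {x : ℝ × ℝ} (hx : x ∈ Ω) :
    Wgraph u x * Qf u x (pdx (X1 u) x) (pdy (X1 u) x) ≤ E1 u x := by
  have hg := S.hgX1 hx
  have h := W_Q_comb_le u x (wv u x * (1 - X1 u x ^ 2)) (-(wv u x * (X1 u x * X2 u x))) (by
    have h1 := X_sq u x
    have h3 : (wv u x) ^ 2 * ((1 - X1 u x ^ 2) ^ 2 + X1 u x ^ 2 * X2 u x ^ 2) ≤ wv u x ^ 2 * 1 := by
      apply mul_le_mul_of_nonneg_left _ (sq_nonneg _)
      nlinarith [sq_nonneg (X1 u x), sq_nonneg (X1 u x * wv u x)]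
    nlinarith)
  rw [hg.pdx_eq, hg.pdy_eq]
  convert h using 3 <;> ring

theorem E_X2 {x : ℝ × ℝ} (hx : x ∈ Ω) :
    Wgraph u x * Qf u x (pdx (X2 u) x) (pdy (X2 u) x) ≤ E1 u x := by
  have hg := S.hgX2 hx
  have h := W_Q_comb_le u x (-(wv u x * (X1 u x * X2 u x))) (wv u x * (1 - X2 u x ^ 2)) (by
    have h1 := X_sq u x
    have h3 : (wv u x) ^ 2 * ((1 - X2 u x ^ 2) ^ 2 + X1 u x ^ 2 * X2 u x ^ 2) ≤ wv u x ^ 2 * 1 := by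
      apply mul_le_mul_of_nonneg_left _ (sq_nonneg _)
      nlinarith [sq_nonneg (X2 u x), sq_nonneg (X2 u x * wv u x)]
    nlinarith)
  rw [hg.pdx_eq, hg.pdy_eq]
  convert h using 3 <;> ring

theorem E_w {x : ℝ × ℝ} (hx : x ∈ Ω) :
    Wgraph u x * Qf u x (pdx (wv u) x) (pdy (wv u) x) ≤ E1 u x := by
  have hg := S.hgw hx
  have h := W_Q_comb_le u x (-(wv u x ^ 2 * X1 u x)) (-(wv u x ^ 2 * X2 u x)) (by
    have h1 := X_sq u x
    have h2 := wv_pos u x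
    have h4 := wv_le_one u x
    have h5 : wv u x ^ 2 ≤ 1 := by nlinarith
    have h3 : (wv u x) ^ 2 * (wv u x ^ 2 * (X1 u x ^ 2 + X2 u x ^ 2)) ≤ wv u x ^ 2 * 1 := by
      apply mul_le_mul_of_nonneg_left _ (sq_nonneg _)
      rw [h1]
      nlinarith [sq_nonneg (wv u x)]
    nlinarith)
  rw [hg.pdx_eq, hg.pdy_eq]
  convert h using 3 <;> ring

theorem cd_logW : ContDiffOn ℝ 1 (fun x => Real.log (Wgraph u x)) Ω :=
  S.cd_W.log fun x _ => (W_pos u x).ne'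

theorem E_logW {x : ℝ × ℝ} (hx : x ∈ Ω) :
    Wgraph u x * Qf u x (pdx (fun x => Real.log (Wgraph u x)) x)
      (pdy (fun x => Real.log (Wgraph u x)) x) ≤ E1 u x := by
  have hg := HG.comp (Real.hasDerivAt_log (W_pos u x).ne') (S.hgW hx)
  have h := W_Q_comb_le u x (wv u x * X1 u x) (wv u x * X2 u x) (by
    have h1 := X_sq u x
    have h3 : (wv u x) ^ 2 * (X1 u x ^ 2 + X2 u x ^ 2) ≤ wv u x ^ 2 * 1 := by
      apply mul_le_mul_of_nonneg_left _ (sq_nonneg _)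
      rw [h1]
      nlinarith [sq_nonneg (wv u x)]
    nlinarith)
  rw [hg.pdx_eq, hg.pdy_eq]
  have e : (Wgraph u x)⁻¹ = wv u x := by unfold wv; rw [one_div]
  rw [e]
  convert h using 3 <;> ring

/-- Among `K` disjoint dyadic annuli one carries at most the fraction `1 / K` of the energy, whose
total is bounded by `energy_ball`. -/
theorem exists_annulus {P : ℝ × ℝ} {b : ℝ} (hb : 0 < b) (hP : eB P (2 * b) ⊆ Ω) (hHb : H * b ≤ 1)
    {K : ℕ} (hK : 0 < K) :
    ∃ k < K, ∫ x in Ann u P (b / 2 ^ (k + 2)), E1 u x ≤ 131072 / K := by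
  by_contra hcon
  push Not at hcon
  have hP1 : eB P b ⊆ Ω := (eB_mono P hb.le (by linarith)).trans hP
  have hP2 : eB P (b / 2) ⊆ Ω := (eB_mono P (by positivity) (by linarith)).trans hP
  have hcc := S.cB_compact (P := P) (by positivity : 0 ≤ b / 2) hP2
  have hcΩ : cB u P (b / 2) ⊆ Ω := (cB_sub u P _).trans hP2
  have hiE : IntegrableOn (E1 u) (cB u P (b / 2)) := (S.co_E1.mono hcΩ).integrableOn_compact hcc
  have hr : ∀ k : ℕ, 2 * (b / 2 ^ (k + 2)) ≤ b / 2 := fun k => by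
    have : (1 : ℝ) ≤ 2 ^ k := one_le_pow₀ (by norm_num)
    rw [pow_add]
    rw [mul_div_assoc', div_le_div_iff₀ (by positivity) (by norm_num)]
    nlinarith
  have hsub : ∀ k, Ann u P (b / 2 ^ (k + 2)) ⊆ cB u P (b / 2) := fun k =>
    Ann_sub.trans (cB_mono u P (by positivity) (hr k))
  have hm : ∀ k, MeasurableSet (Ann u P (b / 2 ^ (k + 2))) := fun k =>
    S.Ann_meas ((eB_mono P (by positivity) (hr k)).trans hP2)
  have hlt : ∀ i j : ℕ, i < j → Disjoint (Ann u P (b / 2 ^ (i + 2))) (Ann u P (b / 2 ^ (j + 2))) := by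
    intro i j hij
    rw [Set.disjoint_left]
    intro x hx hx'
    have h1 := hx.1
    have h2 := hx'.2
    have h3 : 2 * (b / 2 ^ (j + 2)) ≤ b / 2 ^ (i + 2) := by
      obtain ⟨m, rfl⟩ : ∃ m, j = i + 1 + m := ⟨j - (i + 1), by omega⟩
      have : (1 : ℝ) ≤ 2 ^ m := one_le_pow₀ (by norm_num)
      have e : (2 : ℝ) ^ (i + 1 + m + 2) = 2 * 2 ^ m * 2 ^ (i + 2) := by ring
      rw [e, mul_div_assoc', div_le_div_iff₀ (by positivity) (by positivity)]
      have : 0 < b * 2 ^ (i + 2) := by positivity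
      nlinarith
    have h4 : 0 ≤ 2 * (b / 2 ^ (j + 2)) := by positivity
    nlinarith
  have hd : Pairwise (Function.onFun Disjoint fun k : ℕ => Ann u P (b / 2 ^ (k + 2))) := by
    intro i j hij
    rcases lt_or_gt_of_ne hij with h | h
    · exact hlt i j h
    · exact (hlt j i h).symm
  have hsum := integral_biUnion_finset (μ := volume) (f := E1 u) (Finset.range K)
    (s := fun k => Ann u P (b / 2 ^ (k + 2))) (fun k _ => hm k) (hd.set_pairwise _)
    (fun k _ => hiE.mono_set (hsub k))
  have h1 : ∫ x in ⋃ k ∈ Finset.range K, Ann u P (b / 2 ^ (k + 2)), E1 u x ≤ 131072 := by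
    refine le_trans ?_ (S.energy_ball hb hP hHb)
    apply setIntegral_mono_set hiE
    · exact Eventually.of_forall fun x => E1_nonneg u x
    · exact (iUnion₂_subset fun k _ => hsub k).eventuallyLE
  have h2 : ∑ k ∈ Finset.range K, (131072 / K : ℝ)
      < ∑ k ∈ Finset.range K, ∫ x in Ann u P (b / 2 ^ (k + 2)), E1 u x :=
    Finset.sum_lt_sum_of_nonempty ⟨0, Finset.mem_range.2 hK⟩
      fun k hk => hcon k (Finset.mem_range.1 hk)
  rw [Finset.sum_const, Finset.card_range, nsmul_eq_mul] at h2
  have hK' : (K : ℝ) ≠ 0 := by positivity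
  have h3 : (K : ℝ) * (131072 / K) = 131072 := by field_simp
  linarith

end Sol

/-- A scale at which the energy is as small as desired, bounded below in terms of `H`, `a`, `κ`. -/
theorem exists_scale (H a κ : ℝ) (hH : 0 < H) (ha : 0 < a) (hκ : 0 < κ) :
    ∃ δ > 0, ∀ (Ω : Set (ℝ × ℝ)) (u : ℝ × ℝ → ℝ) (P : ℝ × ℝ), Sol H Ω u → eB P a ⊆ Ω →
      ∃ r, δ ≤ r ∧ 4 * r ≤ a ∧ H * (2 * r) ≤ 1 ∧ ∫ x in Ann u P r, E1 u x ≤ κ ^ 2 := by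
  obtain ⟨K, hK⟩ := exists_nat_gt (131072 / κ ^ 2)
  have hK0 : (0 : ℝ) < K := lt_trans (by positivity) hK
  have hKpos : 0 < K := by exact_mod_cast hK0
  set b := min (a / 2) (1 / H) with hb
  have hb0 : 0 < b := by rw [hb]; positivity
  have hb1 : b ≤ a / 2 := min_le_left _ _
  have hb2 : H * b ≤ 1 := by
    calc H * b ≤ H * (1 / H) := mul_le_mul_of_nonneg_left (min_le_right _ _) hH.le
      _ = 1 := by field_simp
  refine ⟨b / 2 ^ (K + 2), by positivity, ?_⟩
  intro Ω u P S hP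
  obtain ⟨k, hk, hE⟩ := S.exists_annulus hb0 ((eB_mono P (by positivity) (by linarith)).trans hP)
    hb2 hKpos
  have hr : b / 2 ^ (k + 2) ≤ b / 4 := by
    apply div_le_div_of_nonneg_left hb0.le (by norm_num)
    have : (1 : ℝ) ≤ 2 ^ k := one_le_pow₀ (by norm_num)
    rw [pow_add]; nlinarith
  refine ⟨_, ?_, ?_, ?_, hE.trans ?_⟩
  · apply div_le_div_of_nonneg_left hb0.le (by positivity)
    exact pow_le_pow_right₀ (by norm_num) (by omega)
  · linarith
  · have : H * (2 * (b / 2 ^ (k + 2))) ≤ H * b := mul_le_mul_of_nonneg_left (by linarith) hH.le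
    linarith
  · rw [div_le_iff₀ hK0]
    rw [div_lt_iff₀ (by positivity)] at hK
    nlinarith

theorem nn_self (u : ℝ × ℝ → ℝ) (x : ℝ × ℝ) : nn u x x = 1 := by
  have := X_sq u x
  unfold nn; nlinarith

theorem nn_le_one (u : ℝ × ℝ → ℝ) (x y : ℝ × ℝ) : nn u x y ≤ 1 := by
  have hxx := X_sq u x
  have hyy := X_sq u y
  unfold nn
  nlinarith [sq_nonneg (X1 u x - X1 u y), sq_nonneg (X2 u x - X2 u y),
    sq_nonneg (wv u x - wv u y)]

theorem half_le_nn {u : ℝ × ℝ → ℝ} {x y : ℝ × ℝ} (m1 : |X1 u x - X1 u y| ≤ 1 / 4)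
    (m2 : |X2 u x - X2 u y| ≤ 1 / 4) (m3 : |wv u x - wv u y| ≤ 1 / 4) : 1 / 2 ≤ nn u x y := by
  have q1 := sq_le_sq' (abs_le.1 m1).1 (abs_le.1 m1).2
  have q2 := sq_le_sq' (abs_le.1 m2).1 (abs_le.1 m2).2
  have q3 := sq_le_sq' (abs_le.1 m3).1 (abs_le.1 m3).2
  have hxx := X_sq u x
  have hyy := X_sq u y
  unfold nn; nlinarith

/-- If a unit vector is close to `c'` in every component, a vector `c` with `c'·c` positive
compared to the length of `c` has positive product with it. -/
theorem dot_pos {a₁ a₂ a₃ c₁ c₂ c₃ d₁ d₂ d₃ m s ω : ℝ} (h1 : |a₁ - d₁| ≤ ω)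
    (h2 : |a₂ - d₂| ≤ ω) (h3 : |a₃ - d₃| ≤ ω) (hc : c₁ ^ 2 + c₂ ^ 2 + c₃ ^ 2 ≤ s)
    (hm : m = d₁ * c₁ + d₂ * c₂ + d₃ * c₃) (hm0 : 0 < m) (hms : 3 * ω ^ 2 * s < m ^ 2) :
    0 < a₁ * c₁ + a₂ * c₂ + a₃ * c₃ := by
  set e := (a₁ - d₁) * c₁ + (a₂ - d₂) * c₂ + (a₃ - d₃) * c₃ with he
  have q1 : (a₁ - d₁) ^ 2 ≤ ω ^ 2 := sq_le_sq' (by linarith [abs_le.1 h1]) (abs_le.1 h1).2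
  have q2 : (a₂ - d₂) ^ 2 ≤ ω ^ 2 := sq_le_sq' (by linarith [abs_le.1 h2]) (abs_le.1 h2).2
  have q3 : (a₃ - d₃) ^ 2 ≤ ω ^ 2 := sq_le_sq' (by linarith [abs_le.1 h3]) (abs_le.1 h3).2
  have cs : e ^ 2 ≤ ((a₁ - d₁) ^ 2 + (a₂ - d₂) ^ 2 + (a₃ - d₃) ^ 2) *
      (c₁ ^ 2 + c₂ ^ 2 + c₃ ^ 2) := by
    rw [he]
    nlinarith [sq_nonneg ((a₁ - d₁) * c₂ - (a₂ - d₂) * c₁),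
      sq_nonneg ((a₁ - d₁) * c₃ - (a₃ - d₃) * c₁), sq_nonneg ((a₂ - d₂) * c₃ - (a₃ - d₃) * c₂)]
  have h5 : e ^ 2 ≤ 3 * ω ^ 2 * s := cs.trans
    (mul_le_mul (by linarith) hc (by positivity) (by positivity))
  have h6 : |e| < m := abs_lt_of_sq_lt_sq (by linarith) hm0.le
  have h7 : a₁ * c₁ + a₂ * c₂ + a₃ * c₃ = m + e := by rw [hm, he]; ring
  rw [h7]
  linarith [(abs_lt.1 h6).1]

namespace Sol

variable {H : ℝ} {Ω : Set (ℝ × ℝ)} {u : ℝ × ℝ → ℝ} (S : Sol H Ω u)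
include S

/-- Positivity of a component of the normal propagates from the frontier to the inside. -/
theorem normal_pos {D : Set (ℝ × ℝ)} (hDo : IsOpen D) (hDc : IsCompact (closure D))
    (hDΩ : closure D ⊆ Ω) (hne : (frontier D).Nonempty) (c₁ c₂ c₃ : ℝ)
    (hfr : ∀ x ∈ frontier D, 0 < X1 u x * c₁ + X2 u x * c₂ + wv u x * c₃) :
    ∀ x ∈ D, 0 < X1 u x * c₁ + X2 u x * c₂ + wv u x * c₃ := by
  have hW : ∀ x, Wgraph u x * (X1 u x * c₁ + X2 u x * c₂ + wv u x * c₃)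
      = c₁ * pdx u x + c₂ * pdy u x + c₃ := by
    intro x
    have h1 := p_eq u x
    have h2 := q_eq u x
    have h3 := W_mul_wv u x
    rw [h1, h2]
    linear_combination c₃ * h3
  have hfc : IsCompact (frontier D) :=
    hDc.of_isClosed_subset isClosed_frontier frontier_subset_closure
  have hco : ContinuousOn (fun x => c₁ * pdx u x + c₂ * pdy u x + c₃) (frontier D) := by
    have h1 := S.cd_p.continuousOn
    have h2 := S.cd_q.continuousOn
    exact ((((continuousOn_const.mul h1).add (continuousOn_const.mul h2)).add
      continuousOn_const)).mono (frontier_subset_closure.trans hDΩ)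
  obtain ⟨y, hy, hmin⟩ := hfc.exists_isMinOn hne hco
  set m := c₁ * pdx u y + c₂ * pdy u y + c₃ with hm
  have hm0 : 0 < m := by
    rw [hm, ← hW]
    exact mul_pos (W_pos u y) (hfr y hy)
  intro x hx
  have := S.max_principle hDo hDc hDΩ c₁ c₂ c₃ (m / 2) (fun z hz => by
    have : m ≤ c₁ * pdx u z + c₂ * pdy u z + c₃ := hmin hz
    linarith) x hx
  rw [← hW] at this
  exact (mul_pos_iff_of_pos_left (W_pos u x)).1 (by linarith)

/-- If the normal varies little along the frontier of `D`, it varies little in `D`. -/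
theorem normal_close {D : Set (ℝ × ℝ)} (hDo : IsOpen D) (hDc : IsCompact (closure D))
    (hDΩ : closure D ⊆ Ω) {y : ℝ × ℝ} (hy : y ∈ frontier D) {ω : ℝ} (hω : 0 < ω) (hω1 : ω ≤ 1 / 2)
    (h1 : ∀ x ∈ frontier D, |X1 u x - X1 u y| ≤ ω) (h2 : ∀ x ∈ frontier D, |X2 u x - X2 u y| ≤ ω)
    (h3 : ∀ x ∈ frontier D, |wv u x - wv u y| ≤ ω) :
    ∀ x ∈ D, (X1 u x - X1 u y) ^ 2 + (X2 u x - X2 u y) ^ 2 + (wv u x - wv u y) ^ 2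
      ≤ 6 * ω ^ 2 := by
  intro x hx
  have hxx := X_sq u x
  have hyy := X_sq u y
  set α := nn u x y with hα
  have hα0 : 0 < α := by
    refine S.normal_pos hDo hDc hDΩ ⟨y, hy⟩ (X1 u y) (X2 u y) (wv u y) ?_ x hx
    intro z hz
    refine dot_pos (h1 z hz) (h2 z hz) (h3 z hz) (s := 1) (by linarith) (m := 1)
      (by nlinarith) one_pos ?_
    nlinarith
  have hα1 : α ≤ 1 := by
    rw [hα]; unfold nn
    nlinarith [sq_nonneg (X1 u x - X1 u y), sq_nonneg (X2 u x - X2 u y),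
      sq_nonneg (wv u x - wv u y)]
  have key : 1 - α ^ 2 ≤ 3 * ω ^ 2 := by
    by_contra hlt
    push Not at hlt
    have hpos : 0 < 1 - α ^ 2 := lt_of_le_of_lt (by positivity) hlt
    have := S.normal_pos hDo hDc hDΩ ⟨y, hy⟩ (X1 u y - α * X1 u x) (X2 u y - α * X2 u x)
      (wv u y - α * wv u x) (fun z hz => by
        refine dot_pos (h1 z hz) (h2 z hz) (h3 z hz) (s := 1 - α ^ 2) ?_
          (m := 1 - α ^ 2) ?_ hpos ?_
        · rw [hα]; unfold nn; apply le_of_eq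
          linear_combination hyy + (X1 u x * X1 u y + X2 u x * X2 u y + wv u x * wv u y) ^ 2 * hxx
        · have : α = X1 u x * X1 u y + X2 u x * X2 u y + wv u x * wv u y := hα
          linear_combination -hyy - α * this
        · nlinarith) x hx
    have hz : X1 u x * (X1 u y - α * X1 u x) + X2 u x * (X2 u y - α * X2 u x)
        + wv u x * (wv u y - α * wv u x) = 0 := by
      have : α = X1 u x * X1 u y + X2 u x * X2 u y + wv u x * wv u y := hα
      linear_combination -this - α * hxx
    linarith
  have e : (X1 u x - X1 u y) ^ 2 + (X2 u x - X2 u y) ^ 2 + (wv u x - wv u y) ^ 2 = 2 - 2 * α := by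
    have : α = X1 u x * X1 u y + X2 u x * X2 u y + wv u x * wv u y := hα
    linear_combination hxx + hyy + 2 * this
  rw [e]
  nlinarith

end Sol

theorem close_alg {a b c ω : ℝ} (hω : 0 < ω) (h1 : (a - c) ^ 2 ≤ 6 * ω ^ 2)
    (h2 : (b - c) ^ 2 ≤ 6 * ω ^ 2) : |a - b| ≤ 5 * ω := by
  apply abs_le_of_sq_le_sq _ (by positivity)
  nlinarith [sq_nonneg (a - c + (b - c))]

/-- Uniform modulus of continuity of the normal along the graph. -/
theorem normal_modulus (H a ε : ℝ) (hH : 0 < H) (ha : 0 < a) (hε : 0 < ε) :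
    ∃ δ > 0, ∀ (Ω : Set (ℝ × ℝ)) (u : ℝ × ℝ → ℝ) (P : ℝ × ℝ), Sol H Ω u → eB P a ⊆ Ω →
      ∀ x ∈ comp u P δ, |X1 u x - X1 u P| ≤ ε ∧ |X2 u x - X2 u P| ≤ ε ∧ |wv u x - wv u P| ≤ ε := by
  set κ := min (ε / 25000) (1 / 10000) with hκ
  have hκ0 : 0 < κ := by rw [hκ]; positivity
  have hκ1 : κ ≤ ε / 25000 := min_le_left _ _
  have hκ2 : κ ≤ 1 / 10000 := min_le_right _ _
  obtain ⟨δ, hδ, hsc⟩ := exists_scale H a κ hH ha hκ0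
  refine ⟨δ, hδ, ?_⟩
  intro Ω u P S hP x hx
  obtain ⟨r, hδr, h4r, hHr, hE⟩ := hsc Ω u P S hP
  have hr : 0 < r := by linarith
  have hP4 : eB P (4 * r) ⊆ Ω := (eB_mono P (by positivity) h4r).trans hP
  obtain ⟨t, hrt, ht2, hosc⟩ := S.courant hr hκ0 hP4 hHr hE (f := ![X1 u, X2 u, wv u])
    (fun i => by
      fin_cases i
      · exact S.cd_X1
      · exact S.cd_X2
      · exact S.cd_w)
    (fun i y hy => by
      fin_cases i
      · exact S.E_X1 hy
      · exact S.E_X2 hy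
      · exact S.E_w hy)
  have ht : 0 < t := by linarith
  obtain ⟨U, hUo, hDU, hfc, ⟨y, hy⟩, hfρ, hUc, hUΩ, -⟩ := S.exists_dom (P := P) ht
    ((eB_mono P ht.le (by linarith)).trans hP)
  have hcl := S.normal_close hUo hUc hUΩ hy (ω := 5000 * κ) (by positivity) (by linarith)
    (fun z hz => hosc _ hfc hfρ 0 z hz y hy) (fun z hz => hosc _ hfc hfρ 1 z hz y hy)
    (fun z hz => hosc _ hfc hfρ 2 z hz y hy)
  have hxU : x ∈ U := hDU (comp_mono u P hδ.le (by linarith) hx)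
  have hPU : P ∈ U := hDU (mem_comp_self u P ht)
  have c1 := hcl x hxU
  have c2 := hcl P hPU
  have hω : 0 < 5000 * κ := by positivity
  refine ⟨?_, ?_, ?_⟩
  · refine (close_alg (c := X1 u y) hω ?_ ?_).trans (by linarith)
    · nlinarith [sq_nonneg (X2 u x - X2 u y), sq_nonneg (wv u x - wv u y)]
    · nlinarith [sq_nonneg (X2 u P - X2 u y), sq_nonneg (wv u P - wv u y)]
  · refine (close_alg (c := X2 u y) hω ?_ ?_).trans (by linarith)
    · nlinarith [sq_nonneg (X1 u x - X1 u y), sq_nonneg (wv u x - wv u y)]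
    · nlinarith [sq_nonneg (X1 u P - X1 u y), sq_nonneg (wv u P - wv u y)]
  · refine (close_alg (c := wv u y) hω ?_ ?_).trans (by linarith)
    · nlinarith [sq_nonneg (X1 u x - X1 u y), sq_nonneg (X2 u x - X2 u y)]
    · nlinarith [sq_nonneg (X1 u P - X1 u y), sq_nonneg (X2 u P - X2 u y)]

theorem closure_comp_sub (u : ℝ × ℝ → ℝ) (P : ℝ × ℝ) {t t' : ℝ} (ht : 0 < t) (htt : t < t')
    {y : ℝ × ℝ} (hy : y ∈ closure (comp u P t)) (hρ : rho2 u P y = t ^ 2) : y ∈ comp u P t' := by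
  have hins : IsPreconnected (insert y (comp u P t)) :=
    (isPreconnected_connectedComponentIn).subset_closure (subset_insert _ _)
      (insert_subset hy subset_closure)
  refine hins.subset_connectedComponentIn (mem_insert_of_mem _ (mem_comp_self u P ht))
    (insert_subset ?_ ?_) (mem_insert _ _)
  · change rho2 u P y < t' ^ 2
    rw [hρ]; nlinarith
  · exact (comp_mono u P ht.le htt.le).trans (comp_sub u P t')

set_option maxHeartbeats 1000000 in
/-- Harnack inequality for the vertical component of the normal. -/
theorem harnack (H a : ℝ) (hH : 0 < H) (ha : 0 < a) :
    ∃ δ > 0, ∃ C > 0, ∀ (Ω : Set (ℝ × ℝ)) (u : ℝ × ℝ → ℝ) (P : ℝ × ℝ), Sol H Ω u → eB P a ⊆ Ω →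
      ∀ x ∈ comp u P δ, wv u x ≤ C * wv u P := by
  obtain ⟨δ₀, hδ₀, hmod⟩ := normal_modulus H a (1 / 4) hH ha (by norm_num)
  set r := min (δ₀ / 2) (min (a / 8) (1 / (8 * H))) with hr
  have hr0 : 0 < r := by rw [hr]; positivity
  have hr1 : 2 * r ≤ δ₀ := by linarith [min_le_left (δ₀ / 2) (min (a / 8) (1 / (8 * H)))]
  have hr2 : 8 * r ≤ a := by
    have : r ≤ a / 8 := (min_le_right _ _).trans (min_le_left _ _)
    linarith
  have hr3 : H * (8 * r) ≤ 1 := by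
    have h1 : r ≤ 1 / (8 * H) := (min_le_right _ _).trans (min_le_right _ _)
    rw [le_div_iff₀ (by positivity)] at h1
    linarith
  set L := 5000 * √131072 with hL
  refine ⟨r, hr0, 12 * Real.exp (2 * L), by positivity, ?_⟩
  intro Ω u P S hP x hx
  have hP8 : eB P (8 * r) ⊆ Ω := (eB_mono P (by positivity) hr2).trans hP
  have hP4 : eB P (4 * r) ⊆ Ω := (eB_mono P (by positivity) (by linarith)).trans hP
  have hP2 : eB P (2 * r) ⊆ Ω := (eB_mono P (by positivity) (by linarith)).trans hP
  have hHr : 0 < H * r := by positivity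
  have hE : ∫ x in Ann u P r, E1 u x ≤ √131072 ^ 2 := by
    rw [Real.sq_sqrt (by norm_num)]
    have h1 := S.energy_ball (P := P) (a := 4 * r) (by positivity)
      (by convert hP8 using 2; ring) (by linarith)
    have e : 4 * r / 2 = 2 * r := by ring
    rw [e] at h1
    refine le_trans ?_ h1
    have hcc := S.cB_compact (P := P) (by positivity : 0 ≤ 2 * r) hP2
    apply setIntegral_mono_set
      ((S.co_E1.mono ((cB_sub u P _).trans hP2)).integrableOn_compact hcc)
    · exact Eventually.of_forall fun x => E1_nonneg u x
    · exact Ann_sub.eventuallyLE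
  obtain ⟨t, hrt, ht2, hosc⟩ := S.courant hr0 (by positivity) hP4 (by linarith) hE
    (f := fun _ x => Real.log (Wgraph u x)) (fun _ => S.cd_logW) (fun _ y hy => S.E_logW hy)
  have ht : 0 < t := by linarith
  obtain ⟨U, hUo, hDU, hfc, ⟨y, hy⟩, hfρ, hUc, hUΩ, hfcl⟩ := S.exists_dom (P := P) ht
    ((eB_mono P ht.le (by linarith)).trans hP)
  have hxU : x ∈ U := hDU (comp_mono u P hr0.le (by linarith) hx)
  have hPU : P ∈ U := hDU (mem_comp_self u P ht)
  -- the values of `W` on the frontier are comparable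
  have hWle : ∀ z ∈ frontier U, ∀ z' ∈ frontier U, Wgraph u z ≤ Real.exp L * Wgraph u z' := by
    intro z hz z' hz'
    have := (abs_le.1 (hosc _ hfc hfρ 0 z hz z' hz')).2
    rw [← Real.log_le_log_iff (W_pos u z) (by have := W_pos u z'; positivity),
      Real.log_mul (Real.exp_pos L).ne' (W_pos u z').ne', Real.log_exp]
    linarith
  set V := Wgraph u y with hV
  have hV1 : 1 ≤ V := one_le_W u y
  have heL : 1 ≤ Real.exp L := Real.one_le_exp (by positivity)
  -- upper bound for `W P`
  have hup : Wgraph u P ≤ 3 * (Real.exp L * V) := by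
    set M := Real.exp L * V with hM
    have hM1 : 1 ≤ M := by nlinarith
    have hsq := W_sq u P
    by_cases hg : pdx u P ^ 2 + pdy u P ^ 2 = 0
    · have h1 := W_pos u P
      have : Wgraph u P ^ 2 = 1 := by linarith
      nlinarith
    have hg0 : 0 < pdx u P ^ 2 + pdy u P ^ 2 := lt_of_le_of_ne (by positivity) (Ne.symm hg)
    set g := √(pdx u P ^ 2 + pdy u P ^ 2) with hgd
    have hgp : 0 < g := Real.sqrt_pos.2 hg0
    have hg2 : g ^ 2 = pdx u P ^ 2 + pdy u P ^ 2 := Real.sq_sqrt hg0.le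
    have := S.max_principle hUo hUc hUΩ (-pdx u P) (-pdy u P) 0 (-(2 * g * M)) (fun z hz => by
      have h1 : Wgraph u z ≤ M := hWle z hz y hy
      have h2 := W_sq u z
      have h3 := W_pos u z
      have cs : (pdx u P * pdx u z + pdy u P * pdy u z) ^ 2 ≤ (g * M) ^ 2 := by
        have e1 : (pdx u P * pdx u z + pdy u P * pdy u z) ^ 2
            ≤ (pdx u P ^ 2 + pdy u P ^ 2) * (pdx u z ^ 2 + pdy u z ^ 2) := by
          nlinarith [sq_nonneg (pdx u P * pdy u z - pdy u P * pdx u z)]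
        rw [mul_pow, hg2]
        refine e1.trans (mul_le_mul_of_nonneg_left ?_ hg0.le)
        nlinarith
      have h4 := (abs_le.1 (abs_le_of_sq_le_sq cs (by positivity))).2
      have h5 : 0 < g * M := by positivity
      linarith) P hPU
    have h1 : g * g ≤ g * (2 * M) := by nlinarith
    have h2 : g ≤ 2 * M := le_of_mul_le_mul_left h1 hgp
    have h3 := W_pos u P
    apply le_of_sq_le_sq _ (by positivity)
    rw [hsq]; nlinarith
  -- lower bound for `W x`
  have hlow : Real.exp (-L) * V / 4 ≤ Wgraph u x := by
    have hW : ∀ z, Wgraph u z * nn u z P = X1 u P * pdx u z + X2 u P * pdy u z + wv u P := by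
      intro z
      have h1 := p_eq u z
      have h2 := q_eq u z
      have h3 := W_mul_wv u z
      rw [h1, h2]; unfold nn
      linear_combination wv u P * h3
    have := S.max_principle hUo hUc hUΩ (X1 u P) (X2 u P) (wv u P) (Real.exp (-L) * V / 4)
      (fun z hz => by
        rw [← hW]
        have hzc : z ∈ comp u P δ₀ := closure_comp_sub u P ht (by linarith) (hfcl hz) (hfρ z hz)
        obtain ⟨m1, m2, m3⟩ := hmod Ω u P S hP z hzc
        have hn : 1 / 2 ≤ nn u z P := half_le_nn m1 m2 m3
        have h1 : V ≤ Real.exp L * Wgraph u z := hWle y hy z hz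
        have h2 : Real.exp (-L) * V ≤ Wgraph u z := by
          calc Real.exp (-L) * V ≤ Real.exp (-L) * (Real.exp L * Wgraph u z) :=
                mul_le_mul_of_nonneg_left h1 (Real.exp_pos _).le
            _ = Wgraph u z := by rw [← mul_assoc, ← Real.exp_add]; simp
        have h3 := W_pos u z
        have h4 := mul_le_mul_of_nonneg_left hn h3.le
        linarith) x hxU
    rw [← hW] at this
    have h4 := mul_le_mul_of_nonneg_left (nn_le_one u x P) (W_pos u x).le
    linarith
  have hfin : Wgraph u P ≤ 12 * Real.exp (2 * L) * Wgraph u x := by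
    have e : Real.exp (2 * L) * Real.exp (-L) = Real.exp L := by rw [← Real.exp_add]; ring_nf
    have h1 : 12 * Real.exp (2 * L) * (Real.exp (-L) * V / 4)
        ≤ 12 * Real.exp (2 * L) * Wgraph u x := mul_le_mul_of_nonneg_left hlow (by positivity)
    have e2 : 12 * Real.exp (2 * L) * (Real.exp (-L) * V / 4) = 3 * (Real.exp L * V) := by
      rw [← e]; ring
    linarith
  unfold wv
  rw [mul_one_div, div_le_div_iff₀ (W_pos u x) (W_pos u P)]
  linarith

/-! ### Complex notation, level curves and the divergence potential -/

/-- The point of the plane with complex coordinate `z`. -/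
def pt (z : ℂ) : ℝ × ℝ := (z.re, z.im)

/-- The horizontal field `X = ∇u / W` as a complex-valued function of a complex coordinate. -/
def XC (u : ℝ × ℝ → ℝ) (z : ℂ) : ℂ := ⟨X1 u (pt z), X2 u (pt z)⟩

theorem norm_sq_eq (z : ℂ) : ‖z‖ ^ 2 = z.re ^ 2 + z.im ^ 2 := by
  rw [← Complex.normSq_eq_norm_sq, Complex.normSq_apply]; ring

theorem mem_eB {z A : ℂ} {a : ℝ} (ha : 0 ≤ a) : pt z ∈ eB (pt A) a ↔ ‖z - A‖ ≤ a := by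
  change (z.re - A.re) ^ 2 + (z.im - A.im) ^ 2 ≤ a ^ 2 ↔ _
  have := norm_sq_eq (z - A)
  simp only [Complex.sub_re, Complex.sub_im] at this
  rw [← this]
  exact sq_le_sq₀ (norm_nonneg _) ha

theorem eB_shift {Ω : Set (ℝ × ℝ)} {A B : ℂ} {a b : ℝ} (hb : 0 ≤ b) (h : ‖B - A‖ + b ≤ a)
    (hA : eB (pt A) a ⊆ Ω) : eB (pt B) b ⊆ Ω := by
  intro x hx
  have hx' : ‖(⟨x.1, x.2⟩ : ℂ) - B‖ ≤ b := (mem_eB (z := ⟨x.1, x.2⟩) hb).1 hx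
  have ha : 0 ≤ a := by have := norm_nonneg (B - A); linarith
  refine hA ((mem_eB (z := ⟨x.1, x.2⟩) (A := A) ha).2 ?_)
  have := norm_sub_le_norm_sub_add_norm_sub (⟨x.1, x.2⟩ : ℂ) B A
  linarith

theorem XC_normSq (u : ℝ × ℝ → ℝ) (z : ℂ) : ‖XC u z‖ ^ 2 = 1 - wv u (pt z) ^ 2 := by
  rw [norm_sq_eq, ← X_sq]; rfl

theorem XC_norm_le (u : ℝ × ℝ → ℝ) (z : ℂ) : ‖XC u z‖ ≤ 1 := by
  have := XC_normSq u z
  have := sq_nonneg (wv u (pt z))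
  have := norm_nonneg (XC u z)
  nlinarith

/-- Complex form of the modulus of continuity of the normal. -/
theorem mod_C (H a ε : ℝ) (hH : 0 < H) (ha : 0 < a) (hε : 0 < ε) :
    ∃ δ > 0, ∀ Ω u, ∀ A z : ℂ, Sol H Ω u → eB (pt A) a ⊆ Ω → pt z ∈ comp u (pt A) δ →
      ‖XC u z - XC u A‖ ≤ ε := by
  obtain ⟨δ, hδ, h⟩ := normal_modulus H a (ε / 2) hH ha (by positivity)
  refine ⟨δ, hδ, fun Ω u A z hs hA hz => ?_⟩
  obtain ⟨h1, h2, -⟩ := h Ω u (pt A) hs hA _ hz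
  have := Complex.norm_le_abs_re_add_abs_im (XC u z - XC u A)
  simp only [XC, Complex.sub_re, Complex.sub_im] at this ⊢
  linarith

/-- Potential of the divergence free field `X - H (z - c)` on a disc, characterised by its
derivative along curves: the flux density of the field. -/
theorem Sol.potential {H : ℝ} {Ω : Set (ℝ × ℝ)} {u : ℝ × ℝ → ℝ} (h : Sol H Ω u) (c A : ℂ) {a : ℝ}
    (ha : 0 ≤ a) (hA : eB (pt A) a ⊆ Ω) :
    ∃ F : ℂ → ℝ, ∀ (g : ℝ → ℂ) (v : ℂ) (τ : ℝ), HasDerivAt g v τ → ‖g τ - A‖ < a →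
      HasDerivAt (fun t => F (g t))
        ((XC u (g τ) - H * (g τ - c)).re * v.im - (XC u (g τ) - H * (g τ - c)).im * v.re) τ := by
  set G : Set (ℝ × ℝ) := Complex.equivRealProdCLM.symm ⁻¹' (Metric.ball A a) with hG
  have hGo : IsOpen G := Metric.isOpen_ball.preimage (Complex.equivRealProdCLM.symm.continuous)
  have hGc : Convex ℝ G :=
    (convex_ball A a).linear_preimage (Complex.equivRealProdCLM.symm : (ℝ × ℝ) →L[ℝ] ℂ).toLinearMap
  have hmem : ∀ z : ℂ, pt z ∈ G ↔ ‖z - A‖ < a := by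
    intro z
    rw [hG, mem_preimage, mem_ball_iff_norm]
    have : Complex.equivRealProdCLM.symm (pt z) = z := Complex.equivRealProdCLM.symm_apply_apply z
    rw [this]
  have hGΩ : G ⊆ Ω := by
    intro x hx
    have : ‖(⟨x.1, x.2⟩ : ℂ) - A‖ < a := (hmem ⟨x.1, x.2⟩).1 hx
    exact hA ((mem_eB (z := ⟨x.1, x.2⟩) ha).2 this.le)
  let ω : ℝ × ℝ → (ℝ × ℝ →L[ℝ] ℝ) := fun x =>
    (-(X2 u x - H * (x.2 - c.im))) • ContinuousLinearMap.fst ℝ ℝ ℝ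
      + (X1 u x - H * (x.1 - c.re)) • ContinuousLinearMap.snd ℝ ℝ ℝ
  have hd : ∀ x ∈ G, ∃ L : ℝ × ℝ →L[ℝ] (ℝ × ℝ →L[ℝ] ℝ), HasFDerivAt ω L x ∧ ∀ y z, L y z = L z y := by
    intro x hx
    have hx := hGΩ hx
    have e1 : HG (fun x => -(X2 u x - H * (x.2 - c.im))) _ _ x :=
      ((h.hg_of h.cd_X2 hx).sub ((HG.snd.sub (HG.const c.im)).const_mul H)).neg
    have e2 : HG (fun x => (X1 u x - H * (x.1 - c.re))) _ _ x :=
      ((h.hg_of h.cd_X1 hx).sub ((HG.fst.sub (HG.const c.re)).const_mul H))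
    unfold HG at e1 e2
    refine ⟨_, (e1.smul_const (ContinuousLinearMap.fst ℝ ℝ ℝ)).add
      (e2.smul_const (ContinuousLinearMap.snd ℝ ℝ ℝ)), fun y z => ?_⟩
    have := h.div hx
    simp
    linear_combination (y.1 * z.2 - y.2 * z.1) * this
  obtain ⟨f, hf⟩ := hGc.exists_forall_hasFDerivAt_of_fderiv_symmetric hGo (ω := ω)
    (fun x hx => (hd x hx).choose_spec.1.differentiableAt.differentiableWithinAt) (by
      intro x hx y z
      rw [(hd x hx).choose_spec.1.fderiv]
      exact (hd x hx).choose_spec.2 y z)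
  refine ⟨fun z => f (pt z), fun g v τ hg hgA => ?_⟩
  have h1 := hf (pt (g τ)) ((hmem _).2 hgA)
  have h2 : HasDerivAt (fun t => pt (g t)) (v.re, v.im) τ := by
    have := (Complex.equivRealProdCLM : ℂ →L[ℝ] ℝ × ℝ).hasFDerivAt.comp_hasDerivAt τ hg
    exact this
  have h3 := HG.comp_curve (f := f) (γ := fun t => pt (g t)) h1 h2
  refine h3.congr_deriv ?_
  simp [XC, pt]
  ring

theorem curve_bound {g g' : ℝ → ℂ} {s K : ℝ}
    (hg : ∀ τ ∈ Icc (-s) s, HasDerivAt g (g' τ) τ) (hK : ∀ τ ∈ Icc (-s) s, ‖g' τ‖ ≤ K)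
    {τ τ' : ℝ} (h1 : τ ∈ Icc (-s) s) (h2 : τ' ∈ Icc (-s) s) : ‖g τ' - g τ‖ ≤ K * |τ' - τ| := by
  have := (convex_Icc (-s) s).norm_image_sub_le_of_norm_hasDerivWithin_le
    (fun x hx => (hg x hx).hasDerivWithinAt) hK h1 h2
  simpa using this

/-- The level curve of `u` through `A`, parametrised so that its velocity is `i X`. -/
theorem Sol.level_curve {H : ℝ} {Ω : Set (ℝ × ℝ)} {u : ℝ × ℝ → ℝ} (h : Sol H Ω u) {A : ℂ}
    {a s : ℝ} (hA : eB (pt A) a ⊆ Ω) (hs : 0 < s) (hsa : 4 * s ≤ a) :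
    ∃ g : ℝ → ℂ, g 0 = A ∧ (∀ τ ∈ Icc (-s) s, HasDerivAt g (Complex.I * XC u (g τ)) τ) ∧
      (∀ τ ∈ Icc (-s) s, ‖g τ - A‖ ≤ s) ∧
      (∀ t, s < t → ∀ τ ∈ Icc (-s) s, pt (g τ) ∈ comp u (pt A) t) ∧
      ∀ t, ∀ τ ∈ Icc (-s) s, ∀ τ' ∈ Icc (-s) s, |τ' - τ| < t →
        pt (g τ') ∈ comp u (pt (g τ)) t := by
  -- the field is Lipschitz on the closed disc of radius `2 s`
  set V : ℂ → ℂ := fun z => Complex.I * XC u z with hV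
  have hmem : ∀ z ∈ Metric.closedBall A (2 * s), pt z ∈ Ω := by
    intro z hz
    rw [mem_closedBall_iff_norm] at hz
    exact hA ((mem_eB (by linarith)).2 (by linarith))
  have hptC : ContDiff ℝ 1 pt :=
    (Complex.equivRealProdCLM : ℂ →L[ℝ] ℝ × ℝ).contDiff
  have hXC : ContDiffOn ℝ 1 (XC u) (pt ⁻¹' Ω) := by
    have e1 : ContDiffOn ℝ 1 (fun z => (X1 u (pt z), X2 u (pt z))) (pt ⁻¹' Ω) :=
      (h.cd_X1.comp hptC.contDiffOn (fun _ hx => hx)).prodMk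
        (h.cd_X2.comp hptC.contDiffOn (fun _ hx => hx))
    exact (Complex.equivRealProdCLM.symm : ℝ × ℝ →L[ℝ] ℂ).contDiff.comp_contDiffOn e1
  have hVC : ContDiffOn ℝ 1 V (pt ⁻¹' Ω) := contDiffOn_const.mul hXC
  have hopen : IsOpen (pt ⁻¹' Ω) := h.hΩ.preimage hptC.continuous
  have hcont : ContinuousOn (fun z => ‖fderiv ℝ V z‖) (Metric.closedBall A (2 * s)) :=
    ((hVC.continuousOn_fderiv_of_isOpen hopen le_rfl).mono hmem).norm
  obtain ⟨K, hK⟩ := (isCompact_closedBall A (2 * s)).bddAbove_image hcont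
  have hK' : ∀ z ∈ Metric.closedBall A (2 * s), ‖fderiv ℝ V z‖ ≤ K :=
    fun z hz => hK (mem_image_of_mem _ hz)
  have hdiff : ∀ z ∈ Metric.closedBall A (2 * s), DifferentiableAt ℝ V z := fun z hz =>
    (hVC.differentiableOn one_ne_zero).differentiableAt (hopen.mem_nhds (hmem z hz))
  have hlip : LipschitzOnWith K.toNNReal V (Metric.closedBall A (2 * s)) := by
    apply (convex_closedBall A (2 * s)).lipschitzOnWith_of_nnnorm_fderiv_le hdiff
    intro z hz
    rw [← NNReal.coe_le_coe, coe_nnnorm]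
    exact (hK' z hz).trans (Real.le_coe_toNNReal K)
  have hVn : ∀ z, ‖V z‖ ≤ 1 := fun z => by simpa [hV] using XC_norm_le u z
  have h0 : (0 : ℝ) ∈ Icc (-(2 * s)) (2 * s) := ⟨by linarith, by linarith⟩
  let t₀ : Icc (-(2 * s)) (2 * s) := ⟨0, h0⟩
  have hPL : IsPicardLindelof (fun _ => V) t₀ A (2 * s).toNNReal 0 1 K.toNNReal := by
    have e : ((2 * s).toNNReal : ℝ) = 2 * s := Real.coe_toNNReal _ (by linarith)
    apply IsPicardLindelof.of_time_independent
    · intro x _; simpa using hVn x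
    · rw [e]; exact hlip
    · rw [e]; simp [t₀]
  obtain ⟨α, hα⟩ := ODE.FunSpace.exists_isFixedPt_next hPL (Metric.mem_closedBall_self le_rfl)
  have hαA : α.compProj 0 = A := by
    have : α.compProj (t₀ : ℝ) = A := by
      rw [ODE.FunSpace.compProj_val, ← hα, ODE.FunSpace.next_apply₀]
    exact this
  have hder : ∀ t ∈ Icc (-(2 * s)) (2 * s),
      HasDerivWithinAt α.compProj (V (α.compProj t)) (Icc (-(2 * s)) (2 * s)) t := by
    intro t ht
    apply (ODE.hasDerivWithinAt_picard_Icc t₀.2 hPL.continuousOn_uncurry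
      α.continuous_compProj.continuousOn (fun _ ht' ↦ α.compProj_mem_closedBall hPL.mul_max_le)
      A ht).congr_of_mem _ ht
    intro t' ht'
    nth_rw 1 [← hα]
    rw [ODE.FunSpace.compProj_of_mem ht', ODE.FunSpace.next_apply]
  set g := α.compProj with hg
  have hgd : ∀ τ ∈ Icc (-s) s, HasDerivAt g (Complex.I * XC u (g τ)) τ := by
    intro τ hτ
    exact (hder τ ⟨by linarith [hτ.1], by linarith [hτ.2]⟩).hasDerivAt
      (Icc_mem_nhds (by linarith [hτ.1]) (by linarith [hτ.2]))
  have h0s : (0 : ℝ) ∈ Icc (-s) s := ⟨by linarith, by linarith⟩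
  have hgA : ∀ τ ∈ Icc (-s) s, ‖g τ - A‖ ≤ s := by
    intro τ hτ
    have := curve_bound hgd (fun τ _ => hVn (g τ)) h0s hτ
    rw [hαA] at this
    have h2 : |τ - 0| ≤ s := by rw [sub_zero]; exact abs_le.2 hτ
    linarith
  have hin : ∀ τ ∈ Icc (-s) s, pt (g τ) ∈ Ω := fun τ hτ =>
    hA ((mem_eB (by linarith)).2 (by linarith [hgA τ hτ]))
  have hpt : ∀ τ ∈ Icc (-s) s, HasDerivAt (fun t => pt (g t))
      (-X2 u (pt (g τ)), X1 u (pt (g τ))) τ := by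
    intro τ hτ
    have := (Complex.equivRealProdCLM : ℂ →L[ℝ] ℝ × ℝ).hasFDerivAt.comp_hasDerivAt τ (hgd τ hτ)
    refine this.congr_deriv ?_
    change ((Complex.I * XC u (g τ)).re, (Complex.I * XC u (g τ)).im) = _
    simp [XC]
  have hconst : ∀ τ ∈ Icc (-s) s, u (pt (g τ)) = u (pt A) := by
    have hd : ∀ τ ∈ Icc (-s) s, HasDerivAt (fun t => u (pt (g t))) 0 τ := by
      intro τ hτ
      refine ((h.hgu (hin τ hτ)).comp_curve (γ := fun t => pt (g t)) (hpt τ hτ)).congr_deriv ?_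
      simp only [X1_eq, X2_eq]
      ring
    intro τ hτ
    have := (convex_Icc (-s) s).norm_image_sub_le_of_norm_hasDerivWithin_le (C := 0)
      (fun x hx => (hd x hx).hasDerivWithinAt) (by simp) h0s hτ
    simp only [zero_mul, norm_le_zero_iff, sub_eq_zero, hαA] at this
    exact this
  have key : ∀ t, ∀ τ ∈ Icc (-s) s, ∀ τ' ∈ Icc (-s) s, |τ' - τ| < t →
      pt (g τ') ∈ comp u (pt (g τ)) t := by
    intro t τ hτ τ' hτ' ht
    have hsub : uIcc τ τ' ⊆ Icc (-s) s := by
      rw [← uIcc_of_le (by linarith : -s ≤ s)] at hτ hτ' ⊢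
      exact uIcc_subset_uIcc hτ hτ'
    have himg : IsPreconnected ((fun t => pt (g t)) '' uIcc τ τ') :=
      isPreconnected_uIcc.image _ fun r hr => (hpt r (hsub hr)).continuousAt.continuousWithinAt
    refine himg.subset_connectedComponentIn ⟨τ, left_mem_uIcc, rfl⟩ ?_ ⟨τ', right_mem_uIcc, rfl⟩
    rintro _ ⟨r, hr, rfl⟩
    change (_ - _) ^ 2 + (_ - _) ^ 2 + (_ - _) ^ 2 < t ^ 2
    simp only
    rw [hconst r (hsub hr), hconst τ hτ]
    have h1 := norm_sq_eq (g r - g τ)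
    simp only [Complex.sub_re, Complex.sub_im] at h1
    have h2 := curve_bound hgd (fun τ _ => hVn (g τ)) hτ (hsub hr)
    have h4 : |r - τ| ≤ |τ' - τ| := abs_sub_left_of_mem_uIcc hr
    have h3 := norm_nonneg (g r - g τ)
    simp only [pt]
    nlinarith
  refine ⟨g, hαA, hgd, hgA, fun t ht τ hτ => ?_, key⟩
  have := key t 0 h0s τ hτ (by rw [sub_zero]; exact (abs_le.2 hτ).trans_lt ht)
  rwa [hαA] at this

/-! ### Transfer of almost vertical tangent planes to nearby points -/

theorem wsmall_arith {ω δ r d θ D : ℝ} (hω : 0 < ω) (hδ : 0 < δ) (hr : r ≤ δ / (2 * (1 + 2 / ω)))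
    (hd : 0 ≤ d) (hdr : d ≤ r) (h0 : 0 ≤ θ) (h1 : θ ≤ 1) (hD : |D| ≤ 2 / ω * d * θ) :
    (θ * d) ^ 2 + D ^ 2 < δ ^ 2 := by
  have hk : 0 < 2 / ω := by positivity
  generalize 2 / ω = k at *
  have h2 : r * (2 * (1 + k)) ≤ δ := by rwa [le_div_iff₀ (by positivity)] at hr
  have h3 : 0 ≤ θ * d := by positivity
  have h4 : θ * d ≤ d := by nlinarith
  have h5 : D ^ 2 ≤ (k * d) ^ 2 := by
    rw [← sq_abs]
    have : k * d * θ ≤ k * d := by nlinarith [mul_nonneg hk.le hd]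
    exact pow_le_pow_left₀ (abs_nonneg _) (hD.trans this) 2
  have h6 : (θ * d) ^ 2 ≤ d ^ 2 := pow_le_pow_left₀ h3 h4 2
  have h7 : d * (1 + k) ≤ δ / 2 := by nlinarith
  have h8 : (d * (1 + k)) ^ 2 ≤ (δ / 2) ^ 2 := pow_le_pow_left₀ (by positivity) h7 2
  nlinarith [mul_nonneg (mul_nonneg hd hd) hk.le]

theorem grad_bound {u : ℝ × ℝ → ℝ} {x : ℝ × ℝ} {ω a b : ℝ} (hω : 0 < ω) (hw : ω / 2 ≤ wv u x) :
    |pdx u x * a + pdy u x * b| ≤ 2 / ω * ‖(⟨a, b⟩ : ℂ)‖ := by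
  have hWw := W_mul_wv u x
  have hWp := W_pos u x
  have hW : Wgraph u x ≤ 2 / ω := by
    rw [le_div_iff₀ hω]; nlinarith
  have h2 : |pdx u x * a + pdy u x * b| ≤ Wgraph u x * ‖(⟨a, b⟩ : ℂ)‖ := by
    apply abs_le_of_sq_le_sq _ (by positivity)
    rw [mul_pow, norm_sq_eq, W_sq]
    nlinarith [sq_nonneg (pdx u x * b - pdy u x * a), sq_nonneg a, sq_nonneg b]
  exact h2.trans (mul_le_mul_of_nonneg_right hW (norm_nonneg _))

set_option maxHeartbeats 1000000 in
/-- Points close to an almost vertical point are almost vertical: otherwise `|∇u|` would stay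
bounded along the segment joining them. -/
theorem w_small (H a ω : ℝ) (hH : 0 < H) (ha : 0 < a) (hω : 0 < ω) :
    ∃ r > 0, ∀ Ω u, ∀ B B' : ℂ, Sol H Ω u → eB (pt B) a ⊆ Ω → ‖B' - B‖ ≤ r →
      wv u (pt B') < ω / 2 → wv u (pt B) < ω := by
  obtain ⟨δ, hδ, hmod⟩ := normal_modulus H a (ω / 2) hH ha (by positivity)
  refine ⟨min a (δ / (2 * (1 + 2 / ω))), by positivity, fun Ω u B B' hs hB hr hw' => ?_⟩
  by_contra! hw
  have hcomp : ∀ x ∈ comp u (pt B) δ, ω / 2 ≤ wv u x := by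
    intro x hx
    have := (abs_le.1 (hmod Ω u (pt B) hs hB x hx).2.2).1
    linarith
  set v := B' - B with hv
  have hra : ‖v‖ ≤ a := hr.trans (min_le_left _ _)
  set σ : ℝ → ℂ := fun θ => B + θ * v with hσ
  have hσc : Continuous fun θ => pt (σ θ) := by
    simp only [pt, hσ]; fun_prop
  have hσΩ : ∀ θ ∈ Icc (0 : ℝ) 1, pt (σ θ) ∈ Ω := by
    intro θ hθ
    refine hB ((mem_eB ha.le).2 ?_)
    have : σ θ - B = θ * v := by simp [hσ]
    rw [this, norm_mul, Complex.norm_real, Real.norm_of_nonneg hθ.1]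
    nlinarith [hθ.2, norm_nonneg v]
  have hσ0 : σ 0 = B := by simp [hσ]
  have hσ1 : σ 1 = B' := by simp [hσ, hv]
  have hrho : ∀ θ, rho2 u (pt B) (pt (σ θ)) = (θ * ‖v‖) ^ 2 + (u (pt (σ θ)) - u (pt B)) ^ 2 := by
    intro θ
    rw [mul_pow, norm_sq_eq]
    simp [rho2, pt, hσ]
    ring
  -- a segment staying in the three-dimensional ball stays in the component
  have hseg : ∀ θ ∈ Icc (0 : ℝ) 1, (∀ t ∈ Icc 0 θ, rho2 u (pt B) (pt (σ t)) < δ ^ 2) →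
      pt (σ θ) ∈ comp u (pt B) δ := by
    intro θ hθ h
    have : IsPreconnected ((fun t => pt (σ t)) '' Icc 0 θ) :=
      isPreconnected_Icc.image _ hσc.continuousOn
    refine this.subset_connectedComponentIn ⟨0, ⟨le_rfl, hθ.1⟩, by simp [hσ0]⟩ ?_
      ⟨θ, ⟨hθ.1, le_rfl⟩, rfl⟩
    rintro _ ⟨t, ht, rfl⟩
    exact h t ht
  have hall : ∀ θ ∈ Icc (0 : ℝ) 1, rho2 u (pt B) (pt (σ θ)) < δ ^ 2 := by
    by_contra! hne
    have hcont : ContinuousOn (fun θ => rho2 u (pt B) (pt (σ θ))) (Icc 0 1) := by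
      have : ContinuousOn (fun θ => u (pt (σ θ))) (Icc 0 1) :=
        hs.cd_u.continuousOn.comp hσc.continuousOn hσΩ
      simp only [hrho]
      exact (continuous_id.mul continuous_const |>.pow 2).continuousOn.add
        ((this.sub continuousOn_const).pow 2)
    set K : Set ℝ := Icc 0 1 ∩ (fun θ => rho2 u (pt B) (pt (σ θ))) ⁻¹' Ici (δ ^ 2) with hK
    have hKc : IsCompact K := isCompact_Icc.of_isClosed_subset
      (hcont.preimage_isClosed_of_isClosed isClosed_Icc isClosed_Ici) inter_subset_left
    have hKn : K.Nonempty := by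
      obtain ⟨θ, h1, h2⟩ := hne
      exact ⟨θ, h1, h2⟩
    obtain ⟨θ₀, hθ₀, hmin⟩ := hKc.exists_isLeast hKn
    have hlt : ∀ t ∈ Ico 0 θ₀, rho2 u (pt B) (pt (σ t)) < δ ^ 2 := by
      intro t ht
      by_contra! hc
      have : t ∈ K := ⟨⟨ht.1, by linarith [ht.2, hθ₀.1.2]⟩, hc⟩
      linarith [hmin this, ht.2]
    have hder : ∀ t ∈ Icc 0 θ₀, HasDerivWithinAt (fun t => u (pt (σ t)))
        (pdx u (pt (σ t)) * v.re + pdy u (pt (σ t)) * v.im) (Icc 0 θ₀) t := by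
      intro t ht
      have h2 : HasDerivAt (fun t => pt (σ t)) (v.re, v.im) t := by
        have e1 : HasDerivAt (fun t : ℝ => B.re + t * v.re) v.re t := by
          simpa using ((hasDerivAt_id t).mul_const v.re).const_add B.re
        have e2 : HasDerivAt (fun t : ℝ => B.im + t * v.im) v.im t := by
          simpa using ((hasDerivAt_id t).mul_const v.im).const_add B.im
        have := e1.prodMk e2
        refine this.congr_of_eventuallyEq (Eventually.of_forall fun t => ?_)
        simp [pt, hσ]
      exact ((hs.hgu (hσΩ t ⟨ht.1, ht.2.trans hθ₀.1.2⟩)).comp_curve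
        (γ := fun t => pt (σ t)) h2).hasDerivWithinAt
    have hb := norm_image_sub_le_of_norm_deriv_le_segment' hder (C := 2 / ω * ‖v‖) (by
      intro t ht
      have : pt (σ t) ∈ comp u (pt B) δ := hseg t ⟨ht.1, by linarith [ht.2, hθ₀.1.2]⟩
        (fun t' ht' => hlt t' ⟨ht'.1, ht'.2.trans_lt ht.2⟩)
      exact grad_bound hω (hcomp _ this)) θ₀ ⟨hθ₀.1.1, le_rfl⟩
    have h3 : δ ^ 2 ≤ rho2 u (pt B) (pt (σ θ₀)) := hθ₀.2
    rw [hrho] at h3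
    simp only [hσ0, Real.norm_eq_abs, sub_zero] at hb
    have := wsmall_arith hω hδ (r := ‖v‖) (hr.trans (min_le_right _ _)) (norm_nonneg v) le_rfl
      hθ₀.1.1 hθ₀.1.2 hb
    linarith
  have := hcomp _ (hseg 1 ⟨zero_le_one, le_rfl⟩ hall)
  rw [hσ1] at this
  linarith

theorem incr_ge {f f' : ℝ → ℝ} {a b m : ℝ} (hab : a ≤ b)
    (hf : ∀ τ ∈ Icc a b, HasDerivAt f (f' τ) τ) (hm : ∀ τ ∈ Icc a b, m ≤ f' τ) :
    m * (b - a) ≤ f b - f a := by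
  have hmono : MonotoneOn (fun t => f t - m * t) (Icc a b) := by
    have hd : ∀ τ ∈ Icc a b, HasDerivAt (fun t => f t - m * t) (f' τ - m) τ := fun τ hτ => by
      exact ((hf τ hτ).sub ((hasDerivAt_id τ).const_mul m)).congr_deriv (by simp)
    apply monotoneOn_of_deriv_nonneg (convex_Icc a b)
    · exact fun τ hτ => (hd τ hτ).continuousAt.continuousWithinAt
    · exact fun τ hτ => (hd τ (interior_subset hτ)).differentiableAt.differentiableWithinAt
    · intro τ hτ
      rw [(hd τ (interior_subset hτ)).deriv]
      linarith [hm τ (interior_subset hτ)]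
  have := hmono ⟨le_rfl, hab⟩ ⟨hab, le_rfl⟩ hab
  simp only at this
  linarith

theorem lin_approx {u : ℝ × ℝ → ℝ} {A : ℂ} {s ε : ℝ} {g : ℝ → ℂ} (hs : 0 < s) (hg0 : g 0 = A)
    (hg : ∀ τ ∈ Icc (-s) s, HasDerivAt g (Complex.I * XC u (g τ)) τ)
    (hX : ∀ τ ∈ Icc (-s) s, ‖XC u (g τ) - XC u A‖ ≤ ε) {τ : ℝ} (hτ : τ ∈ Icc (-s) s) :
    ‖g τ - (A + τ * (Complex.I * XC u A))‖ ≤ ε * |τ| := by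
  have hd : ∀ τ ∈ Icc (-s) s, HasDerivAt (fun t : ℝ => g t - t * (Complex.I * XC u A))
      (Complex.I * XC u (g τ) - Complex.I * XC u A) τ := by
    intro τ hτ
    exact ((hg τ hτ).sub ((hasDerivAt_id τ).ofReal_comp.mul_const (Complex.I * XC u A))).congr_deriv
      (by simp)
  have := curve_bound hd (K := ε) (fun τ hτ => by
    rw [← mul_sub, norm_mul, Complex.norm_I, one_mul]; exact hX τ hτ)
    (τ := 0) ⟨by linarith, hs.le⟩ hτ
  simp only [Complex.ofReal_zero, zero_mul, sub_zero, hg0] at this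
  rwa [show g τ - (A + τ * (Complex.I * XC u A)) = g τ - τ * (Complex.I * XC u A) - A by ring]

theorem re_mul_conj_le (z w : ℂ) : z.re * w.re + z.im * w.im ≤ ‖z‖ * ‖w‖ := by
  have h1 := norm_sq_eq z
  have h2 := norm_sq_eq w
  apply le_of_abs_le
  apply abs_le_of_sq_le_sq _ (by positivity)
  rw [mul_pow, h1, h2]
  nlinarith [sq_nonneg (z.re * w.im - z.im * w.re)]

theorem cross_le (z w : ℂ) : |z.re * w.im - z.im * w.re| ≤ ‖z‖ * ‖w‖ := by
  have h1 := norm_sq_eq z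
  have h2 := norm_sq_eq w
  apply abs_le_of_sq_le_sq _ (by positivity)
  rw [mul_pow, h1, h2]
  nlinarith [sq_nonneg (z.re * w.re + z.im * w.im)]

/-- Lower bound for the increase of the potential of `X - H (z - c)` along a level curve. -/
theorem pot_incr {H : ℝ} (hH : 0 < H) {u : ℝ × ℝ → ℝ} {A c : ℂ} {s a d ε ω : ℝ}
    {g : ℝ → ℂ} {F : ℂ → ℝ} (hs : 0 < s)
    (hF : ∀ (g : ℝ → ℂ) (v : ℂ) (τ : ℝ), HasDerivAt g v τ → ‖g τ - c‖ < a →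
      HasDerivAt (fun t => F (g t))
        ((XC u (g τ) - H * (g τ - c)).re * v.im - (XC u (g τ) - H * (g τ - c)).im * v.re) τ)
    (hg : ∀ τ ∈ Icc (-s) s, HasDerivAt g (Complex.I * XC u (g τ)) τ)
    (hgA : ∀ τ ∈ Icc (-s) s, ‖g τ - A‖ ≤ s)
    (hX : ∀ τ ∈ Icc (-s) s, ‖XC u (g τ) - XC u A‖ ≤ ε)
    (hd : ‖A - c‖ ≤ d) (hda : s + d < a) (hw : wv u (pt A) ≤ ω) :
    (1 - ω ^ 2 - 2 * ε - H * (s + d)) * (2 * s) ≤ F (g s) - F (g (-s)) := by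
  have hgc : ∀ τ ∈ Icc (-s) s, ‖g τ - c‖ ≤ s + d := fun τ hτ => by
    have := norm_sub_le_norm_sub_add_norm_sub (g τ) A c
    linarith [hgA τ hτ]
  have := incr_ge (f := fun t => F (g t)) (by linarith : -s ≤ s)
    (fun τ hτ => hF g _ τ (hg τ hτ) ((hgc τ hτ).trans_lt hda))
    (m := 1 - ω ^ 2 - 2 * ε - H * (s + d)) (by
      intro τ hτ
      have h1 := norm_sq_eq (XC u (g τ))
      have h2 := re_mul_conj_le (g τ - c) (XC u (g τ))
      have h3 := XC_norm_le u (g τ)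
      have h4 := XC_norm_le u A
      have h5 := XC_normSq u A
      have h6 := hX τ hτ
      have h7 : ‖XC u A‖ - ε ≤ ‖XC u (g τ)‖ := by
        have := norm_sub_norm_le (XC u A) (XC u (g τ))
        rw [norm_sub_rev] at this
        linarith
      have h8 := norm_nonneg (XC u A)
      have h9 := norm_nonneg (XC u (g τ))
      have h10 := (wv_pos u (pt A))
      have h11 : wv u (pt A) ^ 2 ≤ ω ^ 2 := pow_le_pow_left₀ h10.le hw 2
      have h12 : ‖XC u A‖ ^ 2 - 2 * ε ≤ ‖XC u (g τ)‖ ^ 2 := by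
        have : 0 ≤ ε := (norm_nonneg _).trans h6
        nlinarith
      have h13 : ‖g τ - c‖ * ‖XC u (g τ)‖ ≤ s + d := by
        nlinarith [norm_nonneg (g τ - c), hgc τ hτ]
      have h14 : H * ((g τ - c).re * (XC u (g τ)).re + (g τ - c).im * (XC u (g τ)).im)
          ≤ H * (s + d) := mul_le_mul_of_nonneg_left (h2.trans h13) hH.le
      simp only [Complex.sub_re, Complex.sub_im, Complex.mul_re, Complex.mul_im, Complex.I_re,
        Complex.I_im, Complex.ofReal_re, Complex.ofReal_im] at h14 ⊢
      linarith)
  linarith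

/-- Lipschitz bound for the potential along segments. -/
theorem pot_lip {H : ℝ} (hH : 0 < H) {u : ℝ × ℝ → ℝ} {c : ℂ} {a r : ℝ} {F : ℂ → ℝ}
    (hF : ∀ (g : ℝ → ℂ) (v : ℂ) (τ : ℝ), HasDerivAt g v τ → ‖g τ - c‖ < a →
      HasDerivAt (fun t => F (g t))
        ((XC u (g τ) - H * (g τ - c)).re * v.im - (XC u (g τ) - H * (g τ - c)).im * v.re) τ)
    (hr : r < a) {z z' : ℂ} (hz : ‖z - c‖ ≤ r) (hz' : ‖z' - c‖ ≤ r) :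
    F z' - F z ≤ (1 + H * r) * ‖z' - z‖ := by
  set σ : ℝ → ℂ := fun θ => z + θ * (z' - z) with hσ
  have hσd : ∀ θ, HasDerivAt σ (z' - z) θ := by
    intro θ
    exact (((hasDerivAt_id θ).ofReal_comp.mul_const (z' - z)).const_add z).congr_deriv (by simp)
  have hσc : ∀ θ ∈ Icc (0 : ℝ) 1, ‖σ θ - c‖ ≤ r := by
    intro θ hθ
    have e : σ θ - c = ((1 - θ : ℝ) : ℂ) * (z - c) + (θ : ℂ) * (z' - c) := by
      simp [hσ]; ring
    rw [e]
    refine (norm_add_le _ _).trans ?_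
    rw [norm_mul, norm_mul, Complex.norm_real, Complex.norm_real, Real.norm_of_nonneg hθ.1,
      Real.norm_of_nonneg (by linarith [hθ.2])]
    nlinarith [hθ.1, hθ.2]
  have := norm_image_sub_le_of_norm_deriv_le_segment' (f := fun t => F (σ t)) (a := 0) (b := 1)
    (C := (1 + H * r) * ‖z' - z‖)
    (fun θ hθ => (hF σ _ θ (hσd θ) ((hσc θ hθ).trans_lt hr)).hasDerivWithinAt) (by
      intro θ hθ
      rw [Real.norm_eq_abs]
      refine (cross_le _ _).trans (mul_le_mul_of_nonneg_right ?_ (norm_nonneg _))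
      refine (norm_sub_le _ _).trans (add_le_add (XC_norm_le _ _) ?_)
      rw [norm_mul, Complex.norm_real, Real.norm_of_nonneg hH.le]
      exact mul_le_mul_of_nonneg_left (hσc θ ⟨hθ.1, hθ.2.le⟩) hH.le) 1 ⟨zero_le_one, le_rfl⟩
  simp only [hσ, Complex.ofReal_one, Complex.ofReal_zero, zero_mul, one_mul, add_zero, sub_zero,
    mul_one, add_sub_cancel] at this
  exact (le_abs_self _).trans this

theorem par_law (z w : ℂ) : ‖z - w‖ ^ 2 = 2 * ‖z‖ ^ 2 + 2 * ‖w‖ ^ 2 - ‖z + w‖ ^ 2 := by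
  simp only [norm_sq_eq, Complex.sub_re, Complex.sub_im, Complex.add_re, Complex.add_im]; ring

theorem T_arith {κ s η ω Hs G p ε : ℝ} (hκ : 0 < κ) (hκ1 : κ ≤ 1 / 16) (hs : 0 < s)
    (hω : ω ^ 2 ≤ κ) (hHs0 : 0 ≤ Hs) (hHs : 2 * Hs ≤ κ) (hη : η ≤ κ * s) (hp : p ≤ 2) (hp0 : 0 ≤ p)
    (h1 : 2 * ((1 - ω ^ 2 - 2 * κ - 2 * Hs) * (2 * s)) ≤ G)
    (h2 : G ≤ 2 * ((1 + 2 * Hs) * (η + s * p + 2 * (κ * s)))) (hε : 128 * κ ≤ ε ^ 2) :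
    4 - p ^ 2 < ε ^ 2 := by
  have h3 : (1 + 2 * Hs) * (η + s * p + 2 * (κ * s)) ≤ (1 + κ) * (s * (p + 3 * κ)) := by
    have e1 : η + s * p + 2 * (κ * s) ≤ s * (p + 3 * κ) := by nlinarith
    have e2 : 0 ≤ s * (p + 3 * κ) := by positivity
    calc _ ≤ (1 + 2 * Hs) * (s * (p + 3 * κ)) := mul_le_mul_of_nonneg_left e1 (by linarith)
      _ ≤ _ := mul_le_mul_of_nonneg_right (by linarith) e2
  have h4 : s * (2 * (1 - 4 * κ)) ≤ s * ((1 + κ) * (p + 3 * κ)) := by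
    have : (1 - 4 * κ) * (2 * s) ≤ (1 - ω ^ 2 - 2 * κ - 2 * Hs) * (2 * s) :=
      mul_le_mul_of_nonneg_right (by linarith) (by linarith)
    nlinarith
  have h5 := le_of_mul_le_mul_left h4 hs
  have h6 : 2 - 16 * κ ≤ p := by nlinarith
  have h7 : (2 - 16 * κ) ^ 2 ≤ p ^ 2 := pow_le_pow_left₀ (by linarith) h6 2
  nlinarith

set_option maxHeartbeats 1000000 in
/-- The horizontal field at an almost vertical point controls its value at nearby points, even
when the heights are far apart. Along each of the two level curves, of length `2 s`, the potential
`F` grows by almost `2 s`; hence the two segments from the start of one curve to the end of the other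
have total length almost `4 s`. This total is about `2 s |X(B) + X(B')|`, so that `|X(B) + X(B')|` is
almost `2` and the parallelogram law applies. -/
theorem transfer (H a ε : ℝ) (hH : 0 < H) (ha : 0 < a) (hε : 0 < ε) :
    ∃ η > 0, ∀ Ω u, ∀ B B' : ℂ, Sol H Ω u → eB (pt B) a ⊆ Ω → eB (pt B') a ⊆ Ω →
      ‖B' - B‖ ≤ η → wv u (pt B') ≤ η → ‖XC u B - XC u B'‖ < ε := by
  obtain ⟨κ, hκ, hκ1, hκε⟩ : ∃ κ : ℝ, 0 < κ ∧ κ ≤ 1 / 16 ∧ 128 * κ ≤ ε ^ 2 := by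
    refine ⟨min (1 / 16) (ε ^ 2 / 128), by positivity, min_le_left _ _, ?_⟩
    have := min_le_right (1 / 16) (ε ^ 2 / 128)
    linarith
  obtain ⟨δ, hδ, hmod⟩ := mod_C H a κ hH ha hκ
  obtain ⟨s, hs, hsδ, hsa, hsH⟩ : ∃ s : ℝ, 0 < s ∧ s < δ ∧ 4 * s ≤ a ∧ 2 * (H * s) ≤ κ := by
    refine ⟨min (min (δ / 2) (a / 4)) (κ / (2 * H)), by positivity, ?_, ?_, ?_⟩
    · have := min_le_left (min (δ / 2) (a / 4)) (κ / (2 * H))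
      have := min_le_left (δ / 2) (a / 4)
      linarith
    · have := min_le_left (min (δ / 2) (a / 4)) (κ / (2 * H))
      have := min_le_right (δ / 2) (a / 4)
      linarith
    · have := min_le_right (min (δ / 2) (a / 4)) (κ / (2 * H))
      rw [le_div_iff₀ (by positivity)] at this
      linarith
  obtain ⟨r, hr, hwr⟩ := w_small H a κ hH ha hκ
  refine ⟨min (min r (κ / 4)) (κ * s), by positivity, fun Ω u B B' h hB hB' hBB hw' => ?_⟩
  have hη1 := hBB.trans ((min_le_left _ _).trans (min_le_left _ _))
  have hη2 := hBB.trans (min_le_right _ _)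
  have hw'κ : wv u (pt B') ≤ κ / 4 := hw'.trans ((min_le_left _ _).trans (min_le_right _ _))
  have hwB : wv u (pt B) < κ := hwr Ω u B B' h hB hη1 (by linarith)
  obtain ⟨α, hα0, hαd, hαA, hαc, -⟩ := h.level_curve hB hs hsa
  obtain ⟨β, hβ0, hβd, hβA, hβc, -⟩ := h.level_curve hB' hs hsa
  have hαX : ∀ τ ∈ Icc (-s) s, ‖XC u (α τ) - XC u B‖ ≤ κ :=
    fun τ hτ => hmod Ω u B _ h hB (hαc δ hsδ τ hτ)
  have hβX : ∀ τ ∈ Icc (-s) s, ‖XC u (β τ) - XC u B'‖ ≤ κ :=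
    fun τ hτ => hmod Ω u B' _ h hB' (hβc δ hsδ τ hτ)
  obtain ⟨F, hF⟩ := h.potential B B ha.le hB
  have hds : ‖B' - B‖ ≤ s := hη2.trans (by nlinarith)
  have i1 := pot_incr hH hs hF hαd hαA hαX (d := s) (by simpa using hs.le) (by linarith) hwB.le
  have i2 := pot_incr hH hs hF hβd hβA hβX (d := s) hds (by linarith) (ω := κ) (by linarith)
  have hp : s ∈ Icc (-s) s := ⟨by linarith, le_rfl⟩
  have hm : -s ∈ Icc (-s) s := ⟨le_rfl, by linarith⟩
  have hβB : ∀ τ ∈ Icc (-s) s, ‖β τ - B‖ ≤ 2 * s := fun τ hτ => by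
    have := norm_sub_le_norm_sub_add_norm_sub (β τ) B' B
    linarith [hβA τ hτ]
  have j1 := pot_lip hH hF (r := 2 * s) (by linarith) (z := α (-s)) (z' := β s)
    ((hαA _ hm).trans (by linarith)) (hβB _ hp)
  have j2 := pot_lip hH hF (r := 2 * s) (by linarith) (z := β (-s)) (z' := α s)
    (hβB _ hm) ((hαA _ hp).trans (by linarith))
  have l1 := lin_approx hs hα0 hαd hαX hp
  have l2 := lin_approx hs hα0 hαd hαX hm
  have l3 := lin_approx hs hβ0 hβd hβX hp
  have l4 := lin_approx hs hβ0 hβd hβX hm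
  rw [abs_neg] at l2 l4
  rw [abs_of_pos hs] at l1 l2 l3 l4
  have hnI : ‖(s : ℂ) * (Complex.I * (XC u B + XC u B'))‖ = s * ‖XC u B + XC u B'‖ := by
    rw [norm_mul, norm_mul, Complex.norm_I, Complex.norm_real, Real.norm_of_nonneg hs.le, one_mul]
  have k1 : ‖β s - α (-s)‖ ≤ ‖B' - B‖ + s * ‖XC u B + XC u B'‖ + 2 * (κ * s) := by
    have e : β s - α (-s) = (B' - B) + s * (Complex.I * (XC u B + XC u B'))
        + ((β s - (B' + s * (Complex.I * XC u B')))
          - (α (-s) - (B + (-s : ℝ) * (Complex.I * XC u B)))) := by push_cast; ring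
    rw [e]
    refine (norm_add₃_le).trans ?_
    rw [hnI]
    have := norm_sub_le (β s - (B' + s * (Complex.I * XC u B')))
      (α (-s) - (B + (-s : ℝ) * (Complex.I * XC u B)))
    linarith
  have k2 : ‖α s - β (-s)‖ ≤ ‖B' - B‖ + s * ‖XC u B + XC u B'‖ + 2 * (κ * s) := by
    have e : α s - β (-s) = -(B' - B) + s * (Complex.I * (XC u B + XC u B'))
        + ((α s - (B + s * (Complex.I * XC u B)))
          - (β (-s) - (B' + (-s : ℝ) * (Complex.I * XC u B')))) := by push_cast; ring
    rw [e]
    refine (norm_add₃_le).trans ?_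
    rw [hnI, norm_neg]
    have := norm_sub_le (α s - (B + s * (Complex.I * XC u B)))
      (β (-s) - (B' + (-s : ℝ) * (Complex.I * XC u B')))
    linarith
  have hc : 0 ≤ 1 + H * (2 * s) := by positivity
  have j1' := j1.trans (mul_le_mul_of_nonneg_left k1 hc)
  have j2' := j2.trans (mul_le_mul_of_nonneg_left k2 hc)
  have n1 := XC_norm_le u B
  have n2 := XC_norm_le u B'
  have hfin := T_arith (κ := κ) (s := s) (η := ‖B' - B‖) (ω := κ) (Hs := H * s)
    (G := F (α s) - F (α (-s)) + (F (β s) - F (β (-s)))) (p := ‖XC u B + XC u B'‖) (ε := ε)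
    hκ hκ1 hs (by nlinarith) (by positivity) hsH hη2
    ((norm_add_le _ _).trans (by linarith)) (norm_nonneg _) (by linarith) (by linarith) hκε
  have hpar := par_law (XC u B) (XC u B')
  have m1 : ‖XC u B‖ ^ 2 ≤ 1 := by nlinarith [norm_nonneg (XC u B)]
  have m2 : ‖XC u B'‖ ^ 2 ≤ 1 := by nlinarith [norm_nonneg (XC u B')]
  have : ‖XC u B - XC u B'‖ ^ 2 < ε ^ 2 := by linarith
  exact lt_of_pow_lt_pow_left₀ 2 hε.le this

/-! ### Comparison with the arc of radius `1/(2H)` -/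

/-- The function `√(1 - 4H²p²)`; `p ↦ -√(1 - 4H²p²)/(2H)` is a graph of curvature `2H`. -/
def Sf (H p : ℝ) : ℝ := Real.sqrt (1 - 4 * H ^ 2 * p ^ 2)

theorem Sf_sq {H p : ℝ} (h : |H * p| ≤ 1 / 8) : Sf H p ^ 2 = 1 - 4 * H ^ 2 * p ^ 2 := by
  unfold Sf
  rw [Real.sq_sqrt]
  have := abs_le.1 h
  nlinarith

theorem Sf_nonneg (H p : ℝ) : 0 ≤ Sf H p := Real.sqrt_nonneg _

theorem Sf_ge {H p : ℝ} (h : |H * p| ≤ 1 / 8) : 1 / 2 ≤ Sf H p := by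
  have h1 := Sf_sq h
  have h2 := Sf_nonneg H p
  have h3 := abs_le.1 h
  by_contra! hc
  nlinarith

theorem Sf_continuous (H : ℝ) : Continuous (Sf H) := by
  unfold Sf; fun_prop

theorem Sf_deriv {H p : ℝ} (h : |H * p| ≤ 1 / 8) :
    HasDerivAt (Sf H) (-(4 * H ^ 2 * p) / Sf H p) p := by
  have h1 := Sf_sq h
  have h2 := Sf_ge h
  have h0 : (1 - 4 * H ^ 2 * p ^ 2) ≠ 0 := by
    rw [← h1]; positivity
  have e : HasDerivAt (fun p : ℝ => 1 - 4 * H ^ 2 * p ^ 2) (-(8 * H ^ 2 * p)) p := by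
    refine (((hasDerivAt_pow 2 p).const_mul (4 * H ^ 2)).const_sub 1).congr_deriv ?_
    simp; ring
  refine (e.sqrt h0).congr_deriv ?_
  change _ / (2 * Sf H p) = _
  have : Sf H p ≠ 0 := by linarith
  field_simp
  ring

theorem Sf_lip {H p q : ℝ} (hH : 0 < H) (hp : |H * p| ≤ 1 / 8) (hq : |H * q| ≤ 1 / 8) :
    |Sf H p - Sf H q| ≤ 2 * H * |p - q| := by
  have h1 := Sf_sq hp
  have h2 := Sf_sq hq
  have h3 := Sf_ge hp
  have h4 := Sf_ge hq
  have h5 : (Sf H p - Sf H q) * (Sf H p + Sf H q) = -(4 * H * (p - q)) * (H * p + H * q) := by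
    linear_combination h1 - h2
  have h6 := congrArg abs h5
  rw [abs_mul, abs_mul, abs_neg, abs_mul, abs_of_pos (by positivity : 0 < 4 * H)] at h6
  have h7 : |H * p + H * q| ≤ 1 / 4 := (abs_add_le _ _).trans (by linarith)
  have h8 : 1 ≤ |Sf H p + Sf H q| := by rw [abs_of_nonneg (by linarith)]; linarith
  have h9 := abs_nonneg (Sf H p - Sf H q)
  have h10 : 0 ≤ 4 * H * |p - q| := by positivity
  nlinarith

/-- The comparison unit field, of divergence `2H`, in the frame where the chord is horizontal;
its value depends on the abscissa only. -/
def X0 (H p : ℝ) : ℂ := ⟨2 * H * p, -Sf H p⟩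

theorem X0_normSq {H p : ℝ} (h : |H * p| ≤ 1 / 8) : ‖X0 H p‖ ^ 2 = 1 := by
  rw [norm_sq_eq]
  simp only [X0]
  linear_combination Sf_sq h

theorem X0_lip {H p q : ℝ} (hH : 0 < H) (hp : |H * p| ≤ 1 / 8) (hq : |H * q| ≤ 1 / 8) :
    ‖X0 H p - X0 H q‖ ≤ 4 * H * |p - q| := by
  refine (Complex.norm_le_abs_re_add_abs_im _).trans ?_
  have h1 := Sf_lip hH hp hq
  have e1 : (X0 H p - X0 H q).re = 2 * H * (p - q) := by simp [X0]; ring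
  have e2 : (X0 H p - X0 H q).im = -(Sf H p - Sf H q) := by simp [X0]; ring
  rw [e1, e2, abs_neg, abs_mul, abs_of_pos (by positivity : 0 < 2 * H)]
  linarith

theorem hasDerivAt_re {g : ℝ → ℂ} {v : ℂ} {τ : ℝ} (h : HasDerivAt g v τ) :
    HasDerivAt (fun t => (g t).re) v.re τ := Complex.reCLM.hasFDerivAt.comp_hasDerivAt τ h

theorem hasDerivAt_im {g : ℝ → ℂ} {v : ℂ} {τ : ℝ} (h : HasDerivAt g v τ) :
    HasDerivAt (fun t => (g t).im) v.im τ := Complex.imCLM.hasFDerivAt.comp_hasDerivAt τ h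

/-- Coordinate of `z` in the orthonormal frame with origin `m` and first axis `e`. -/
def fr (m e z : ℂ) : ℂ := (z - m) * (starRingEnd ℂ) e

theorem hasDerivAt_fr {m e : ℂ} {g : ℝ → ℂ} {v : ℂ} {τ : ℝ} (h : HasDerivAt g v τ) :
    HasDerivAt (fun t => fr m e (g t)) (v * (starRingEnd ℂ) e) τ :=
  (h.sub_const m).mul_const _

/-- Potential of `X - X₀`, in the rotated frame. -/
theorem Sol.rot_pot {H : ℝ} {Ω : Set (ℝ × ℝ)} {u : ℝ × ℝ → ℝ} (h : Sol H Ω u) (m A e : ℂ) {a : ℝ}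
    (he : e.re ^ 2 + e.im ^ 2 = 1) (ha : 0 ≤ a) (hA : eB (pt A) a ⊆ Ω) :
    ∃ D : ℂ → ℝ, ∀ (g : ℝ → ℂ) (v : ℂ) (τ : ℝ), HasDerivAt g v τ → ‖g τ - A‖ < a →
      HasDerivAt (fun t => D (g t))
        ((XC u (g τ) * (starRingEnd ℂ) e - X0 H (fr m e (g τ)).re).re * (v * (starRingEnd ℂ) e).im
        - (XC u (g τ) * (starRingEnd ℂ) e - X0 H (fr m e (g τ)).re).im
          * (v * (starRingEnd ℂ) e).re) τ := by
  obtain ⟨F, hF⟩ := h.potential m A ha hA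
  set Ψ : ℝ → ℝ := fun p => ∫ x in (0 : ℝ)..p, Sf H x with hΨ
  have hΨd : ∀ p, HasDerivAt Ψ (Sf H p) p := fun p =>
    (Sf_continuous H).integral_hasStrictDerivAt 0 p |>.hasDerivAt
  refine ⟨fun z => F z - (H * ((fr m e z).re * (fr m e z).im) + Ψ (fr m e z).re),
    fun g v τ hg hgA => ?_⟩
  have h1 := hF g v τ hg hgA
  have h2 := hasDerivAt_fr (m := m) (e := e) hg
  have h3 := hasDerivAt_re h2
  have h4 := hasDerivAt_im h2
  have h5 := (hΨd (fr m e (g τ)).re).comp τ h3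
  refine (h1.sub (((h3.mul h4).const_mul H).add h5)).congr_deriv ?_
  simp only [fr, X0, Complex.sub_re, Complex.sub_im, Complex.mul_re, Complex.mul_im,
    Complex.conj_re, Complex.conj_im, Complex.ofReal_re, Complex.ofReal_im]
  generalize Sf H _ = S
  linear_combination (-1 : ℝ) * ((XC u (g τ)).re * v.im - (XC u (g τ)).im * v.re
    - H * ((g τ).re - m.re) * v.im + H * ((g τ).im - m.im) * v.re) * he

/-- Along the level curve the potential of `X - X₀` grows, up to the verticality defect `w²`,
while along the comparison arc with the same end points it decreases. -/
theorem Sol.compare {H : ℝ} {Ω : Set (ℝ × ℝ)} {u : ℝ × ℝ → ℝ} (h : Sol H Ω u) {m A e : ℂ}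
    {a s L : ℝ} (he : ‖e‖ = 1) (hA : eB (pt A) a ⊆ Ω) (hs : 0 < s) (hsa : 8 * s ≤ a)
    (hHs : 16 * (H * s) ≤ 1) (hL : 0 < L) (hLs : L ≤ s) {g : ℝ → ℂ}
    (hg : ∀ τ ∈ Icc (-s) s, HasDerivAt g (Complex.I * XC u (g τ)) τ)
    (hgA : ∀ τ ∈ Icc (-s) s, ‖g τ - A‖ ≤ s) (hgp : g s = m + L * e) (hgm : g (-s) = m - L * e)
    (hP : ∀ τ ∈ Icc (-s) s, |H * (fr m e (g τ)).re| ≤ 1 / 8) :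
    ∃ φ : ℝ → ℝ, φ s ≤ φ (-s) ∧ ∀ τ ∈ Icc (-s) s, HasDerivAt φ
      (1 / 2 * ‖XC u (g τ) * (starRingEnd ℂ) e - X0 H (fr m e (g τ)).re‖ ^ 2
        - 1 / 2 * wv u (pt (g τ)) ^ 2) τ := by
  have hH := h.hH
  have he2 : e.re ^ 2 + e.im ^ 2 = 1 := by rw [← norm_sq_eq, he]; norm_num
  have heconj : e * (starRingEnd ℂ) e = 1 := by
    rw [Complex.mul_conj, Complex.normSq_eq_norm_sq, he]; norm_num
  have hnc : ‖(starRingEnd ℂ) e‖ = 1 := by simpa using he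
  obtain ⟨D, hD⟩ := h.rot_pot m A e he2 (by linarith) hA
  refine ⟨fun t => D (g t), ?_, fun τ hτ => ?_⟩
  · -- the comparison arc
    have hHp : ∀ p ∈ Icc (-L) L, |H * p| ≤ 1 / 8 := by
      intro p hp
      rw [abs_mul, abs_of_pos hH]
      have : |p| ≤ L := abs_le.2 hp
      nlinarith
    set σ : ℝ → ℂ := fun p => m + (p + ((Sf H L - Sf H p) / (2 * H) : ℝ) * Complex.I) * e with hσ
    have hσp : σ L = m + L * e := by simp [hσ]
    have hSm : Sf H (-L) = Sf H L := by simp [Sf]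
    have hσm : σ (-L) = m - L * e := by simp [hσ, hSm]; ring
    have hmA : ‖m - A‖ ≤ s := by
      have e1 : m - A = (1 / 2 : ℂ) * ((g s - A) + (g (-s) - A)) := by rw [hgp, hgm]; ring
      rw [e1, norm_mul]
      have := norm_add_le (g s - A) (g (-s) - A)
      have h1 := hgA s ⟨by linarith, le_rfl⟩
      have h2 := hgA (-s) ⟨le_rfl, by linarith⟩
      norm_num
      linarith
    have hσfr : ∀ p, fr m e (σ p) = p + ((Sf H L - Sf H p) / (2 * H) : ℝ) * Complex.I := by
      intro p
      simp only [fr, hσ, add_sub_cancel_left]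
      rw [mul_assoc, heconj, mul_one]
    have hσd : ∀ p ∈ Icc (-L) L, HasDerivAt σ
        ((1 + ((2 * H * p) / Sf H p : ℝ) * Complex.I) * e) p := by
      intro p hp
      have e1 := Sf_deriv (hHp p hp)
      have e2 : HasDerivAt (fun p => (Sf H L - Sf H p) / (2 * H)) ((2 * H * p) / Sf H p) p := by
        refine ((e1.const_sub (Sf H L)).div_const (2 * H)).congr_deriv ?_
        have := Sf_ge (hHp p hp)
        have : Sf H p ≠ 0 := by linarith
        field_simp
        ring
      exact ((((hasDerivAt_id p).ofReal_comp.add (e2.ofReal_comp.mul_const Complex.I)).mul_const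
        e).const_add m).congr_deriv (by simp)
    have hσA : ∀ p ∈ Icc (-L) L, ‖σ p - A‖ < a := by
      intro p hp
      have e1 : σ p - A = (m - A) + (p + ((Sf H L - Sf H p) / (2 * H) : ℝ) * Complex.I) * e := by
        simp [hσ]; ring
      have e2 := Sf_lip hH (hHp L ⟨by linarith, le_rfl⟩) (hHp p hp)
      have e3 : |(Sf H L - Sf H p) / (2 * H)| ≤ |L - p| := by
        rw [abs_div, abs_of_pos (by positivity : 0 < 2 * H), div_le_iff₀ (by positivity)]
        linarith
      have e4 : |L - p| ≤ L + |p| := by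
        have := abs_sub L p
        rwa [abs_of_pos hL] at this
      have hpL : |p| ≤ L := abs_le.2 hp
      rw [e1]
      refine (norm_add_le _ _).trans_lt ?_
      rw [norm_mul, he, mul_one]
      have e5 := norm_add_le (p : ℂ) (((Sf H L - Sf H p) / (2 * H) : ℝ) * Complex.I)
      rw [norm_mul, Complex.norm_I, mul_one, Complex.norm_real, Complex.norm_real,
        Real.norm_eq_abs, Real.norm_eq_abs] at e5
      linarith
    have := incr_ge (f := fun p => -D (σ p)) (m := 0) (by linarith : -L ≤ L)
      (fun p hp => (hD σ _ p (hσd p hp) (hσA p hp)).neg) (by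
        intro p hp
        set ξ := XC u (σ p) * (starRingEnd ℂ) e with hξ
        have hξn : ‖ξ‖ ≤ 1 := by
          rw [hξ, norm_mul, hnc, mul_one]; exact XC_norm_le u _
        have hS := Sf_ge (hHp p hp)
        have hS2 := X0_normSq (hHp p hp)
        have hc := re_mul_conj_le ξ (X0 H p)
        have hre : (fr m e (σ p)).re = p := by
          rw [hσfr, Complex.add_re, Complex.re_ofReal_mul, Complex.I_re, Complex.ofReal_re]; ring
        rw [hre, mul_assoc, heconj, mul_one]
        have hX0 : ‖X0 H p‖ = 1 := by
          have := norm_nonneg (X0 H p)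
          nlinarith
        rw [hX0, mul_one] at hc
        have hS3 := Sf_sq (hHp p hp)
        have hne : Sf H p ≠ 0 := by linarith
        have key : -((ξ - X0 H p).re * (1 + ((2 * H * p) / Sf H p : ℝ) * Complex.I).im
            - (ξ - X0 H p).im * (1 + ((2 * H * p) / Sf H p : ℝ) * Complex.I).re)
            = (1 - (ξ.re * (X0 H p).re + ξ.im * (X0 H p).im)) / Sf H p := by
          simp [X0]
          field_simp
          linear_combination hS3
        rw [key]
        exact div_nonneg (by linarith) (by linarith))
    simp only [hσp, hσm] at this
    simp only [hgp, hgm]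
    linarith
  · have hin : ‖g τ - A‖ < a := (hgA τ hτ).trans_lt (by linarith)
    refine (hD g _ τ (hg τ hτ) hin).congr_deriv ?_
    have h1 := X0_normSq (hP τ hτ)
    have h2 : ‖XC u (g τ) * (starRingEnd ℂ) e‖ ^ 2 = 1 - wv u (pt (g τ)) ^ 2 := by
      rw [norm_mul, hnc, mul_one, XC_normSq]
    rw [norm_sq_eq] at h1 h2 ⊢
    rw [mul_assoc]
    set ξ := XC u (g τ) * (starRingEnd ℂ) e
    simp only [Complex.sub_re, Complex.sub_im, Complex.mul_re, Complex.mul_im, Complex.I_re,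
      Complex.I_im]
    linear_combination 1 / 2 * h2 - 1 / 2 * h1

/-- If `n²` has small integral, because `φ' = (n² - w²) / 2` with `w` small and `φ` does not increase
overall, and if `n` varies by at most `ε` over lengths `τ₁`, then `n ≤ 2 ε` on the middle half. -/
theorem flux_point {φ n w : ℝ → ℝ} {s wb ε τ₁ : ℝ} (hτ₁ : 0 < τ₁) (hτs : τ₁ ≤ s / 2)
    (hφ : ∀ τ ∈ Icc (-s) s, HasDerivAt φ (1 / 2 * n τ ^ 2 - 1 / 2 * w τ ^ 2) τ)
    (hw : ∀ τ ∈ Icc (-s) s, w τ ^ 2 ≤ wb) (hend : φ s ≤ φ (-s)) (hε : 0 ≤ ε)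
    (hn : ∀ τ ∈ Icc (-s) s, ∀ τ' ∈ Icc (-s) s, |τ' - τ| ≤ τ₁ → n τ ≤ n τ' + ε)
    (hsmall : 2 * wb * s < ε ^ 2 * τ₁) {τ : ℝ} (hτ : τ ∈ Icc (-(s / 2)) (s / 2)) :
    n τ ≤ 2 * ε := by
  by_contra! hc
  obtain ⟨h1, h2⟩ := hτ
  have i1 := incr_ge (a := -s) (b := τ) (m := -(wb / 2)) (by linarith)
    (fun t ht => hφ t ⟨ht.1, by linarith [ht.2]⟩) (fun t ht => by
      have := hw t ⟨ht.1, by linarith [ht.2]⟩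
      nlinarith [sq_nonneg (n t)])
  have i2 := incr_ge (a := τ) (b := τ + τ₁) (m := ε ^ 2 / 2 - wb / 2) (by linarith)
    (fun t ht => hφ t ⟨by linarith [ht.1], by linarith [ht.2]⟩) (fun t ht => by
      have htI : t ∈ Icc (-s) s := ⟨by linarith [ht.1], by linarith [ht.2]⟩
      have e1 := hw t htI
      have e2 := hn τ ⟨by linarith, by linarith⟩ t htI
        (by rw [abs_of_nonneg (by linarith [ht.1])]; linarith [ht.2])
      have e3 : ε ≤ n t := by linarith
      nlinarith)
  have i3 := incr_ge (a := τ + τ₁) (b := s) (m := -(wb / 2)) (by linarith)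
    (fun t ht => hφ t ⟨by linarith [ht.1], ht.2⟩) (fun t ht => by
      have := hw t ⟨by linarith [ht.1], ht.2⟩
      nlinarith [sq_nonneg (n t)])
  nlinarith

theorem sub_rot {e X Y : ℂ} (he : ‖e‖ = 1) :
    ‖X - e * Y‖ = ‖X * (starRingEnd ℂ) e - Y‖ := by
  have heconj : e * (starRingEnd ℂ) e = 1 := by
    rw [Complex.mul_conj, Complex.normSq_eq_norm_sq, he]; norm_num
  have : X - e * Y = e * (X * (starRingEnd ℂ) e - Y) := by linear_combination (-X) * heconj
  rw [this, norm_mul, he, one_mul]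

/-- The centre of the osculating comparison circle barely moves along the level curve, so that `X`
is close to the radial field of the circle of centre `z₀`. -/
theorem centre_bound {H : ℝ} (hH : 0 < H) {u : ℝ × ℝ → ℝ} {m A e N₀ : ℂ} {s ε : ℝ}
    (he : ‖e‖ = 1) (hs : 0 < s) (hHs : 4 * (H * s) ≤ 1) {g : ℝ → ℂ} (hg0 : g 0 = A)
    (hg : ∀ τ ∈ Icc (-s) s, HasDerivAt g (Complex.I * XC u (g τ)) τ)
    (hP : ∀ τ ∈ Icc (-s) s, |H * (fr m e (g τ)).re| ≤ 1 / 8)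
    (hn : ∀ τ ∈ Icc (-s) s,
      ‖XC u (g τ) * (starRingEnd ℂ) e - X0 H (fr m e (g τ)).re‖ ≤ ε)
    (hN : ‖XC u A + N₀‖ ≤ ε) {τ : ℝ} (hτ : τ ∈ Icc (-s) s) :
    ‖XC u (g τ) - 2 * H * (g τ - (A + (1 / (2 * H) : ℝ) * N₀))‖ ≤ 4 * ε := by
  have heconj : e * (starRingEnd ℂ) e = 1 := by
    rw [Complex.mul_conj, Complex.normSq_eq_norm_sq, he]; norm_num
  have hHc : (H : ℂ) ≠ 0 := by exact_mod_cast hH.ne'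
  set R : ℝ := 1 / (2 * H) with hR
  have hRH : 2 * H * R = 1 := by rw [hR]; field_simp
  have hRHc : 2 * (H : ℂ) * R = 1 := by exact_mod_cast hRH
  set Z : ℝ → ℂ := fun t => (((fr m e (g t)).im + R * Sf H (fr m e (g t)).re : ℝ) : ℂ) * Complex.I
    with hZ
  have hZeq : ∀ t, m + e * Z t = g t - R * (e * X0 H (fr m e (g t)).re) := by
    intro t
    have h1 : fr m e (g t) - R * X0 H (fr m e (g t)).re = Z t := by
      apply Complex.ext
      · simp [hZ, X0]
        linear_combination (-(fr m e (g t)).re) * hRH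
      · simp [hZ, X0]
    have h2 : e * fr m e (g t) = g t - m := by
      simp only [fr]; linear_combination (g t - m) * heconj
    rw [← h1]
    linear_combination h2
  have hε : 0 ≤ ε := (norm_nonneg _).trans hN
  have hZd : ∀ t ∈ Icc (-s) s, HasDerivAt Z
      ((((Complex.I * XC u (g t) * (starRingEnd ℂ) e).im + R * (-(4 * H ^ 2 * (fr m e (g t)).re)
        / Sf H (fr m e (g t)).re * (Complex.I * XC u (g t) * (starRingEnd ℂ) e).re) : ℝ) : ℂ)
        * Complex.I) t := by
    intro t ht
    have h2 := hasDerivAt_fr (m := m) (e := e) (hg t ht)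
    have h3 := hasDerivAt_re h2
    have h4 := hasDerivAt_im h2
    have h5 := (Sf_deriv (hP t ht)).comp t h3
    exact ((h4.add (h5.const_mul R)).ofReal_comp.mul_const Complex.I)
  have hZb := curve_bound hZd (K := 2 * ε) (by
    intro t ht
    have hS := Sf_ge (hP t ht)
    have hne : Sf H (fr m e (g t)).re ≠ 0 := by linarith
    have hx := cross_le (XC u (g t) * (starRingEnd ℂ) e - X0 H (fr m e (g t)).re)
      (X0 H (fr m e (g t)).re)
    have hX0 : ‖X0 H (fr m e (g t)).re‖ = 1 := by
      have := norm_nonneg (X0 H (fr m e (g t)).re)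
      have := X0_normSq (hP t ht)
      nlinarith
    rw [hX0, mul_one] at hx
    have hx := hx.trans (hn t ht)
    rw [norm_mul, Complex.norm_I, mul_one, Complex.norm_real, Real.norm_eq_abs, mul_assoc]
    set ξ := XC u (g t) * (starRingEnd ℂ) e
    set p := (fr m e (g t)).re
    have key : (Complex.I * ξ).im + R * (-(4 * H ^ 2 * p) / Sf H p * (Complex.I * ξ).re)
        = -((ξ - X0 H p).re * (X0 H p).im - (ξ - X0 H p).im * (X0 H p).re) / Sf H p := by
      simp [X0]
      field_simp
      linear_combination (2 * H * p * ξ.im) * hRH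
    rw [key, abs_div, abs_neg, abs_of_pos (by linarith : 0 < Sf H p), div_le_iff₀ (by linarith)]
    nlinarith) (τ := 0) ⟨by linarith, hs.le⟩ hτ
  have hτs : |τ - 0| ≤ s := by rw [sub_zero]; exact abs_le.2 hτ
  have h0 := hn 0 ⟨by linarith, hs.le⟩
  have h1 := hn τ hτ
  rw [← sub_rot he] at h0 h1
  rw [hg0] at h0
  have e1 : XC u (g τ) - 2 * H * (g τ - (A + R * N₀))
      = (XC u (g τ) - e * X0 H (fr m e (g τ)).re) - 2 * H * (e * (Z τ - Z 0))
        - (XC u A - e * X0 H (fr m e A).re) + (XC u A + N₀) := by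
    have z1 := hZeq τ
    have z2 := hZeq 0
    rw [hg0] at z2
    linear_combination (2 * H) * z1 - (2 * H) * z2
      + (-(e * X0 H (fr m e (g τ)).re) + e * X0 H (fr m e A).re + N₀) * hRHc
  rw [e1]
  have e2 : ‖2 * (H : ℂ) * (e * (Z τ - Z 0))‖ ≤ ε := by
    rw [norm_mul, norm_mul, norm_mul, he, Complex.norm_real, Real.norm_of_nonneg hH.le, one_mul]
    norm_num
    have : ‖Z τ - Z 0‖ ≤ 2 * ε * s := hZb.trans (mul_le_mul_of_nonneg_left hτs (by linarith))
    calc 2 * H * ‖Z τ - Z 0‖ ≤ 2 * H * (2 * ε * s) := mul_le_mul_of_nonneg_left this (by linarith)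
      _ = (4 * (H * s)) * ε := by ring
      _ ≤ ε := by nlinarith
  refine (norm_add_le _ _).trans ?_
  have e3 := norm_sub_le ((XC u (g τ) - e * X0 H (fr m e (g τ)).re) - 2 * H * (e * (Z τ - Z 0)))
    (XC u A - e * X0 H (fr m e A).re)
  have e4 := norm_sub_le (XC u (g τ) - e * X0 H (fr m e (g τ)).re) (2 * H * (e * (Z τ - Z 0)))
  linarith

/-- A level curve along which `X` is close to the radial field `2H (z - z₀)` is close to the uniform
rotation about `z₀`. -/
theorem rot_bound {H : ℝ} {u : ℝ × ℝ → ℝ} {A z₀ : ℂ} {s ε : ℝ} (hs : 0 < s)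
    {g : ℝ → ℂ} (hg0 : g 0 = A)
    (hg : ∀ τ ∈ Icc (-s) s, HasDerivAt g (Complex.I * XC u (g τ)) τ)
    (hX : ∀ τ ∈ Icc (-s) s, ‖XC u (g τ) - 2 * H * (g τ - z₀)‖ ≤ ε) {τ : ℝ}
    (hτ : τ ∈ Icc (-s) s) :
    ‖g τ - (z₀ + Complex.exp ((2 * H * τ : ℝ) * Complex.I) * (A - z₀))‖ ≤ ε * s := by
  have hd : ∀ t ∈ Icc (-s) s, HasDerivAt
      (fun t : ℝ => Complex.exp ((-(2 * H * t) : ℝ) * Complex.I) * (g t - z₀))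
      (Complex.exp ((-(2 * H * t) : ℝ) * Complex.I)
        * (Complex.I * (XC u (g t) - 2 * H * (g t - z₀)))) t := by
    intro t ht
    have e1 : HasDerivAt (fun t : ℝ => -(2 * H * t)) (-(2 * H)) t := by
      exact (((hasDerivAt_id t).const_mul (2 * H)).neg).congr_deriv (by simp)
    have e2 := (e1.ofReal_comp.mul_const Complex.I).cexp
    refine (e2.mul ((hg t ht).sub_const z₀)).congr_deriv ?_
    push_cast
    ring
  have hb := curve_bound hd (K := ε) (by
    intro t ht
    rw [norm_mul, Complex.norm_exp_ofReal_mul_I, one_mul, norm_mul, Complex.norm_I, one_mul]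
    exact hX t ht) (τ := 0) ⟨by linarith, hs.le⟩ hτ
  have hε : 0 ≤ ε := (norm_nonneg _).trans (hX τ hτ)
  have hτs : |τ - 0| ≤ s := by rw [sub_zero]; exact abs_le.2 hτ
  refine le_trans (le_of_eq ?_) (hb.trans (mul_le_mul_of_nonneg_left hτs hε))
  have hexp : Complex.exp ((2 * H * τ : ℝ) * Complex.I)
      * Complex.exp ((-(2 * H * τ) : ℝ) * Complex.I) = 1 := by
    rw [← Complex.exp_add]; push_cast; rw [← Complex.exp_zero]; congr 1; ring
  have h1 := Complex.norm_exp_ofReal_mul_I (2 * H * τ)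
  rw [show g τ - (z₀ + Complex.exp ((2 * H * τ : ℝ) * Complex.I) * (A - z₀))
    = Complex.exp ((2 * H * τ : ℝ) * Complex.I)
      * (Complex.exp ((-(2 * H * τ) : ℝ) * Complex.I) * (g τ - z₀) - (A - z₀)) by
      linear_combination (-(g τ - z₀)) * hexp, norm_mul, h1, one_mul]
  simp [hg0]

/-! ### Propagation along a short arc -/

/-- The chord joining the endpoints of a level curve: unit direction `e`, midpoint `m`,
half-length `L`. -/
theorem chord {u : ℝ × ℝ → ℝ} {A : ℂ} {s : ℝ} (hs : 0 < s) {g : ℝ → ℂ} (hg0 : g 0 = A)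
    (hg : ∀ τ ∈ Icc (-s) s, HasDerivAt g (Complex.I * XC u (g τ)) τ)
    (hgA : ∀ τ ∈ Icc (-s) s, ‖g τ - A‖ ≤ s)
    (hX : ∀ τ ∈ Icc (-s) s, ‖XC u (g τ) - XC u A‖ ≤ 1 / 8) (hXA : 1 / 2 ≤ ‖XC u A‖) :
    ∃ (m e : ℂ) (L : ℝ), ‖e‖ = 1 ∧ 0 < L ∧ L ≤ s ∧ g s = m + L * e ∧ g (-s) = m - L * e ∧
      ∀ τ ∈ Icc (-s) s, |(fr m e (g τ)).re| ≤ 2 * s := by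
  have hp : s ∈ Icc (-s) s := ⟨by linarith, le_rfl⟩
  have hm : -s ∈ Icc (-s) s := ⟨le_rfl, by linarith⟩
  have l1 := lin_approx hs hg0 hg hX hp
  have l2 := lin_approx hs hg0 hg hX hm
  rw [abs_neg] at l2
  rw [abs_of_pos hs] at l1 l2
  have hlow : s / 2 ≤ ‖g s - g (-s)‖ := by
    have e1 : ((2 * s : ℝ) : ℂ) * (Complex.I * XC u A) = (g s - g (-s))
        - ((g s - (A + s * (Complex.I * XC u A))) - (g (-s) - (A + (-s : ℝ) * (Complex.I * XC u A)))) := by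
      push_cast; ring
    have e2 : ‖((2 * s : ℝ) : ℂ) * (Complex.I * XC u A)‖ = 2 * s * ‖XC u A‖ := by
      rw [norm_mul, norm_mul, Complex.norm_I, one_mul, Complex.norm_real,
        Real.norm_of_nonneg (by linarith)]
    have e3 := norm_sub_le (g s - g (-s))
        ((g s - (A + s * (Complex.I * XC u A))) - (g (-s) - (A + (-s : ℝ) * (Complex.I * XC u A))))
    have e4 := norm_sub_le (g s - (A + s * (Complex.I * XC u A)))
      (g (-s) - (A + (-s : ℝ) * (Complex.I * XC u A)))
    rw [← e1, e2] at e3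
    nlinarith
  have hup : ‖g s - g (-s)‖ ≤ 2 * s := by
    have := norm_sub_le (g s - A) (g (-s) - A)
    rw [sub_sub_sub_cancel_right] at this
    linarith [hgA _ hp, hgA _ hm]
  set d := ‖g s - g (-s)‖ with hd
  have hd0 : 0 < d := by linarith
  have hdc : (d : ℂ) ≠ 0 := by exact_mod_cast hd0.ne'
  refine ⟨(g s + g (-s)) / 2, (g s - g (-s)) / d, d / 2, ?_, by linarith, by linarith, ?_, ?_, ?_⟩
  · rw [norm_div, Complex.norm_real, Real.norm_of_nonneg hd0.le, ← hd, div_self hd0.ne']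
  · push_cast; field_simp; ring
  · push_cast; field_simp; ring
  · intro τ hτ
    refine (Complex.abs_re_le_norm _).trans ?_
    rw [fr, norm_mul, Complex.norm_conj, norm_div, Complex.norm_real,
      Real.norm_of_nonneg hd0.le, ← hd, div_self hd0.ne', mul_one]
    have e1 : g τ - (g s + g (-s)) / 2 = (g τ - A) - ((g s - A) + (g (-s) - A)) / 2 := by ring
    rw [e1]
    have e2 := norm_sub_le (g τ - A) (((g s - A) + (g (-s) - A)) / 2)
    have e3 := norm_add_le (g s - A) (g (-s) - A)
    rw [norm_div] at e2
    norm_num at e2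
    linarith [hgA _ hp, hgA _ hm, hgA _ hτ]

/-- If the normal is almost horizontal along a level curve, the field `X` is, on the middle half of
the curve, uniformly close to the radial field of the circle of radius `1 / (2 H)` through `A`. -/
theorem Sol.near_radial {H : ℝ} {Ω : Set (ℝ × ℝ)} {u : ℝ × ℝ → ℝ} (h : Sol H Ω u) {A N₀ : ℂ}
    {a s ε τ₁ wb : ℝ} (hA : eB (pt A) a ⊆ Ω) (hs : 0 < s) (hsa : 8 * s ≤ a)
    (hHs : 16 * (H * s) ≤ 1) {g : ℝ → ℂ} (hg0 : g 0 = A)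
    (hg : ∀ τ ∈ Icc (-s) s, HasDerivAt g (Complex.I * XC u (g τ)) τ)
    (hgA : ∀ τ ∈ Icc (-s) s, ‖g τ - A‖ ≤ s)
    (hX : ∀ τ ∈ Icc (-s) s, ‖XC u (g τ) - XC u A‖ ≤ 1 / 8) (hXA : 1 / 2 ≤ ‖XC u A‖)
    (hτ₁ : 0 < τ₁) (hτs : τ₁ ≤ s / 2) (hτH : 4 * (H * τ₁) ≤ ε / 2) (hε : 0 < ε)
    (hmod : ∀ τ ∈ Icc (-s) s, ∀ τ' ∈ Icc (-s) s, |τ' - τ| ≤ τ₁ →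
      ‖XC u (g τ') - XC u (g τ)‖ ≤ ε / 2)
    (hw : ∀ τ ∈ Icc (-s) s, wv u (pt (g τ)) ^ 2 ≤ wb) (hsmall : 2 * wb * s < ε ^ 2 * τ₁)
    (hN : ‖XC u A + N₀‖ ≤ 2 * ε) {τ : ℝ} (hτ : τ ∈ Icc (-(s / 2)) (s / 2)) :
    ‖XC u (g τ) - 2 * H * (g τ - (A + (1 / (2 * H) : ℝ) * N₀))‖ ≤ 8 * ε := by
  have hH := h.hH
  obtain ⟨m, e, L, he, hL, hLs, hgp, hgm, hP0⟩ := chord hs hg0 hg hgA hX hXA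
  have hP : ∀ τ ∈ Icc (-s) s, |H * (fr m e (g τ)).re| ≤ 1 / 8 := by
    intro t ht
    rw [abs_mul, abs_of_pos hH]
    nlinarith [hP0 t ht]
  obtain ⟨φ, hφ1, hφ2⟩ := h.compare he hA hs hsa hHs hL hLs hg hgA hgp hgm hP
  have hfr : ∀ t ∈ Icc (-s) s, ∀ t' ∈ Icc (-s) s,
      |(fr m e (g t)).re - (fr m e (g t')).re| ≤ |t' - t| := by
    intro t ht t' ht'
    have h1 := curve_bound hg (K := 1) (fun t _ => by
      rw [norm_mul, Complex.norm_I, one_mul]; exact XC_norm_le u _) ht ht'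
    have h2 : (fr m e (g t)).re - (fr m e (g t')).re
        = (-((g t' - g t) * (starRingEnd ℂ) e)).re := by
      rw [← Complex.sub_re]; congr 1; simp only [fr]; ring
    rw [h2]
    refine (Complex.abs_re_le_norm _).trans ?_
    rw [norm_neg, norm_mul, Complex.norm_conj, he]
    linarith
  have hhalf : ∀ t ∈ Icc (-(s / 2)) (s / 2), t ∈ Icc (-s) s := fun t ht =>
    ⟨by linarith [ht.1], by linarith [ht.2]⟩
  have hn : ∀ t ∈ Icc (-(s / 2)) (s / 2),
      ‖XC u (g t) * (starRingEnd ℂ) e - X0 H (fr m e (g t)).re‖ ≤ 2 * ε := by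
    intro t ht
    refine flux_point (φ := φ)
      (n := fun t => ‖XC u (g t) * (starRingEnd ℂ) e - X0 H (fr m e (g t)).re‖)
      (w := fun t => wv u (pt (g t))) hτ₁ hτs hφ2 hw hφ1 hε.le ?_ hsmall ht
    intro t ht t' ht' htt
    have h1 := hmod t ht t' ht' htt
    have h2 := X0_lip hH (hP t' ht') (hP t ht)
    have h3 := hfr t' ht' t ht
    rw [abs_sub_comm] at htt
    have h4 : 4 * H * |(fr m e (g t')).re - (fr m e (g t)).re| ≤ ε / 2 := by
      have : H * |(fr m e (g t')).re - (fr m e (g t)).re| ≤ H * τ₁ :=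
        mul_le_mul_of_nonneg_left (h3.trans htt) hH.le
      linarith
    have e1 : XC u (g t) * (starRingEnd ℂ) e - X0 H (fr m e (g t)).re
        = (XC u (g t') * (starRingEnd ℂ) e - X0 H (fr m e (g t')).re)
          - (XC u (g t') - XC u (g t)) * (starRingEnd ℂ) e
          + (X0 H (fr m e (g t')).re - X0 H (fr m e (g t)).re) := by ring
    have e2 := norm_add_le ((XC u (g t') * (starRingEnd ℂ) e - X0 H (fr m e (g t')).re)
          - (XC u (g t') - XC u (g t)) * (starRingEnd ℂ) e)
          (X0 H (fr m e (g t')).re - X0 H (fr m e (g t)).re)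
    have e3 := norm_sub_le (XC u (g t') * (starRingEnd ℂ) e - X0 H (fr m e (g t')).re)
          ((XC u (g t') - XC u (g t)) * (starRingEnd ℂ) e)
    rw [norm_mul (XC u (g t') - XC u (g t)), Complex.norm_conj, he, mul_one] at e3
    rw [← e1] at e2
    linarith
  have := centre_bound hH he (s := s / 2) (by linarith) (by nlinarith) hg0
    (fun t ht => hg t (hhalf t ht)) (fun t ht => hP t (hhalf t ht)) hn hN hτ
  linarith

/-- Propagation along a short arc, with a length `s / 2` depending only on `H` and on the radius `a`
of a disc contained in `Ω`: if `X` is close to `-N₀` at `A`, then `X` is close to the outward radial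
field at the points of the circle of radius `1 / (2 H)` through `A` with curvature direction `N₀`. -/
theorem local_prop (H a : ℝ) (hH : 0 < H) (ha : 0 < a) :
    ∃ s > 0, ∀ ε > 0, ∃ η > 0, ∀ (Ω : Set (ℝ × ℝ)) (u : ℝ × ℝ → ℝ) (A N₀ : ℂ), Sol H Ω u →
      eB (pt A) a ⊆ Ω → ‖N₀‖ = 1 → ‖XC u A + N₀‖ ≤ η → ∀ z₀ B : ℂ, ∀ τ : ℝ, |τ| ≤ s / 2 →
      z₀ = A + (1 / (2 * H) : ℝ) * N₀ →
      B = z₀ + Complex.exp ((2 * H * τ : ℝ) * Complex.I) * (A - z₀) →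
      ‖XC u B - 2 * H * (B - z₀)‖ < ε := by
  obtain ⟨δh, hδh, C, hC, hharn⟩ := harnack H a hH ha
  obtain ⟨δm, hδm, hmodA⟩ := mod_C H a (1 / 8) hH ha (by norm_num)
  obtain ⟨s, hs, hsh, hsm, hsa, hsH⟩ : ∃ s : ℝ, 0 < s ∧ s < δh ∧ s < δm ∧ 16 * s ≤ a ∧
      16 * (H * s) ≤ 1 := by
    refine ⟨min (δh / 2) (min (δm / 2) (min (a / 16) (1 / (16 * H)))), by positivity, ?_, ?_, ?_, ?_⟩
    · linarith [min_le_left (δh / 2) (min (δm / 2) (min (a / 16) (1 / (16 * H))))]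
    · have := (min_le_right (δh / 2) (min (δm / 2) (min (a / 16) (1 / (16 * H))))).trans
        (min_le_left _ _)
      linarith
    · have := (min_le_right (δh / 2) (min (δm / 2) (min (a / 16) (1 / (16 * H))))).trans
        ((min_le_right _ _).trans (min_le_left _ _))
      linarith
    · have := (min_le_right (δh / 2) (min (δm / 2) (min (a / 16) (1 / (16 * H))))).trans
        ((min_le_right _ _).trans (min_le_right _ _))
      rw [le_div_iff₀ (by positivity)] at this
      linarith
  refine ⟨s, hs, fun ε hε => ?_⟩
  obtain ⟨ηT, hηT, htr⟩ := transfer H (a / 2) (ε / 2) hH (by linarith) (by linarith)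
  obtain ⟨ε₁, hε₁, hε₁1, hε₁ε, hε₁T⟩ : ∃ ε₁ : ℝ, 0 < ε₁ ∧ ε₁ ≤ 1 ∧ 20 * ε₁ ≤ ε ∧
      4 * ε₁ * s ≤ ηT := by
    refine ⟨min 1 (min (ε / 20) (ηT / (4 * s))), by positivity, min_le_left _ _, ?_, ?_⟩
    · have := (min_le_right 1 (min (ε / 20) (ηT / (4 * s)))).trans (min_le_left _ _)
      linarith
    · have := (min_le_right 1 (min (ε / 20) (ηT / (4 * s)))).trans (min_le_right _ _)
      rw [le_div_iff₀ (by positivity)] at this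
      linarith
  obtain ⟨δ₁, hδ₁, hmod₁⟩ := mod_C H (a / 2) (ε₁ / 2) hH (by linarith) (by linarith)
  obtain ⟨τ₁, hτ₁, hτs, hτδ, hτH⟩ : ∃ τ₁ : ℝ, 0 < τ₁ ∧ τ₁ ≤ s / 2 ∧ τ₁ < δ₁ ∧
      4 * (H * τ₁) ≤ ε₁ / 2 := by
    refine ⟨min (s / 2) (min (δ₁ / 2) (ε₁ / (8 * H))), by positivity, min_le_left _ _, ?_, ?_⟩
    · have := (min_le_right (s / 2) (min (δ₁ / 2) (ε₁ / (8 * H)))).trans (min_le_left _ _)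
      linarith
    · have := (min_le_right (s / 2) (min (δ₁ / 2) (ε₁ / (8 * H)))).trans (min_le_right _ _)
      rw [le_div_iff₀ (by positivity)] at this
      linarith
  obtain ⟨η, hη, hη1, hηε, hηs, hηT2⟩ : ∃ η : ℝ, 0 < η ∧ η ≤ 1 / 2 ∧ η ≤ 2 * ε₁ ∧
      2 * (C ^ 2 * (2 * η)) * s < ε₁ ^ 2 * τ₁ ∧ C ^ 2 * (2 * η) ≤ ηT ^ 2 := by
    set p := ε₁ ^ 2 * τ₁ / (8 * C ^ 2 * s) with hp
    set q := ηT ^ 2 / (2 * C ^ 2) with hq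
    have hp0 : 0 < p := by positivity
    have hq0 : 0 < q := by positivity
    refine ⟨min (1 / 2) (min (2 * ε₁) (min p q)), by positivity, min_le_left _ _,
      (min_le_right _ _).trans (min_le_left _ _), ?_, ?_⟩
    · have := (min_le_right (1 / 2) (min (2 * ε₁) (min p q))).trans
        ((min_le_right _ _).trans (min_le_left _ _))
      rw [hp, le_div_iff₀ (by positivity)] at this
      have h0 : 0 < ε₁ ^ 2 * τ₁ := by positivity
      linarith
    · have := (min_le_right (1 / 2) (min (2 * ε₁) (min p q))).trans
        ((min_le_right _ _).trans (min_le_right _ _))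
      rw [hq, le_div_iff₀ (by positivity)] at this
      linarith
  refine ⟨η, hη, ?_⟩
  intro Ω u A N₀ h hA hN₀ hXN z₀ B τ hτ hz₀ hB
  have hXA1 : 1 - η ≤ ‖XC u A‖ := by
    have := norm_sub_le (XC u A + N₀) (XC u A)
    rw [add_sub_cancel_left, hN₀] at this
    linarith
  have hwA : wv u (pt A) ^ 2 ≤ 2 * η := by
    have := XC_normSq u A
    nlinarith
  obtain ⟨g, hg0, hg, hgA, hgc, hgm⟩ := h.level_curve (s := s) hA hs (by linarith)
  have hw : ∀ t ∈ Icc (-s) s, wv u (pt (g t)) ^ 2 ≤ C ^ 2 * (2 * η) := by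
    intro t ht
    have h1 := hharn Ω u (pt A) h hA _ (hgc δh hsh t ht)
    have h2 := wv_pos u (pt (g t))
    calc wv u (pt (g t)) ^ 2 ≤ (C * wv u (pt A)) ^ 2 := pow_le_pow_left₀ h2.le h1 2
      _ = C ^ 2 * wv u (pt A) ^ 2 := by ring
      _ ≤ C ^ 2 * (2 * η) := mul_le_mul_of_nonneg_left hwA (by positivity)
  have hdisc : ∀ t ∈ Icc (-s) s, eB (pt (g t)) (a / 2) ⊆ Ω := fun t ht =>
    eB_shift (by linarith) (by linarith [hgA t ht]) hA
  have hτ' : τ ∈ Icc (-(s / 2)) (s / 2) := abs_le.1 hτ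
  have hτ'' : τ ∈ Icc (-s) s := ⟨by linarith [hτ'.1], by linarith [hτ'.2]⟩
  have hrad : ∀ t ∈ Icc (-(s / 2)) (s / 2), ‖XC u (g t) - 2 * H * (g t - z₀)‖ ≤ 8 * ε₁ := by
    intro t ht
    rw [hz₀]
    exact h.near_radial hA hs (by linarith) hsH hg0 hg hgA
      (fun t ht => hmodA Ω u A (g t) h hA (hgc δm hsm t ht)) (by linarith) hτ₁ hτs hτH hε₁
      (fun t ht t' ht' htt => hmod₁ Ω u (g t) (g t') h (hdisc t ht)
        (hgm δ₁ t ht t' ht' (by linarith))) hw hηs (by linarith) ht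
  have hrot := rot_bound (s := s / 2) (by linarith) hg0
    (fun t ht => hg t ⟨by linarith [ht.1], by linarith [ht.2]⟩) hrad hτ'
  rw [← hB] at hrot
  have hBA : ‖B - A‖ ≤ 4 * ε₁ * s + s := by
    have := norm_sub_le (g τ - A) (g τ - B)
    rw [sub_sub_sub_cancel_left] at this
    linarith [hgA τ hτ'']
  have hBd : eB (pt B) (a / 2) ⊆ Ω := eB_shift (by linarith) (by nlinarith) hA
  have hlast := htr Ω u B (g τ) h hBd (hdisc τ hτ'') (by linarith)
    (abs_le_of_sq_le_sq' ((hw τ hτ'').trans hηT2) hηT.le).2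
  have e1 : XC u B - 2 * H * (B - z₀) = (XC u B - XC u (g τ))
      + (XC u (g τ) - 2 * H * (g τ - z₀)) + 2 * H * (g τ - B) := by ring
  have e2 := norm_add₃_le (a := XC u B - XC u (g τ)) (b := XC u (g τ) - 2 * H * (g τ - z₀))
    (c := 2 * H * (g τ - B))
  rw [← e1, norm_mul, norm_mul, Complex.norm_real, Real.norm_of_nonneg hH.le] at e2
  norm_num at e2
  have e3 : 2 * H * ‖g τ - B‖ ≤ ε₁ / 2 := by
    calc 2 * H * ‖g τ - B‖ ≤ 2 * H * (8 * ε₁ * (s / 2)) :=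
          mul_le_mul_of_nonneg_left hrot (by linarith)
      _ = 1 / 2 * (16 * (H * s)) * ε₁ := by ring
      _ ≤ ε₁ / 2 := by nlinarith
  have e4 := hrad τ hτ'
  linarith

/-! ### Propagation along the circle -/

/-- The point of the complex plane with the coordinates of `q`; inverse to `pt`. -/
def cx (q : ℝ × ℝ) : ℂ := ⟨q.1, q.2⟩

theorem cx_continuous : Continuous cx := Complex.equivRealProdCLM.symm.continuous

theorem pt_continuous : Continuous pt := Complex.equivRealProdCLM.continuous

theorem enorm2_eq (q : ℝ × ℝ) : enorm2 q = ‖cx q‖ := by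
  rw [enorm2, ← Real.sqrt_sq (norm_nonneg (cx q)), norm_sq_eq]
  rfl

/-- Two nearby points of a circle differ by a rotation of small angle about its centre. -/
theorem small_rotation {H s : ℝ} (hH : 0 < H) (hs : 0 < s) :
    ∃ δ > 0, ∀ z A A' : ℂ, ‖A - z‖ = 1 / (2 * H) → ‖A' - z‖ = 1 / (2 * H) → ‖A' - A‖ < δ →
      ∃ τ : ℝ, |τ| ≤ s / 2 ∧ A' = z + Complex.exp ((2 * H * τ : ℝ) * Complex.I) * (A - z) := by
  have hc : ContinuousAt Complex.arg 1 := Complex.continuousAt_arg (by simp)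
  obtain ⟨δ, hδ, h⟩ := Metric.continuousAt_iff.1 hc (H * s) (by positivity)
  refine ⟨δ / (2 * H), by positivity, fun z A A' hA hA' hAA => ?_⟩
  have hne : A - z ≠ 0 := by
    rw [← norm_pos_iff, hA]; positivity
  set w := (A' - z) / (A - z) with hw
  have hw1 : ‖w‖ = 1 := by
    rw [hw, norm_div, hA, hA', div_self (by positivity)]
  have hwd : dist w 1 < δ := by
    have : w - 1 = (A' - A) / (A - z) := by rw [hw]; field_simp; ring
    rw [dist_eq_norm, this, norm_div, hA]
    rw [lt_div_iff₀ (by positivity)] at hAA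
    rw [div_lt_iff₀ (by positivity)]
    have h2 : δ * (1 / (2 * H)) * (2 * H) = δ := by field_simp
    nlinarith
  have harg := h hwd
  rw [Complex.arg_one, dist_zero_right, Real.norm_eq_abs] at harg
  refine ⟨Complex.arg w / (2 * H), ?_, ?_⟩
  · rw [abs_div, abs_of_pos (by positivity : 0 < 2 * H), div_le_iff₀ (by positivity)]
    linarith
  · have h1 : 2 * H * (Complex.arg w / (2 * H)) = Complex.arg w := by field_simp
    have h2 := Complex.norm_mul_exp_arg_mul_I w
    rw [hw1, Complex.ofReal_one, one_mul] at h2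
    rw [h1, h2, hw]
    field_simp
    ring

/-- Convergence of the fields to the outward radial field propagates between nearby points of the
circle. -/
theorem propagate {H : ℝ} (hH : 0 < H) {Ω : Set (ℝ × ℝ)} {u : ℕ → ℝ × ℝ → ℝ}
    (hu : ∀ n, Sol H Ω (u n)) (hΩ : IsOpen Ω) {z B : ℂ} (hB : pt B ∈ Ω) :
    ∃ δ > 0, ∀ A A' : ℂ, ‖A - z‖ = 1 / (2 * H) → ‖A' - z‖ = 1 / (2 * H) → ‖A - B‖ < δ →
      ‖A' - B‖ < δ → Tendsto (fun n => XC (u n) A) atTop (nhds (2 * H * (A - z))) →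
      Tendsto (fun n => XC (u n) A') atTop (nhds (2 * H * (A' - z))) := by
  obtain ⟨r, hr, hball⟩ := Metric.isOpen_iff.1 (hΩ.preimage pt_continuous) B hB
  have hdisc : eB (pt B) (r / 2) ⊆ Ω := by
    intro x hx
    have : pt (cx x) ∈ eB (pt B) (r / 2) := hx
    rw [mem_eB (by linarith)] at this
    exact hball (by rw [Metric.mem_ball, dist_eq_norm]; linarith : cx x ∈ Metric.ball B r)
  obtain ⟨s, hs, hloc⟩ := local_prop H (r / 4) hH (by linarith)
  obtain ⟨δ, hδ, hrot⟩ := small_rotation hH hs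
  refine ⟨min (r / 4) (δ / 2), by positivity, fun A A' hA hA' hAB hAB' hlim => ?_⟩
  have hHc : (H : ℂ) ≠ 0 := by exact_mod_cast hH.ne'
  obtain ⟨τ, hτ, hA'eq⟩ := hrot z A A' hA hA' (by
    have := norm_sub_le (A' - B) (A - B)
    rw [sub_sub_sub_cancel_right] at this
    linarith [min_le_right (r / 4) (δ / 2)])
  rw [Metric.tendsto_nhds]
  intro ε hε
  obtain ⟨η, hη, hfin⟩ := hloc ε hε
  -- `local_prop` is applied with `N₀ = 2H (z - A)`, the inward unit normal of the circle at `A`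
  filter_upwards [Metric.tendsto_nhds.1 hlim η hη] with n hn
  rw [dist_eq_norm] at hn ⊢
  refine hfin Ω (u n) A (2 * H * (z - A)) (hu n) (eB_shift (by linarith) ?_ hdisc) ?_ ?_ z A' τ hτ
    ?_ hA'eq
  · linarith [min_le_left (r / 4) (δ / 2)]
  · rw [norm_mul, norm_sub_rev, hA, norm_mul, Complex.norm_real, Real.norm_of_nonneg hH.le]
    norm_num
    field_simp
  · have : XC (u n) A + 2 * H * (z - A) = XC (u n) A - 2 * H * (A - z) := by ring
    rw [this]; exact hn.le
  · push_cast
    field_simp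
    ring

theorem normalVec_eq (u : ℝ × ℝ → ℝ) (q : ℝ × ℝ) :
    normalVec u q = (-(XC u (cx q)).re, -(XC u (cx q)).im, wv u q) := by
  have hW := W_pos u q
  have h1 := X1_eq u q
  have h2 := X2_eq u q
  have h3 := W_mul_wv u q
  have h4 : wv u q = 1 / Wgraph u q := by field_simp; linarith
  simp only [normalVec, XC]
  change _ = (-X1 u q, -X2 u q, wv u q)
  rw [h1, h2, h4]
  refine Prod.ext ?_ (Prod.ext ?_ rfl) <;> simp <;> ring

/-- The normals converge to the horizontal vector `-c`, `|c| = 1`, exactly when the fields `X`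
converge to `c`; the vertical component is controlled by `|X|² + w² = 1`. -/
theorem tendsto_normalVec_iff {u : ℕ → ℝ × ℝ → ℝ} {q : ℝ × ℝ} {c : ℂ} (hc : ‖c‖ = 1) :
    Tendsto (fun n => normalVec (u n) q) atTop (nhds (-c.re, -c.im, (0 : ℝ))) ↔
      Tendsto (fun n => XC (u n) (cx q)) atTop (nhds c) := by
  simp only [normalVec_eq]
  constructor
  · intro h
    have h1 : Tendsto (fun n => (XC (u n) (cx q)).re) atTop (nhds c.re) := by
      simpa using ((continuous_fst.tendsto _).comp h).neg
    have h2 : Tendsto (fun n => (XC (u n) (cx q)).im) atTop (nhds c.im) := by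
      simpa using (((continuous_fst.comp continuous_snd).tendsto _).comp h).neg
    exact (cx_continuous.tendsto (c.re, c.im)).comp (h1.prodMk_nhds h2)
  · intro h
    refine Tendsto.prodMk_nhds ((Complex.continuous_re.tendsto _).comp h).neg
      (Tendsto.prodMk_nhds ((Complex.continuous_im.tendsto _).comp h).neg ?_)
    have h1 : Tendsto (fun n => Real.sqrt (1 - ‖XC (u n) (cx q)‖ ^ 2)) atTop
        (nhds (Real.sqrt (1 - ‖c‖ ^ 2))) :=
      (Real.continuous_sqrt.tendsto _).comp ((h.norm.pow 2).const_sub 1)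
    rw [hc, one_pow, sub_self, Real.sqrt_zero] at h1
    refine h1.congr fun n => ?_
    rw [XC_normSq, sub_sub_cancel, Real.sqrt_sq (wv_pos _ _).le]
    rfl

/-- main theorem: if the normals `N_{u_n}(P)` converge to a horizontal unit
vector `N`, then along the whole arc `C` of the circle of radius `1/(2H)` through `P` with
curvature vector `2HN` at `P`, the normals converge to the horizontal normal `ν`. -/
theorem stmt_6 (H : ℝ) (hH : 0 < H) (Ω : Set (ℝ × ℝ)) (hΩ : IsOpen Ω)
    (hΩconn : IsConnected Ω) (u : ℕ → ℝ × ℝ → ℝ)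
    (hu : ∀ n, IsCMCSolution H Ω (u n))
    (P : ℝ × ℝ) (hP : P ∈ Ω) (N : ℝ × ℝ) (hN : enorm2 N = 1)
    (hconv : Tendsto (fun n => normalVec (u n) P) atTop (nhds (N.1, N.2, (0 : ℝ)))) :
    ∀ Q ∈ connectedComponentIn
        ({q : ℝ × ℝ | enorm2 (q - (P + (1 / (2 * H)) • N)) = 1 / (2 * H)} ∩ Ω) P,
      Tendsto (fun n => normalVec (u n) Q) atTop
        (nhds (2 * H * ((P + (1 / (2 * H)) • N).1 - Q.1),
               2 * H * ((P + (1 / (2 * H)) • N).2 - Q.2), (0 : ℝ))) := by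
  intro Q hQ
  set Z : ℝ × ℝ := P + (1 / (2 * H)) • N with hZ
  set F : Set (ℝ × ℝ) := {q : ℝ × ℝ | enorm2 (q - Z) = 1 / (2 * H)} ∩ Ω with hF
  have hsol : ∀ n, Sol H Ω (u n) := fun n => ⟨hΩ, hH, hu n⟩
  have hFn : ∀ q ∈ F, ‖cx q - cx Z‖ = 1 / (2 * H) := by
    intro q hq
    have : enorm2 (q - Z) = 1 / (2 * H) := hq.1
    rw [enorm2_eq] at this
    exact this
  have hPZ : cx P - cx Z = (-(1 / (2 * H)) : ℝ) * cx N := by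
    apply Complex.ext <;> simp [cx, hZ]
  have hcN : ‖cx N‖ = 1 := by rw [← enorm2_eq, hN]
  have hPF : P ∈ F := by
    refine ⟨?_, hP⟩
    change enorm2 (P - Z) = _
    rw [enorm2_eq]
    change ‖cx P - cx Z‖ = _
    rw [hPZ, norm_mul, hcN, Complex.norm_real, norm_neg, Real.norm_of_nonneg (by positivity),
      mul_one]
  have hsub := connectedComponentIn_subset F P
  have hunit : ∀ q ∈ F, ‖2 * H * (cx q - cx Z)‖ = 1 := by
    intro q hq
    rw [norm_mul, hFn q hq, norm_mul, Complex.norm_real, Real.norm_of_nonneg hH.le]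
    norm_num
    field_simp
  have hval : ∀ q : ℝ × ℝ, ((2 * H * (Z.1 - q.1), 2 * H * (Z.2 - q.2), (0 : ℝ)) : ℝ × ℝ × ℝ)
      = (-(2 * H * (cx q - cx Z)).re, -(2 * H * (cx q - cx Z)).im, 0) := by
    intro q
    refine Prod.ext ?_ (Prod.ext ?_ rfl) <;> simp [cx] <;> ring
  have hNval : ((N.1, N.2, (0 : ℝ)) : ℝ × ℝ × ℝ)
      = (-(2 * H * (cx P - cx Z)).re, -(2 * H * (cx P - cx Z)).im, 0) := by
    rw [hPZ]
    refine Prod.ext ?_ (Prod.ext ?_ rfl) <;> simp [cx] <;> field_simp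
  rw [hNval, tendsto_normalVec_iff (hunit P hPF)] at hconv
  rw [hval, tendsto_normalVec_iff (hunit Q (hsub hQ))]
  refine isPreconnected_connectedComponentIn.induction₂'
    (P := fun p q => Tendsto (fun n => XC (u n) (cx p)) atTop (nhds (2 * H * (cx p - cx Z))) →
      Tendsto (fun n => XC (u n) (cx q)) atTop (nhds (2 * H * (cx q - cx Z))))
    ?_ (fun _ _ _ _ _ _ h1 h2 h => h2 (h1 h)) (mem_connectedComponentIn hPF) hQ hconv
  intro p hp
  have hpF := hsub hp
  obtain ⟨δ, hδ, hprop⟩ := propagate hH hsol hΩ (z := cx Z) (B := cx p) hpF.2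
  have hnear : ∀ᶠ q in nhds p, ‖cx q - cx p‖ < δ := by
    filter_upwards [Metric.tendsto_nhds.1 (cx_continuous.tendsto p) δ hδ] with q hq
    rwa [dist_eq_norm] at hq
  filter_upwards [nhdsWithin_le_nhds hnear, self_mem_nhdsWithin] with q hq hqC
  have hpp : ‖cx p - cx p‖ < δ := by rwa [sub_self, norm_zero]
  exact ⟨hprop _ _ (hFn p hpF) (hFn q (hsub hqC)) hpp hq,
    hprop _ _ (hFn q (hsub hqC)) (hFn p hpF) hq hpp⟩
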